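/- Let R be a commutative domain and ξ, Q_1, …, Q_r ∈ R^×. Then the center Z(H_{n,R}) of the cyclotomic Hecke algebra H_{n,R} is a free R-module of rank |𝒫_{r,n}|. Moreover, for any commutative domain R′ which is an R-algebra, the canonical map R′ ⊗_R Z(H_{n,R}) → Z(H_{n,R′}) (where H_{n,R′} has parameters the images of ξ, Q_1,…,Q_r in R′) is an R′-module isomorphism. -/

import Mathlib

/-!
Write `H_n` for the algebra. The center is controlled through the cocenter `H_n / [H_n, H_n]`: an
explicit family of `|𝒫_{r,n}|` words is shown to be a basis of the cocenter, and a symmetrizing form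
that is compatible with specialization of the parameters transports this basis to the center.

*Symmetrizing form.* `H_{n+1}` is free as a left `H_n`-module on the elements `t_n ⋯ t_{j+1}` and
`t_n ⋯ t_1 t_0^k t_1 ⋯ t_j` (`ev_back`, `back_ev`). This is proved by writing down the operators
by which the generators should act from the right on the abstract free module and verifying the
Hecke relations for them (`HRel_op`). The coefficient at `1` is the relative trace `eps`; iterating
it gives a form `tau` that is symmetric (`tau_comm`), admits dual families (`exists_dual_system`)
and commutes with specialization (`bc_tau`).

*Spanning.* A trace function that vanishes on the elements `sl p`, `p ∈ 𝒫_{r,n}`, the words of the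
sorted coloured compositions, is zero (`trace_zero'`). Words are filtered by the number of letters
different from `t_0`. Modulo shorter words, the relations degenerate to `GRel`, in which
`t_i² = 0`; there cyclic rotations and braid moves either kill a word or bring its blocks into
sorted order.

*Independence.* For `ξ = 1` and `Q_i` the `r`-th roots of unity in `ℂ`, the algebra is the group
algebra of `G(r,1,n)`. The elements `sl p` are group elements which are pairwise non-conjugate, as
a count of points with a given cycle behaviour shows (`cnt`, `sl_nonconj`), so they are separated
by the traces of the operators `x ↦ h x s` (`Gam_sep`). Over the generic ring
`ℤ[ξ^{±1}, Q_i^{±1}]` (`GR`) the determinant of the corresponding matrix of traces specializes to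
a nonzero complex number, hence is nonzero. So over the generic ring the `sl p` are a basis of the
cocenter, and through `tau` the dual basis is a family of central elements `z_p` with
`tau (z_p * sl q) = δ_{pq}` (`CDual`, `exists_CDual_of_spec`).

*Conclusion.* All invertible parameters are specializations of the generic ones, and dual families
of central elements specialize to such families (`CDual.bc`). By the spanning result such a family
is always a basis of the center (`CDual.basis`), which gives freeness and the rank; since the basis
over `R` maps to the basis over `R'`, it also gives the base change statement
(`base_change_equiv`).
-/

/-! ## The complex reflection group `W_n` of type `G(r,1,n)`.

Generators are indexed by natural numbers: index `0` is `t` and index `i`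
(for `1 ≤ i ≤ n-1`) is `s_i`; generators with index `≥ n` are killed by a relator,
so this is a presentation of the complex reflection group of type `G(r,1,n)`. -/

noncomputable section

namespace CRG

/-- The relators of the presentation of `G(r,1,n)`. -/
def rels (r n : ℕ) : Set (FreeGroup ℕ) :=
  {w | (w = FreeGroup.of 0 ^ r)
    ∨ (∃ i, 1 ≤ i ∧ i < n ∧ w = FreeGroup.of i ^ 2)
    ∨ (2 ≤ n ∧ w = FreeGroup.of 0 * FreeGroup.of 1 * FreeGroup.of 0 * FreeGroup.of 1 *
        (FreeGroup.of 1 * FreeGroup.of 0 * FreeGroup.of 1 * FreeGroup.of 0)⁻¹)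
    ∨ (∃ i, 2 ≤ i ∧ i < n ∧ w = FreeGroup.of 0 * FreeGroup.of i *
        (FreeGroup.of i * FreeGroup.of 0)⁻¹)
    ∨ (∃ i, 1 ≤ i ∧ i + 1 < n ∧ w = FreeGroup.of i * FreeGroup.of (i + 1) * FreeGroup.of i *
        (FreeGroup.of (i + 1) * FreeGroup.of i * FreeGroup.of (i + 1))⁻¹)
    ∨ (∃ i j, 1 ≤ i ∧ i + 1 < j ∧ j < n ∧ w = FreeGroup.of i * FreeGroup.of j *
        (FreeGroup.of j * FreeGroup.of i)⁻¹)
    ∨ (∃ i, n ≤ i ∧ w = FreeGroup.of i)}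

/-- The complex reflection group of type `G(r,1,n)`. -/
abbrev W (r n : ℕ) : Type := PresentedGroup (rels r n)

/-- The generator with index `m` : `t` for `m = 0`, `s_m` for `1 ≤ m ≤ n-1`. -/
def gen (r n : ℕ) (m : ℕ) : W r n := PresentedGroup.of m

/-- The product in `W r n` of a word, given as a list of generator indices. -/
def wprod (r n : ℕ) (l : List ℕ) : W r n := (l.map (gen r n)).prod

/-- The set of standard generators `S = {t, s_1, …, s_{n-1}}`. -/
def S (r n : ℕ) : Set (W r n) := {x | ∃ m, m < n ∧ x = gen r n m}

/-- The length of `w` : the minimal length of a word in `t, s_1, …, s_{n-1}`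
expressing `w`. -/
def ell (r n : ℕ) (w : W r n) : ℕ :=
  sInf {k | ∃ l : List ℕ, (∀ m ∈ l, m < n) ∧ l.length = k ∧ wprod r n l = w}

/-- `l` is a reduced expression of `w`. -/
def IsReducedWord (r n : ℕ) (l : List ℕ) (w : W r n) : Prop :=
  (∀ m ∈ l, m < n) ∧ wprod r n l = w ∧ l.length = ell r n w

/-- `w →ˢ w'` : `w' = s w s⁻¹` for `s ∈ S`, with `ℓ(w') ≤ ℓ(w)` and either
`ℓ(sw) < ℓ(w)` or `ℓ(w s⁻¹) < ℓ(w)`. -/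
def Step (r n : ℕ) (s w w' : W r n) : Prop :=
  s ∈ S r n ∧ w' = s * w * s⁻¹ ∧ ell r n w' ≤ ell r n w ∧
    (ell r n (s * w) < ell r n w ∨ ell r n (w * s⁻¹) < ell r n w)

/-- `w → w'` : a finite (possibly empty) chain of steps `→ˢ` with `s ∈ S`. -/
def Arrow (r n : ℕ) : W r n → W r n → Prop :=
  Relation.ReflTransGen (fun w w' => ∃ s, Step r n s w w')

end CRG
/-! ## The cyclotomic Hecke algebra of type `G(r,1,n)`. -/

namespace CHA

open CRG

/-- The defining relations of the cyclotomic Hecke algebra `H_{n,R}(ξ; Q_1, …, Q_r)`,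
as a relation on the free algebra on generators `T_0, …, T_{n-1}`. -/
def rel (R : Type) [CommRing R] (r n : ℕ) (ξ : R) (Q : Fin r → R) :
    FreeAlgebra R (Fin n) → FreeAlgebra R (Fin n) → Prop := fun a b =>
  -- cyclotomic relation `(T_0 - Q_1) ⋯ (T_0 - Q_r) = 0`
  (∃ h0 : 0 < n,
    a = (List.ofFn (fun i : Fin r =>
          FreeAlgebra.ι R (⟨0, h0⟩ : Fin n) -
            algebraMap R (FreeAlgebra R (Fin n)) (Q i))).prod ∧
    b = 0)
  -- `T_0 T_1 T_0 T_1 = T_1 T_0 T_1 T_0`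
  ∨ (∃ (h0 : 0 < n) (h1 : 1 < n),
      a = FreeAlgebra.ι R (⟨0, h0⟩ : Fin n) * FreeAlgebra.ι R (⟨1, h1⟩ : Fin n) *
          FreeAlgebra.ι R (⟨0, h0⟩ : Fin n) * FreeAlgebra.ι R (⟨1, h1⟩ : Fin n) ∧
      b = FreeAlgebra.ι R (⟨1, h1⟩ : Fin n) * FreeAlgebra.ι R (⟨0, h0⟩ : Fin n) *
          FreeAlgebra.ι R (⟨1, h1⟩ : Fin n) * FreeAlgebra.ι R (⟨0, h0⟩ : Fin n))
  -- quadratic relations `(T_i - ξ)(T_i + 1) = 0`, `1 ≤ i ≤ n-1`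
  ∨ (∃ (i : ℕ) (hi : i < n), 1 ≤ i ∧
      a = (FreeAlgebra.ι R (⟨i, hi⟩ : Fin n) - algebraMap R (FreeAlgebra R (Fin n)) ξ) *
          (FreeAlgebra.ι R (⟨i, hi⟩ : Fin n) + 1) ∧
      b = 0)
  -- commuting relations `T_i T_j = T_j T_i`, `0 ≤ i < j-1 < n-1`
  ∨ (∃ (i j : ℕ) (hi : i < n) (hj : j < n), i + 1 < j ∧
      a = FreeAlgebra.ι R (⟨i, hi⟩ : Fin n) * FreeAlgebra.ι R (⟨j, hj⟩ : Fin n) ∧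
      b = FreeAlgebra.ι R (⟨j, hj⟩ : Fin n) * FreeAlgebra.ι R (⟨i, hi⟩ : Fin n))
  -- braid relations `T_i T_{i+1} T_i = T_{i+1} T_i T_{i+1}`, `1 ≤ i < n-1`
  ∨ (∃ (i : ℕ) (hi : i + 1 < n), 1 ≤ i ∧
      a = FreeAlgebra.ι R (⟨i, Nat.lt_of_succ_lt hi⟩ : Fin n) *
          FreeAlgebra.ι R (⟨i + 1, hi⟩ : Fin n) *
          FreeAlgebra.ι R (⟨i, Nat.lt_of_succ_lt hi⟩ : Fin n) ∧
      b = FreeAlgebra.ι R (⟨i + 1, hi⟩ : Fin n) *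
          FreeAlgebra.ι R (⟨i, Nat.lt_of_succ_lt hi⟩ : Fin n) *
          FreeAlgebra.ι R (⟨i + 1, hi⟩ : Fin n))

/-- The cyclotomic Hecke algebra `H_{n,R}(ξ; Q_1, …, Q_r)` of type `G(r,1,n)`. -/
abbrev Alg (R : Type) [CommRing R] (r n : ℕ) (ξ : R) (Q : Fin r → R) : Type :=
  RingQuot (rel R r n ξ Q)

/-- The generator `T_i` of the cyclotomic Hecke algebra. -/
def T (R : Type) [CommRing R] (r n : ℕ) (ξ : R) (Q : Fin r → R) (i : Fin n) :
    Alg R r n ξ Q :=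
  RingQuot.mkAlgHom R (rel R r n ξ Q) (FreeAlgebra.ι R i)

/-- The generator `T_m`, indexed by a natural number (`1` for out-of-range indices). -/
def Tn (R : Type) [CommRing R] (r n : ℕ) (ξ : R) (Q : Fin r → R) (m : ℕ) :
    Alg R r n ξ Q :=
  if h : m < n then T R r n ξ Q ⟨m, h⟩ else 1

/-- The product `T_{x_1} ⋯ T_{x_k}` attached to a word `x_1 ⋯ x_k` in the generators
of `W_n` (`0 ↦ T_0`, `i ↦ T_i`). -/
def Tw (R : Type) [CommRing R] (r n : ℕ) (ξ : R) (Q : Fin r → R) (l : List ℕ) :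
    Alg R r n ξ Q :=
  (l.map (Tn R r n ξ Q)).prod

/-- The `R`-submodule `[A,A]` of an `R`-algebra `A` spanned by all commutators `ab - ba`.
The quotient `A ⧸ [A,A]` is the cocenter `Tr(A)`. -/
def commutatorSubmodule (R A : Type) [CommRing R] [Ring A] [Algebra R A] : Submodule R A :=
  Submodule.span R {x | ∃ a b : A, x = a * b - b * a}

/-- An `r`-partition of `n` : an `r`-tuple of partitions (multisets of positive integers)
whose sizes sum to `n`. -/
def RPartition (r n : ℕ) : Type :=
  { p : Fin r → Multiset ℕ // (∀ i, ∀ x ∈ p i, 0 < x) ∧ (∑ i, (p i).sum) = n }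

/-- The Jucys–Murphy elements: `jm k = L_{k+1} = ξ^{-k} T_k ⋯ T_1 T_0 T_1 ⋯ T_k`
(`jm` is 0-indexed, so `jm 0 = L_1 = T_0`). -/
def jm (R : Type) [CommRing R] (r n : ℕ) (ξ : R) (Q : Fin r → R) (k : ℕ) :
    Alg R r n ξ Q :=
  Ring.inverse ξ ^ k •
    (((List.range k).map (fun j => Tn R r n ξ Q (k - j))).prod *
      Tn R r n ξ Q 0 *
      ((List.range k).map (fun j => Tn R r n ξ Q (j + 1))).prod)

end CHA

open CRG CHA
open scoped TensorProduct

/-! ### The relations and the universal property -/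

namespace HC

open Polynomial

/-- The polynomial `∏ (X - Q_i)` of the cyclotomic relation. -/
def fp {R : Type} [CommRing R] {r : ℕ} (Q : Fin r → R) : R[X] := ∏ i, (X - C (Q i))

lemma fp_monic {R : Type} [CommRing R] {r : ℕ} (Q : Fin r → R) : (fp Q).Monic :=
  monic_prod_of_monic _ _ (fun i _ => monic_X_sub_C (Q i))

lemma fp_natDegree {R : Type} [CommRing R] [Nontrivial R] {r : ℕ} (Q : Fin r → R) :
    (fp Q).natDegree = r := by
  unfold fp
  rw [natDegree_prod_of_monic _ _ (fun i _ => monic_X_sub_C (Q i))]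
  simp

lemma fp_coeff_zero {R : Type} [CommRing R] {r : ℕ} (Q : Fin r → R)
    (hQ : ∀ i, IsUnit (Q i)) : IsUnit ((fp Q).coeff 0) := by
  unfold fp
  rw [coeff_zero_eq_eval_zero, eval_prod]
  rw [← Finset.prod_congr rfl (g := fun i => eval 0 (X - C (Q i))) (fun _ _ => rfl)]
  refine (IsUnit.prod_univ_iff (f := fun i => eval 0 (X - C (Q i)))).2 fun i => ?_
  simpa using (hQ i).neg

lemma fp_aeval {R : Type} [CommRing R] {r : ℕ} (Q : Fin r → R) {B : Type*} [Ring B] [Algebra R B]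
    (b : B) : aeval b (fp Q) = (List.ofFn (fun i : Fin r => b - algebraMap R B (Q i))).prod := by
  unfold fp
  have : (∏ i, (X - C (Q i))) = (List.ofFn (fun i : Fin r => (X - C (Q i) : R[X]))).prod := by
    rw [List.prod_ofFn]
  rw [this, map_list_prod, List.map_ofFn]
  congr 2
  funext i
  simp

/-- A family `t : ℕ → B` whose members `t 0, …, t (n-1)` satisfy the defining relations of the
cyclotomic Hecke algebra with cyclotomic polynomial `f`. -/
structure HRel {R : Type} [CommRing R] {B : Type*} [Ring B] [Algebra R B]
    (ξ : R) (f : R[X]) (n : ℕ) (t : ℕ → B) : Prop where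
  cyc : 0 < n → aeval (t 0) f = 0
  quart : 1 < n → t 0 * t 1 * t 0 * t 1 = t 1 * t 0 * t 1 * t 0
  quad : ∀ i, 1 ≤ i → i < n → t i * t i = (ξ - 1) • t i + ξ • (1 : B)
  comm : ∀ i j, i + 1 < j → j < n → t i * t j = t j * t i
  braid : ∀ i, 1 ≤ i → i + 1 < n → t i * t (i + 1) * t i = t (i + 1) * t i * t (i + 1)

section AlgBasics

variable {R : Type} [CommRing R] {r n : ℕ} {ξ : R} {Q : Fin r → R}

/-- The cyclotomic Hecke algebra, with only its `R`-algebra structure visible. -/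
def HA (R : Type) [CommRing R] (r n : ℕ) (ξ : R) (Q : Fin r → R) : Type := Alg R r n ξ Q

instance : Ring (HA R r n ξ Q) := inferInstanceAs (Ring (Alg R r n ξ Q))
instance : Algebra R (HA R r n ξ Q) := inferInstanceAs (Algebra R (Alg R r n ξ Q))

/-- The generators of `HA`, indexed by natural numbers. -/
def tn (R : Type) [CommRing R] (r n : ℕ) (ξ : R) (Q : Fin r → R) (m : ℕ) : HA R r n ξ Q :=
  Tn R r n ξ Q m

/-- The projection from the free algebra. -/
def mkH (R : Type) [CommRing R] (r n : ℕ) (ξ : R) (Q : Fin r → R) :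
    FreeAlgebra R (Fin n) →ₐ[R] HA R r n ξ Q :=
  RingQuot.mkAlgHom R (rel R r n ξ Q)

lemma mkH_rel {a b : FreeAlgebra R (Fin n)} (h : rel R r n ξ Q a b) :
    mkH R r n ξ Q a = mkH R r n ξ Q b :=
  RingQuot.mkAlgHom_rel R h

lemma mkH_surj : Function.Surjective (mkH R r n ξ Q) := RingQuot.mkAlgHom_surjective R _

lemma tn_of_lt {m : ℕ} (h : m < n) :
    tn R r n ξ Q m = mkH R r n ξ Q (FreeAlgebra.ι R ⟨m, h⟩) := by
  unfold tn Tn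
  rw [dif_pos h]
  rfl

lemma HRel_tn : HRel ξ (fp Q) n (tn R r n ξ Q) where
  cyc h0 := by
    rw [tn_of_lt h0, fp_aeval]
    have := mkH_rel (R := R) (Q := Q) (ξ := ξ) (Or.inl ⟨h0, rfl, rfl⟩)
    rw [map_zero, map_list_prod, List.map_ofFn] at this
    rw [← this]
    congr 2
    funext i
    simp
  quart h1 := by
    have h0 : 0 < n := by omega
    rw [tn_of_lt h0, tn_of_lt h1]
    have := mkH_rel (R := R) (Q := Q) (ξ := ξ) (Or.inr (Or.inl ⟨h0, h1, rfl, rfl⟩))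
    simpa using this
  quad i h1 hi := by
    rw [tn_of_lt hi]
    have := mkH_rel (R := R) (Q := Q) (ξ := ξ)
      (Or.inr (Or.inr (Or.inl ⟨i, hi, h1, rfl, rfl⟩)))
    simp only [map_mul, map_sub, map_add, map_one, map_zero, AlgHom.commutes] at this
    rw [Algebra.algebraMap_eq_smul_one] at this
    have h2 : ∀ x : HA R r n ξ Q, (x - ξ • 1) * (x + 1) = x * x - ((ξ - 1) • x + ξ • 1) := by
      intro x
      rw [sub_mul, mul_add, smul_mul_assoc, one_mul, sub_smul, one_smul, smul_add, mul_one]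
      abel
    rw [h2, sub_eq_zero] at this
    exact this
  comm i j hij hj := by
    have hi : i < n := by omega
    rw [tn_of_lt hi, tn_of_lt hj]
    have := mkH_rel (R := R) (Q := Q) (ξ := ξ)
      (Or.inr (Or.inr (Or.inr (Or.inl ⟨i, j, hi, hj, hij, rfl, rfl⟩))))
    simpa using this
  braid i h1 hi := by
    have hi' : i < n := by omega
    rw [tn_of_lt hi, tn_of_lt hi']
    have := mkH_rel (R := R) (Q := Q) (ξ := ξ)
      (Or.inr (Or.inr (Or.inr (Or.inr ⟨i, hi, h1, rfl, rfl⟩))))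
    simpa using this

variable {B : Type*} [Ring B] [Algebra R B] {t : ℕ → B}

/-- The universal property of the cyclotomic Hecke algebra. -/
def liftH (h : HRel ξ (fp Q) n t) : HA R r n ξ Q →ₐ[R] B :=
  RingQuot.liftAlgHom R ⟨FreeAlgebra.lift R (fun i : Fin n => t i), by
    rintro a b (⟨h0, rfl, rfl⟩ | ⟨h0, h1, rfl, rfl⟩ | ⟨i, hi, h1, rfl, rfl⟩ |
      ⟨i, j, hi, hj, hij, rfl, rfl⟩ | ⟨i, hi, h1, rfl, rfl⟩)
    · have := h.cyc h0
      rw [fp_aeval] at this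
      rw [map_zero, map_list_prod, List.map_ofFn, ← this]
      congr 2
      funext i
      simp
    · simpa using h.quart h1
    · have := h.quad i h1 hi
      simp only [map_mul, map_sub, map_add, map_one, map_zero, AlgHom.commutes,
        FreeAlgebra.lift_ι_apply]
      rw [Algebra.algebraMap_eq_smul_one]
      rw [sub_mul, mul_add, smul_mul_assoc, one_mul, smul_add, mul_one, this, sub_smul, one_smul]
      abel
    · simpa using h.comm i j hij hj
    · simpa using h.braid i h1 hi⟩

lemma liftH_tn (h : HRel ξ (fp Q) n t) {i : ℕ} (hi : i < n) :
    liftH h (tn R r n ξ Q i) = t i := by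
  rw [tn_of_lt hi]
  exact (RingQuot.liftAlgHom_mkAlgHom_apply R _ _ _).trans (by simp)

lemma mem_of_adjoin {P : Subalgebra R (HA R r n ξ Q)} (h : ∀ i < n, tn R r n ξ Q i ∈ P)
    (x : HA R r n ξ Q) : x ∈ P := by
  obtain ⟨y, rfl⟩ := mkH_surj x
  have h1 : (⊤ : Subalgebra R (FreeAlgebra R (Fin n))) ≤ P.comap (mkH R r n ξ Q) := by
    rw [← FreeAlgebra.adjoin_range_ι, Algebra.adjoin_le_iff]
    rintro _ ⟨i, rfl⟩
    have := h i i.2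
    rwa [tn_of_lt i.2] at this
  exact h1 (Algebra.mem_top (x := y))

/-- A submodule containing `1` and stable under left multiplication by generators is everything. -/
lemma mem_of_left (P : Submodule R (HA R r n ξ Q)) (h1 : (1 : HA R r n ξ Q) ∈ P)
    (h : ∀ i < n, ∀ x ∈ P, tn R r n ξ Q i * x ∈ P) (x : HA R r n ξ Q) : x ∈ P := by
  let S : Subalgebra R (HA R r n ξ Q) :=
    { carrier := {a | ∀ x ∈ P, a * x ∈ P}
      mul_mem' := by
        intro a b ha hb x hx
        rw [mul_assoc]; exact ha _ (hb _ hx)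
      add_mem' := by
        intro a b ha hb x hx
        rw [add_mul]; exact P.add_mem (ha _ hx) (hb _ hx)
      algebraMap_mem' := by
        intro c x hx
        rw [Algebra.algebraMap_eq_smul_one, smul_mul_assoc, one_mul]
        exact P.smul_mem _ hx }
  have : x ∈ S := mem_of_adjoin h x
  simpa using this 1 h1

/-- A submodule containing `1` and stable under right multiplication by generators is
everything. -/
lemma mem_of_right (P : Submodule R (HA R r n ξ Q)) (h1 : (1 : HA R r n ξ Q) ∈ P)
    (h : ∀ i < n, ∀ x ∈ P, x * tn R r n ξ Q i ∈ P) (x : HA R r n ξ Q) : x ∈ P := by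
  let S : Subalgebra R (HA R r n ξ Q) :=
    { carrier := {a | ∀ x ∈ P, x * a ∈ P}
      mul_mem' := by
        intro a b ha hb x hx
        rw [← mul_assoc]; exact hb _ (ha _ hx)
      add_mem' := by
        intro a b ha hb x hx
        rw [mul_add]; exact P.add_mem (ha _ hx) (hb _ hx)
      algebraMap_mem' := by
        intro c x hx
        rw [Algebra.algebraMap_eq_smul_one, mul_smul_comm, mul_one]
        exact P.smul_mem _ hx }
  have : x ∈ S := mem_of_adjoin h x
  simpa using this 1 h1

lemma algHom_ext' {φ ψ : HA R r n ξ Q →ₐ[R] B}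
    (h : ∀ i < n, φ (tn R r n ξ Q i) = ψ (tn R r n ξ Q i)) : φ = ψ := by
  refine AlgHom.ext fun x => ?_
  exact mem_of_adjoin (P := AlgHom.equalizer φ ψ) h x

end AlgBasics

section Delta

variable {R : Type} [CommRing R] {B : Type*} [Ring B] [Algebra R B]

/-- Commutation of `t = t_0` past `T t^k T`, where `T = t_1`. -/
lemma delta {ξ : R} (hξ : IsUnit ξ) (t T : B) (hq : t * T * t * T = T * t * T * t)
    (hT : T * T = (ξ - 1) • T + ξ • (1 : B)) (k : ℕ) :
    t * T * t ^ k * T - T * t ^ k * T * t = (ξ - 1) • (t * T * t ^ k - t ^ k * T * t) := by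
  induction k with
  | zero =>
    simp only [pow_zero, mul_one, one_mul, mul_assoc, hT]
    simp only [mul_add, add_mul, smul_mul_assoc, mul_smul_comm, one_mul, mul_one, smul_sub]
    abel
  | succ k ih =>
    -- `ξ` times the identity follows from the previous one, as
    -- `ξ T t^{k+1} T = (T t^k T)(T t T) - (ξ - 1) T t^k (T t T)`
    have hTT : ∀ x y : B, x * T * T * y = (ξ - 1) • (x * T * y) + ξ • (x * y) := by
      intro x y
      rw [mul_assoc x, hT]
      simp only [mul_add, add_mul, mul_smul_comm, smul_mul_assoc, mul_one]
    have key : ξ • (T * t ^ (k + 1) * T) =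
        (T * t ^ k * T) * (T * t * T) - (ξ - 1) • (T * t ^ k * (T * t * T)) := by
      have := hTT (T * t ^ k) (t * T)
      have e : (T * t ^ k * T) * (T * t * T) = T * t ^ k * T * T * (t * T) := by
        simp only [mul_assoc]
      rw [e, this, pow_succ]
      simp only [mul_assoc]
      abel
    have hc : t * (T * t * T) = (T * t * T) * t := by simpa [mul_assoc] using hq
    have hc' : (T * t * T) * t ^ k = t ^ k * (T * t * T) := by
      have : Commute (T * t * T) t := hc.symm
      exact (this.pow_right k)
    have h2 : (t * T - T * t) * (T * t * T) = ξ • (t ^ 2 * T - t * T * t) := by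
      have e1 : t * T * (T * t * T) = (ξ - 1) • (t * T * (t * T)) + ξ • (t * (t * T)) := by
        have := hTT t (t * T)
        simpa [mul_assoc] using this
      have e2 : T * t * (T * t * T) = (ξ - 1) • (t * T * (t * T)) + ξ • (t * T * t) := by
        have : T * t * (T * t * T) = (t * T * t * T) * T := by rw [hq]; simp only [mul_assoc]
        rw [this]
        have := hTT (t * T * t) 1
        simpa [mul_assoc] using this
      rw [sub_mul, e1, e2, smul_sub, pow_two, mul_assoc t t T]
      abel
    have main : ξ • (t * T * t ^ (k + 1) * T - T * t ^ (k + 1) * T * t) =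
        ξ • ((ξ - 1) • (t * T * t ^ (k + 1) - t ^ (k + 1) * T * t)) := by
      have a1 : ξ • (t * T * t ^ (k + 1) * T) =
          t * ((T * t ^ k * T) * (T * t * T)) - (ξ - 1) • (t * (T * t ^ k * (T * t * T))) := by
        rw [← mul_smul_comm (ξ - 1) t, ← mul_sub, ← key]
        simp only [mul_smul_comm, mul_assoc]
      have a2 : ξ • (T * t ^ (k + 1) * T * t) =
          (T * t ^ k * T) * t * (T * t * T) - (ξ - 1) • (T * t ^ k * t * (T * t * T)) := by
        rw [← smul_mul_assoc, key, sub_mul, smul_mul_assoc]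
        simp only [mul_assoc] at hc ⊢
        rw [hc]
      rw [smul_sub, a1, a2]
      have a3 : t * ((T * t ^ k * T) * (T * t * T)) - (T * t ^ k * T) * t * (T * t * T) =
          ((ξ - 1) • (t * T * t ^ k - t ^ k * T * t)) * (T * t * T) := by
        rw [← ih, sub_mul]; simp only [mul_assoc]
      have a4 : t * ((T * t ^ k * T) * (T * t * T)) - (ξ - 1) • (t * (T * t ^ k * (T * t * T))) -
          ((T * t ^ k * T) * t * (T * t * T) - (ξ - 1) • (T * t ^ k * t * (T * t * T))) =
          (t * ((T * t ^ k * T) * (T * t * T)) - (T * t ^ k * T) * t * (T * t * T)) -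
          (ξ - 1) • (t * (T * t ^ k * (T * t * T)) - T * t ^ k * t * (T * t * T)) := by
        rw [smul_sub]; abel
      rw [a4, a3, smul_mul_assoc, ← smul_sub, smul_comm ξ]
      congr 1
      have b1 : t ^ k * T * t * (T * t * T) = t ^ k * (t * T * (T * t * T)) -
          ξ • (t ^ k * (t ^ 2 * T - t * T * t)) := by
        rw [← mul_smul_comm, ← h2, ← mul_sub, sub_mul]
        simp only [mul_assoc, sub_sub_cancel]
      have b2 : T * t ^ k * t * (T * t * T) = T * (T * t * T) * t ^ (k + 1) := by
        have h3 : Commute (T * t * T) t := hc.symm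
        rw [mul_assoc T (t ^ k) t, ← pow_succ, mul_assoc T (t ^ (k + 1)),
          mul_assoc T (T * t * T), (h3.pow_right (k + 1)).eq]
      have b3 : t * (T * t ^ k * (T * t * T)) = t * T * (T * t * T) * t ^ k := by
        rw [mul_assoc T, ← hc']; simp only [mul_assoc]
      have b4 : t * T * t ^ k * (T * t * T) = t * T * (T * t * T) * t ^ k := by
        rw [mul_assoc (t * T), ← hc']; simp only [mul_assoc]
      rw [sub_mul, b4, b1, b3, b2]
      have b5 : T * (T * t * T) * t ^ (k + 1) =
          (ξ - 1) • (T * t * T * t ^ (k + 1)) + ξ • (t * T * t ^ (k + 1)) := by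
        have := hTT 1 (t * T * t ^ (k + 1))
        simpa [mul_assoc] using this
      have b6 : t ^ k * (t * T * (T * t * T)) =
          (ξ - 1) • (T * t * T * t ^ (k + 1)) + ξ • (t ^ (k + 2) * T) := by
        have e1 : t * T * (T * t * T) = (ξ - 1) • (t * T * (t * T)) + ξ • (t * (t * T)) := by
          have := hTT t (t * T)
          simpa [mul_assoc] using this
        have : Commute (T * t * T) t := hc.symm
        rw [e1, mul_add, mul_smul_comm, mul_smul_comm, this.pow_right (k + 1)]
        simp only [pow_succ, mul_assoc]
      rw [b5, b6]
      simp only [pow_succ, pow_zero, mul_sub, smul_sub, one_mul, mul_assoc]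
      abel
    exact hξ.smul_left_cancel.1 main

end Delta

end HC

/-! ### Words in the generators and the table of the right action -/

namespace HC
open Polynomial

section Words

variable {B : Type*} [Monoid B]

/-- The ascending word `t_a t_{a+1} ⋯ t_{a+l-1}`. -/
def up (t : ℕ → B) (a : ℕ) : ℕ → B
  | 0 => 1
  | l + 1 => up t a l * t (a + l)

/-- The descending word `t_{a+l-1} ⋯ t_{a+1} t_a`. -/
def dn (t : ℕ → B) (a : ℕ) : ℕ → B
  | 0 => 1
  | l + 1 => t (a + l) * dn t a l

/-- The braid and commutation relations between `t_i`, `i < n`, not involving `t_0 t_1 t_0 t_1`. -/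
structure Br (n : ℕ) (t : ℕ → B) : Prop where
  comm : ∀ i j, i + 1 < j → j < n → t i * t j = t j * t i
  braid : ∀ i, 1 ≤ i → i + 1 < n → t i * t (i + 1) * t i = t (i + 1) * t i * t (i + 1)

variable {t : ℕ → B}

@[simp] lemma up_zero (a : ℕ) : up t a 0 = 1 := rfl
@[simp] lemma dn_zero (a : ℕ) : dn t a 0 = 1 := rfl
lemma up_succ (a l : ℕ) : up t a (l + 1) = up t a l * t (a + l) := rfl
lemma dn_succ (a l : ℕ) : dn t a (l + 1) = t (a + l) * dn t a l := rfl
@[simp] lemma up_one (a : ℕ) : up t a 1 = t a := by simp [up_succ]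
@[simp] lemma dn_one (a : ℕ) : dn t a 1 = t a := by simp [dn_succ]

lemma up_add (a l m : ℕ) : up t a (l + m) = up t a l * up t (a + l) m := by
  induction m with
  | zero => simp
  | succ m ih => rw [← add_assoc, up_succ, ih, up_succ, mul_assoc, add_assoc]

lemma dn_add (a l m : ℕ) : dn t a (l + m) = dn t (a + l) m * dn t a l := by
  induction m with
  | zero => simp
  | succ m ih => rw [← add_assoc, dn_succ, ih, dn_succ, mul_assoc, add_assoc]

lemma up_succ' (a l : ℕ) : up t a (l + 1) = t a * up t (a + 1) l := by
  rw [add_comm, up_add]; simp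

lemma dn_succ' (a l : ℕ) : dn t a (l + 1) = dn t (a + 1) l * t a := by
  rw [add_comm, dn_add]; simp

lemma commute_up {b : B} {a l : ℕ} (h : ∀ i, a ≤ i → i < a + l → Commute b (t i)) :
    Commute b (up t a l) := by
  induction l with
  | zero => simp
  | succ l ih =>
    exact (ih (fun i h1 h2 => h i h1 (by omega))).mul_right (h _ (by omega) (by omega))

lemma commute_dn {b : B} {a l : ℕ} (h : ∀ i, a ≤ i → i < a + l → Commute b (t i)) :
    Commute b (dn t a l) := by
  induction l with
  | zero => simp
  | succ l ih =>
    exact (h _ (by omega) (by omega)).mul_right (ih (fun i h1 h2 => h i h1 (by omega)))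

variable {n : ℕ}

lemma Br.cm (h : Br n t) {i j : ℕ} (hi : i < n) (hj : j < n) (hij : i + 1 < j ∨ j + 1 < i) :
    Commute (t i) (t j) := by
  rcases hij with hij | hij
  · exact h.comm i j hij hj
  · exact (h.comm j i hij hi).symm

lemma Br.mono (h : Br n t) {m : ℕ} (hm : m ≤ n) : Br m t :=
  ⟨fun i j h1 h2 => h.comm i j h1 (by omega), fun i h1 h2 => h.braid i h1 (by omega)⟩

lemma Br.up_mul (h : Br n t) {a l s : ℕ} (ha : 1 ≤ a) (hal : a + l ≤ n) (h1 : a ≤ s)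
    (h2 : s + 1 < a + l) : up t a l * t s = t (s + 1) * up t a l := by
  obtain ⟨p, rfl⟩ : ∃ p, s = a + p := ⟨s - a, by omega⟩
  obtain ⟨q, rfl⟩ : ∃ q, l = p + 2 + q := ⟨l - p - 2, by omega⟩
  have e : up t a (p + 2 + q) = up t a p * (t (a + p) * t (a + p + 1) * up t (a + p + 2) q) := by
    rw [add_assoc, up_add, up_add]
    simp [up_succ, add_assoc]
  have c1 : up t (a + p + 2) q * t (a + p) = t (a + p) * up t (a + p + 2) q := by
    refine (commute_up fun i hi hi' => ?_).symm
    exact h.cm (by omega) (by omega) (by omega)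
  have c2 : t (a + p + 1) * up t a p = up t a p * t (a + p + 1) := by
    refine (commute_up fun i hi hi' => ?_)
    exact h.cm (by omega) (by omega) (by omega)
  have b := h.braid (a + p) (by omega) (by omega)
  rw [e, mul_assoc, mul_assoc _ _ (t (a + p)), c1, ← mul_assoc (t (a + p + 1)), c2]
  simp only [← mul_assoc] at b ⊢
  rw [mul_assoc (up t a p), mul_assoc (up t a p), b]
  simp only [mul_assoc]

lemma Br.mul_dn (h : Br n t) {a l s : ℕ} (ha : 1 ≤ a) (hal : a + l ≤ n) (h1 : a ≤ s)
    (h2 : s + 1 < a + l) : t s * dn t a l = dn t a l * t (s + 1) := by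
  obtain ⟨p, rfl⟩ : ∃ p, s = a + p := ⟨s - a, by omega⟩
  obtain ⟨q, rfl⟩ : ∃ q, l = p + 2 + q := ⟨l - p - 2, by omega⟩
  have e : dn t a (p + 2 + q) = dn t (a + p + 2) q * (t (a + p + 1) * t (a + p)) * dn t a p := by
    rw [add_assoc, dn_add, dn_add]
    simp [dn_succ, add_assoc, mul_assoc]
  have c1 : t (a + p) * dn t (a + p + 2) q = dn t (a + p + 2) q * t (a + p) := by
    refine (commute_dn fun i hi hi' => ?_)
    exact h.cm (by omega) (by omega) (by omega)
  have c2 : dn t a p * t (a + p + 1) = t (a + p + 1) * dn t a p := by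
    refine (commute_dn fun i hi hi' => ?_).symm
    exact h.cm (by omega) (by omega) (by omega)
  have b := h.braid (a + p) (by omega) (by omega)
  rw [e, mul_assoc _ (dn t a p), c2]
  simp only [← mul_assoc] at b ⊢
  rw [c1]
  simp only [mul_assoc] at b ⊢
  have b2 := congrArg (· * dn t a p) b
  simp only [mul_assoc] at b2
  rw [b2]

end Words

section Tower

/-- Labels of the basis of `H_{n+1}` as a left `H_n`-module: `e j` stands for
`t_n ⋯ t_{j+1}` and `d j k` for `t_n ⋯ t_1 t_0^k t_1 ⋯ t_j`. -/
inductive XI : Type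
  | e (j : ℕ) : XI
  | d (j k : ℕ) : XI
  deriving DecidableEq

/-- The labels which occur in the basis. -/
def XI.valid (r n : ℕ) : XI → Prop
  | .e j => j ≤ n
  | .d j k => j ≤ n ∧ 1 ≤ k ∧ k < r

/-- The type of valid labels. -/
abbrev Xv (r n : ℕ) : Type := {x : XI // x.valid r n}

variable {R : Type} [CommRing R] {B : Type*} [Ring B] [Algebra R B]

/-- The basis vector `e j` (zero if the label is not valid). -/
def Ev (B : Type*) [Ring B] (r n j : ℕ) : Xv r n →₀ B :=
  open Classical in if h : (XI.e j).valid r n then Finsupp.single ⟨_, h⟩ 1 else 0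

/-- The basis vector `d j k` (zero if the label is not valid). -/
def Dv (B : Type*) [Ring B] (r n j k : ℕ) : Xv r n →₀ B :=
  open Classical in if h : (XI.d j k).valid r n then Finsupp.single ⟨_, h⟩ 1 else 0

/-- The vectors `e_0 t_0^k`, `k ≤ r`. -/
def Zv (B : Type*) [Ring B] [Algebra R B] (f : R[X]) (r n k : ℕ) : Xv r n →₀ B :=
  if k = 0 then Ev B r n 0 else if k < r then Dv B r n 0 k else
    - ∑ q ∈ Finset.range r, f.coeff q • (if q = 0 then Ev B r n 0 else Dv B r n 0 q)

/-- The table of the right action of the generator `t_i` on the basis. -/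
def tab (ξ : R) (f : R[X]) (r n : ℕ) (g : ℕ → B) (i : ℕ) : XI → (Xv r n →₀ B)
  | .e j =>
    if i = 0 then (if j = 0 then Zv B f r n 1 else g 0 • Ev B r n j)
    else if i < j then g i • Ev B r n j
    else if i = j then Ev B r n (j - 1)
    else if i = j + 1 then ξ • Ev B r n (j + 1) + (ξ - 1) • Ev B r n j
    else g (i - 1) • Ev B r n j
  | .d j k =>
    if i = 0 then
      (if j = 0 then Zv B f r n (k + 1) else g 0 • Dv B r n j k +
        (ξ - 1) • ((g 0 ^ k * up g 1 (j - 1)) • Dv B r n 0 1 -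
          (g 0 * up g 1 (j - 1)) • Dv B r n 0 k))
    else if i < j then g i • Dv B r n j k
    else if i = j then ξ • Dv B r n (j - 1) k + (ξ - 1) • Dv B r n j k
    else if i = j + 1 then Dv B r n (j + 1) k
    else g (i - 1) • Dv B r n j k

/-- The operator of right multiplication by `t_i`. -/
def opn (ξ : R) (f : R[X]) (r n : ℕ) (g : ℕ → B) (i : ℕ) : Module.End B (Xv r n →₀ B) :=
  Finsupp.linearCombination B (fun x : Xv r n => tab ξ f r n g i x.1)

variable {ξ : R} {f : R[X]} {r n : ℕ} {g : ℕ → B}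

lemma Ev_eq {j : ℕ} (h : j ≤ n) : Ev B r n j = Finsupp.single ⟨.e j, h⟩ 1 := by
  exact dif_pos h

lemma Dv_eq {j k : ℕ} (h : j ≤ n) (h1 : 1 ≤ k) (h2 : k < r) :
    Dv B r n j k = Finsupp.single ⟨.d j k, h, h1, h2⟩ 1 := by
  exact dif_pos ⟨h, h1, h2⟩

lemma opn_E (i : ℕ) {j : ℕ} (h : j ≤ n) :
    opn ξ f r n g i (Ev B r n j) = tab ξ f r n g i (.e j) := by
  rw [Ev_eq h, opn, Finsupp.linearCombination_single, one_smul]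

lemma opn_D (i : ℕ) {j k : ℕ} (h : j ≤ n) (h1 : 1 ≤ k) (h2 : k < r) :
    opn ξ f r n g i (Dv B r n j k) = tab ξ f r n g i (.d j k) := by
  rw [Dv_eq h h1 h2, opn, Finsupp.linearCombination_single, one_smul]

lemma end_ext {A : Type*} [AddCommGroup A] [Module B A] {φ ψ : (Xv r n →₀ B) →ₗ[B] A}
    (hE : ∀ j ≤ n, φ (Ev B r n j) = ψ (Ev B r n j))
    (hD : ∀ j ≤ n, ∀ k, 1 ≤ k → k < r → φ (Dv B r n j k) = ψ (Dv B r n j k)) : φ = ψ := by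
  refine Finsupp.lhom_ext' fun x => LinearMap.ext_ring ?_
  rcases x with ⟨j | ⟨j, k⟩, hx⟩
  · have := hE j hx
    rw [Ev_eq hx] at this
    exact this
  · have := hD j hx.1 k hx.2.1 hx.2.2
    rw [Dv_eq hx.1 hx.2.1 hx.2.2] at this
    exact this

section table
local notation "𝐨" => opn ξ f r n g
local notation "𝐄" => Ev B r n
local notation "𝐃" => Dv B r n
local notation "𝐙" => Zv B f r n

lemma oE_lt {i j : ℕ} (hi : 1 ≤ i) (h : i < j) (hj : j ≤ n) : 𝐨 i (𝐄 j) = g i • 𝐄 j := by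
  rw [opn_E i hj]; simp only [tab]; rw [if_neg (by omega), if_pos h]

lemma oE_eq {j : ℕ} (hj : j + 1 ≤ n) : 𝐨 (j + 1) (𝐄 (j + 1)) = 𝐄 j := by
  rw [opn_E _ hj]; simp only [tab]
  rw [if_neg (by omega), if_neg (by omega), if_pos trivial, Nat.add_sub_cancel]

lemma oE_succ {j : ℕ} (hj : j ≤ n) : 𝐨 (j + 1) (𝐄 j) = ξ • 𝐄 (j + 1) + (ξ - 1) • 𝐄 j := by
  rw [opn_E _ hj]; simp only [tab]
  rw [if_neg (by omega), if_neg (by omega), if_neg (by omega), if_pos trivial]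

lemma oE_gt {i j : ℕ} (h : j + 1 < i + 1) (hj : j ≤ n) : 𝐨 (i + 1) (𝐄 j) = g i • 𝐄 j := by
  rw [opn_E _ hj]; simp only [tab]
  rw [if_neg (by omega), if_neg (by omega), if_neg (by omega), if_neg (by omega),
    Nat.add_sub_cancel]

lemma oD_lt {i j k : ℕ} (hi : 1 ≤ i) (h : i < j) (hj : j ≤ n) (h1 : 1 ≤ k) (h2 : k < r) :
    𝐨 i (𝐃 j k) = g i • 𝐃 j k := by
  rw [opn_D i hj h1 h2]; simp only [tab]; rw [if_neg (by omega), if_pos h]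

lemma oD_eq {j k : ℕ} (hj : j + 1 ≤ n) (h1 : 1 ≤ k) (h2 : k < r) :
    𝐨 (j + 1) (𝐃 (j + 1) k) = ξ • 𝐃 j k + (ξ - 1) • 𝐃 (j + 1) k := by
  rw [opn_D _ hj h1 h2]; simp only [tab]
  rw [if_neg (by omega), if_neg (by omega), if_pos trivial, Nat.add_sub_cancel]

lemma oD_succ {j k : ℕ} (hj : j ≤ n) (h1 : 1 ≤ k) (h2 : k < r) :
    𝐨 (j + 1) (𝐃 j k) = 𝐃 (j + 1) k := by
  rw [opn_D _ hj h1 h2]; simp only [tab]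
  rw [if_neg (by omega), if_neg (by omega), if_neg (by omega), if_pos trivial]

lemma oD_gt {i j k : ℕ} (h : j + 1 < i + 1) (hj : j ≤ n) (h1 : 1 ≤ k) (h2 : k < r) :
    𝐨 (i + 1) (𝐃 j k) = g i • 𝐃 j k := by
  rw [opn_D _ hj h1 h2]; simp only [tab]
  rw [if_neg (by omega), if_neg (by omega), if_neg (by omega), if_neg (by omega),
    Nat.add_sub_cancel]

lemma oE_zero {j : ℕ} (hj : j + 1 ≤ n) : 𝐨 0 (𝐄 (j + 1)) = g 0 • 𝐄 (j + 1) := by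
  rw [opn_E _ hj]; simp [tab]

lemma oD_zero {j k : ℕ} (hj : j + 1 ≤ n) (h1 : 1 ≤ k) (h2 : k < r) :
    𝐨 0 (𝐃 (j + 1) k) = g 0 • 𝐃 (j + 1) k + (ξ - 1) • ((g 0 ^ k * up g 1 j) • 𝐃 0 1 -
      (g 0 * up g 1 j) • 𝐃 0 k) := by
  rw [opn_D _ hj h1 h2]; simp [tab]

lemma Z_zero : 𝐙 0 = 𝐄 0 := by simp [Zv]

lemma Z_pos {k : ℕ} (h1 : 1 ≤ k) (h2 : k < r) : 𝐙 k = 𝐃 0 k := by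
  rw [Zv, if_neg (by omega), if_pos h2]

lemma oZ {k : ℕ} (hk : k < r) : 𝐨 0 (𝐙 k) = 𝐙 (k + 1) := by
  rcases Nat.eq_zero_or_pos k with rfl | h
  · rw [Z_zero, opn_E _ (Nat.zero_le n)]; simp [tab]
  · rw [Z_pos h hk, opn_D _ (Nat.zero_le n) h hk]; simp [tab]

lemma Z_r (hr : 1 ≤ r) : 𝐙 r = - ∑ q ∈ Finset.range r, f.coeff q • 𝐙 q := by
  rw [Zv, if_neg (by omega), if_neg (by omega)]
  congr 1
  refine Finset.sum_congr rfl fun q hq => ?_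
  rw [Finset.mem_range] at hq
  rcases Nat.eq_zero_or_pos q with rfl | h
  · rw [Z_zero]; simp
  · rw [Z_pos h hq, if_neg (by omega)]

/-- The operators `𝐨 i` with `i ≥ 2` act on all `Z_k`, `k ≤ r`, through the coefficients. -/
lemma oZ_gt {i k : ℕ} (hr : 1 ≤ r) (hi : 1 ≤ i) (hk : k ≤ r) :
    𝐨 (i + 1) (𝐙 k) = g i • 𝐙 k := by
  have main : ∀ q < r, 𝐨 (i + 1) (𝐙 q) = g i • 𝐙 q := by
    intro q hq
    rcases Nat.eq_zero_or_pos q with rfl | h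
    · rw [Z_zero, oE_gt (by omega) (by omega)]
    · rw [Z_pos h hq, oD_gt (by omega) (by omega) h hq]
  rcases Nat.lt_or_ge k r with h | h
  · exact main k h
  · obtain rfl : k = r := le_antisymm hk h
    rw [Z_r hr, map_neg, map_sum, smul_neg, Finset.smul_sum]
    congr 1
    refine Finset.sum_congr rfl fun q hq => ?_
    rw [Finset.mem_range] at hq
    rw [LinearMap.map_smul_of_tower, main q hq, smul_comm]

lemma oD_zero' {j k : ℕ} (hj : j + 1 ≤ n) (h1 : 1 ≤ k) (h2 : k < r) :
    𝐨 0 (𝐃 (j + 1) k) = g 0 • 𝐃 (j + 1) k + (ξ - 1) • ((g 0 ^ k * up g 1 j) • 𝐙 1 -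
      (g 0 * up g 1 j) • 𝐙 k) := by
  rw [oD_zero hj h1 h2, Z_pos h1 h2, Z_pos le_rfl (by omega)]

end table
end Tower
end HC

/-! ### The table satisfies the Hecke relations -/

namespace HC
open Polynomial

section TowerRel

variable {R : Type} [CommRing R] {B : Type*} [Ring B] [Algebra R B]
variable {ξ : R} {f : R[X]} {r n : ℕ} {g : ℕ → B}

lemma HRel.br {t : ℕ → B} (h : HRel ξ f n t) : Br n t := ⟨h.comm, h.braid⟩

lemma aeval_eq_sum_r {A : Type*} [Semiring A] [Algebra R A] (hf : f.Monic) (hd : f.natDegree = r)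
    (x : A) : aeval x f = ∑ q ∈ Finset.range r, f.coeff q • x ^ q + x ^ r := by
  rw [aeval_eq_sum_range, hd, Finset.sum_range_succ]
  congr 1
  have : f.coeff r = 1 := by rw [← hd]; exact hf
  rw [this, one_smul]

local notation "𝐨" => opn ξ f r n g
local notation "𝐄" => Ev B r n
local notation "𝐃" => Dv B r n
local notation "𝐙" => Zv B f r n

lemma rsm (c : R) (i : ℕ) (v : Xv r n →₀ B) : 𝐨 i (c • v) = c • 𝐨 i v :=
  LinearMap.map_smul_of_tower _ c v

lemma op_quad (i : ℕ) (hi : 1 ≤ i) (hin : i < n + 1) (hg : HRel ξ f n g) :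
    𝐨 i * 𝐨 i = (ξ - 1) • 𝐨 i + ξ • 1 := by
  obtain ⟨i, rfl⟩ : ∃ i', i = i' + 1 := ⟨i - 1, by omega⟩
  refine end_ext (fun j hj => ?_) (fun j hj k h1 h2 => ?_)
  all_goals simp only [Module.End.mul_apply, LinearMap.add_apply, LinearMap.smul_apply,
    Module.End.one_apply]
  · rcases lt_trichotomy (i + 1) j with h | rfl | h
    · rw [oE_lt hi h hj, map_smul, oE_lt hi h hj, smul_smul, hg.quad _ hi (by omega), add_smul,
        smul_assoc, smul_assoc, one_smul]
    · rw [oE_eq hj, oE_succ (by omega)]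
      abel
    · rcases Nat.lt_or_ge j i with h' | h'
      · rw [oE_gt (by omega) hj, map_smul, oE_gt (by omega) hj, smul_smul,
          hg.quad i (by omega) (by omega), add_smul, smul_assoc, smul_assoc, one_smul]
      · obtain rfl : i = j := by omega
        rw [oE_succ hj, map_add, rsm, rsm, oE_eq (by omega), oE_succ hj]
        abel
  · rcases lt_trichotomy (i + 1) j with h | rfl | h
    · rw [oD_lt hi h hj h1 h2, map_smul, oD_lt hi h hj h1 h2, smul_smul, hg.quad _ hi (by omega),
        add_smul, smul_assoc, smul_assoc, one_smul]
    · rw [oD_eq hj h1 h2, map_add, rsm, rsm, oD_succ (by omega) h1 h2, oD_eq hj h1 h2]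
      abel
    · rcases Nat.lt_or_ge j i with h' | h'
      · rw [oD_gt (by omega) hj h1 h2, map_smul, oD_gt (by omega) hj h1 h2, smul_smul,
          hg.quad i (by omega) (by omega), add_smul, smul_assoc, smul_assoc, one_smul]
      · obtain rfl : i = j := by omega
        rw [oD_succ hj h1 h2, oD_eq (by omega) h1 h2]
        abel

lemma op_comm_pos (i l : ℕ) (hi : 1 ≤ i) (hil : i + 1 < l) (hin : l < n + 1)
    (hg : HRel ξ f n g) : 𝐨 i * 𝐨 l = 𝐨 l * 𝐨 i := by
  obtain ⟨i, rfl⟩ : ∃ i', i = i' + 1 := ⟨i - 1, by omega⟩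
  obtain ⟨l, rfl⟩ : ∃ i', l = i' + 1 := ⟨l - 1, by omega⟩
  refine end_ext (fun j hj => ?_) (fun j hj k h1 h2 => ?_)
  all_goals simp only [Module.End.mul_apply]
  all_goals
    obtain h | rfl | rfl | h | rfl | rfl | h : l + 1 < j ∨ j = l + 1 ∨ j = l ∨
      (i + 1 < j ∧ j < l) ∨ j = i + 1 ∨ j = i ∨ j < i := by omega
  all_goals
    simp (disch := omega) only [oE_lt, oE_eq, oE_succ, oE_gt, map_add, map_smul, rsm,
      oD_lt, oD_eq, oD_succ, oD_gt]
  all_goals try simp only [smul_smul, smul_add, smul_comm (g _) (_ : R)]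
  all_goals
    congr 1
    exact (hg.comm _ _ (by omega) (by omega)).symm

lemma op_braid (i : ℕ) (hi : 1 ≤ i) (hin : i + 1 < n + 1)
    (hg : HRel ξ f n g) : 𝐨 i * 𝐨 (i + 1) * 𝐨 i = 𝐨 (i + 1) * 𝐨 i * 𝐨 (i + 1) := by
  obtain ⟨i, rfl⟩ : ∃ i', i = i' + 1 := ⟨i - 1, by omega⟩
  refine end_ext (fun j hj => ?_) (fun j hj k h1 h2 => ?_)
  all_goals simp only [Module.End.mul_apply]
  all_goals
    obtain h | rfl | rfl | rfl | h : i + 1 + 1 < j ∨ j = i + 1 + 1 ∨ j = i + 1 ∨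
      j = i ∨ j < i := by omega
  all_goals
    simp (disch := omega) only [oE_lt, oE_eq, oE_succ, oE_gt, map_add, map_smul, rsm,
      oD_lt, oD_eq, oD_succ, oD_gt]
  all_goals try simp only [smul_smul, smul_add, smul_comm (g _) (_ : R)]

  · have := hg.braid (i + 1) (by omega) (by omega)
    simp only [mul_assoc] at this
    rw [this]
  · rw [hg.quad _ (by omega) (by omega), add_smul, smul_assoc, smul_assoc, one_smul]
    simp only [smul_add, smul_smul, mul_comm ξ]
    abel
  · have := hg.braid i (by omega) (by omega)
    simp only [mul_assoc] at this
    rw [this]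
  · have := hg.braid (i + 1) (by omega) (by omega)
    simp only [mul_assoc] at this
    rw [this]
  · rw [hg.quad _ (by omega) (by omega), add_smul, smul_assoc, smul_assoc, one_smul]
    simp only [smul_add, smul_smul, mul_comm ξ]
    abel
  · have := hg.braid i (by omega) (by omega)
    simp only [mul_assoc] at this
    rw [this]

lemma op_comm_zero (i : ℕ) (hi : 1 < i) (hin : i < n + 1) (hr : 1 ≤ r)
    (hg : HRel ξ f n g) : 𝐨 0 * 𝐨 i = 𝐨 i * 𝐨 0 := by
  obtain ⟨i, rfl⟩ : ∃ i', i = i' + 1 := ⟨i - 1, by omega⟩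
  refine end_ext (fun j hj => ?_) (fun j hj k h1 h2 => ?_)
  all_goals simp only [Module.End.mul_apply]
  · rcases j with _ | j
    · rw [oE_gt (by omega) (by omega), map_smul, ← Z_zero (f := f), oZ (by omega),
        oZ_gt hr (by omega) (by omega)]
    · obtain h | rfl | rfl | h : i < j ∨ j = i ∨ i = j + 1 ∨ j + 1 < i := by omega
      · rw [oE_lt (by omega) (by omega) hj, map_smul, oE_zero hj, map_smul,
          oE_lt (by omega) (by omega) hj, smul_smul, smul_smul,
          hg.comm 0 (i + 1) (by omega) (by omega)]
      · obtain ⟨j, rfl⟩ : ∃ i', j = i' + 1 := ⟨j - 1, by omega⟩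
        rw [oE_eq (by omega), oE_zero (by omega), oE_zero (by omega), map_smul, oE_eq (by omega)]
      · rw [oE_succ (by omega), oE_zero (by omega), map_add, rsm, rsm, oE_zero (by omega),
          oE_zero (by omega), map_smul, oE_succ (by omega)]
        simp only [smul_add, smul_comm (g _) (_ : R)]
      · rw [oE_gt (by omega) hj, map_smul, oE_zero hj, map_smul, oE_gt (by omega) hj,
          smul_smul, smul_smul, hg.comm 0 i (by omega) (by omega)]
  · rcases j with _ | j
    · rw [oD_gt (by omega) (by omega) h1 h2, map_smul, ← Z_pos (f := f) h1 h2, oZ (by omega),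
        oZ_gt hr (by omega) (by omega)]
    · have cpow : ∀ i, 1 < i → i < n → ∀ q, g i * g 0 ^ q = g 0 ^ q * g i := by
        intro i h1 h2 q
        exact ((hg.br.cm (i := i) (j := 0) h2 (by omega) (by omega)).pow_right q)
      have c1 : ∀ i, 1 < i → i < n → g i * g 0 = g 0 * g i := by
        intro i h1 h2
        exact (hg.br.cm (i := i) (j := 0) h2 (by omega) (by omega))
      obtain h | rfl | rfl | h : i < j ∨ j = i ∨ i = j + 1 ∨ j + 1 < i := by omega
      · have hu := hg.br.up_mul (a := 1) (l := j) (s := i) le_rfl (by omega) (by omega) (by omega)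
        rw [oD_lt (by omega) (by omega) hj h1 h2, map_smul, oD_zero' hj h1 h2, map_add, rsm,
          map_sub, map_smul, map_smul, map_smul, oD_lt (by omega) (by omega) hj h1 h2,
          oZ_gt hr (by omega) (by omega), oZ_gt hr (by omega) (by omega)]
        simp only [smul_add, smul_sub, smul_comm (g _) (_ : R), smul_smul, mul_assoc, hu]
        simp only [← mul_assoc, cpow (i + 1) (by omega) (by omega),
          c1 (i + 1) (by omega) (by omega)]
      · obtain ⟨j, rfl⟩ : ∃ i', j = i' + 1 := ⟨j - 1, by omega⟩
        rw [oD_eq (by omega) h1 h2, map_add, rsm, rsm, oD_zero' (by omega) h1 h2,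
          oD_zero' (by omega) h1 h2, map_add, rsm, map_sub, map_smul, map_smul, map_smul,
          oD_eq (by omega) h1 h2, oZ_gt hr (by omega) (by omega), oZ_gt hr (by omega) (by omega)]
        have hu : up g 1 (j + 1) * g (j + 1) = (ξ - 1) • up g 1 (j + 1) + ξ • up g 1 j := by
          rw [up_succ, add_comm 1 j, mul_assoc, hg.quad (j + 1) (by omega) (by omega), mul_add,
            mul_smul_comm, mul_smul_comm, mul_one]
        simp only [smul_add, smul_sub, smul_comm (g _) (_ : R), smul_smul, mul_assoc, hu,
          mul_add, mul_smul_comm, add_smul, smul_assoc, mul_comm ξ]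
        abel
      · rw [oD_succ (by omega) h1 h2, oD_zero' (by omega) h1 h2,
          oD_zero' (by omega) h1 h2, map_add, rsm, map_sub, map_smul, map_smul, map_smul,
          oD_succ (by omega) h1 h2, oZ_gt hr (by omega) (by omega), oZ_gt hr (by omega) (by omega)]
        simp only [up_succ, smul_smul, mul_assoc, add_comm 1 j]
      · have hu : up g 1 j * g i = g i * up g 1 j := by
          refine (commute_up fun s hs hs' => ?_).symm
          exact hg.br.cm (by omega) (by omega) (by omega)
        rw [oD_gt (by omega) hj h1 h2, map_smul, oD_zero' hj h1 h2, map_add, rsm,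
          map_sub, map_smul, map_smul, map_smul, oD_gt (by omega) hj h1 h2,
          oZ_gt hr (by omega) (by omega), oZ_gt hr (by omega) (by omega)]
        simp only [smul_add, smul_sub, smul_comm (g _) (_ : R), smul_smul, mul_assoc, hu]
        simp only [← mul_assoc, cpow i (by omega) (by omega), c1 i (by omega) (by omega)]

/-- The action of `t_1 t_0` on `Z_k`, for all `k ≤ r`. -/
lemma op_F1 (hn : 1 ≤ n) (hr : 1 ≤ r) (hf : f.Monic) (hd : f.natDegree = r) (hg : HRel ξ f n g)
    {k : ℕ} (hk : k ≤ r) :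
    𝐨 0 (𝐨 1 (𝐙 k)) = g 0 • 𝐨 1 (𝐙 k) + (ξ - 1) • (g 0 ^ k • 𝐙 1 - g 0 • 𝐙 k) := by
  have main : ∀ q < r, 𝐨 0 (𝐨 1 (𝐙 q)) =
      g 0 • 𝐨 1 (𝐙 q) + (ξ - 1) • (g 0 ^ q • 𝐙 1 - g 0 • 𝐙 q) := by
    intro q hq
    rcases Nat.eq_zero_or_pos q with rfl | h
    · have e1 := oE_succ (ξ := ξ) (f := f) (g := g) (r := r) (j := 0) (Nat.zero_le n)
      rw [zero_add] at e1
      rw [Z_zero, e1, map_add, rsm, rsm, ← zero_add 1, oE_zero (by omega),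
        ← Z_zero (f := f), oZ (by omega)]
      simp only [pow_zero, one_smul, smul_add, smul_sub, smul_comm (g _) (_ : R)]
      abel
    · have e1 := oD_succ (ξ := ξ) (f := f) (g := g) (r := r) (j := 0) (Nat.zero_le n) h hq
      rw [zero_add] at e1
      rw [Z_pos h hq, e1]
      have e2 := oD_zero' (ξ := ξ) (f := f) (g := g) (r := r) (j := 0) (n := n) (by omega) h hq
      rw [zero_add, up_zero, mul_one, mul_one, Z_pos h hq] at e2
      exact e2
  rcases Nat.lt_or_ge k r with h | h
  · exact main k h
  · have hkr : k = r := le_antisymm hk h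
    rw [hkr]
    have hc := hg.cyc (by omega)
    rw [aeval_eq_sum_r hf hd] at hc
    have hc' : g 0 ^ r = - ∑ q ∈ Finset.range r, f.coeff q • g 0 ^ q :=
      eq_neg_of_add_eq_zero_right hc
    have e : 𝐨 0 (𝐨 1 (𝐙 r)) = - ∑ q ∈ Finset.range r, f.coeff q •
        (g 0 • 𝐨 1 (𝐙 q) + (ξ - 1) • (g 0 ^ q • 𝐙 1 - g 0 • 𝐙 q)) := by
      rw [Z_r hr, map_neg, map_sum, map_neg, map_sum]
      congr 1
      refine Finset.sum_congr rfl fun q hq => ?_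
      rw [rsm, rsm, main q (Finset.mem_range.1 hq)]
    rw [e, hc']
    have e2 : 𝐨 1 (𝐙 r) = - ∑ q ∈ Finset.range r, f.coeff q • 𝐨 1 (𝐙 q) := by
      rw [Z_r hr, map_neg, map_sum]
      congr 1
      exact Finset.sum_congr rfl fun q hq => rsm _ _ _
    rw [e2, Z_r hr]
    simp only [smul_add, smul_sub, smul_neg, neg_smul, Finset.smul_sum, Finset.sum_smul,
      Finset.sum_add_distrib, Finset.sum_sub_distrib, smul_comm (g _) (_ : R), smul_assoc,
      smul_comm (ξ - 1) (f.coeff _)]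
    abel


lemma op_quart_Z (hn : 1 ≤ n) (hr : 1 ≤ r) (hf : f.Monic) (hd : f.natDegree = r)
    (hg : HRel ξ f n g) {k : ℕ} (hk : k < r) :
    𝐨 0 (𝐨 1 (𝐨 0 (𝐨 1 (𝐙 k)))) = 𝐨 1 (𝐨 0 (𝐨 1 (𝐨 0 (𝐙 k)))) := by
  have q : ∀ v, 𝐨 1 (𝐨 1 v) = (ξ - 1) • 𝐨 1 v + ξ • v := fun v => by
    have := congrArg (fun φ => φ v)
      (op_quad (f := f) (r := r) (g := g) 1 le_rfl (by omega) hg)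
    simpa using this
  have F : ∀ k ≤ r, _ := fun k hk => op_F1 (k := k) hn hr hf hd hg hk
  have F1 := F 1 hr
  rw [pow_one, sub_self, smul_zero, add_zero] at F1
  rw [oZ hk, F _ hk, F k hk.le]
  simp only [map_add, map_sub, map_smul, rsm, q, oZ hk, F1]
  simp only [smul_add, smul_sub, smul_comm (g _) (_ : R), smul_smul, pow_succ]
  abel

lemma op_quart (hn : 1 < n + 1) (hξ : IsUnit ξ) (hr : 1 ≤ r) (hf : f.Monic)
    (hd : f.natDegree = r) (hg : HRel ξ f n g) :
    𝐨 0 * 𝐨 1 * 𝐨 0 * 𝐨 1 = 𝐨 1 * 𝐨 0 * 𝐨 1 * 𝐨 0 := by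
  have hn' : 1 ≤ n := by omega
  have q : ∀ v, 𝐨 1 (𝐨 1 v) = (ξ - 1) • 𝐨 1 v + ξ • v := fun v => by
    have := congrArg (fun φ => φ v)
      (op_quad (f := f) (r := r) (g := g) 1 le_rfl (by omega) hg)
    simpa using this
  have F : ∀ k ≤ r, _ := fun k hk => op_F1 (k := k) hn' hr hf hd hg hk
  have F1 := F 1 hr
  rw [pow_one, sub_self, smul_zero, add_zero] at F1
  have QZ : ∀ k < r, _ := fun k hk => op_quart_Z (k := k) hn' hr hf hd hg hk
  refine end_ext (fun j hj => ?_) (fun j hj k h1 h2 => ?_)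
  all_goals simp only [Module.End.mul_apply]
  · obtain rfl | rfl | h : j = 0 ∨ j = 0 + 1 ∨ 1 < j := by omega
    · have := QZ 0 (by omega)
      rwa [Z_zero] at this
    · have e1 : 𝐨 1 (𝐄 (0 + 1)) = 𝐙 0 := by rw [Z_zero]; exact oE_eq hj
      rw [e1, oE_zero hj, map_smul, e1, map_smul, map_smul, oZ (by omega), F1]
    · obtain ⟨j, rfl⟩ : ∃ i', j = i' + 1 := ⟨j - 1, by omega⟩
      simp only [oE_lt le_rfl h hj, oE_zero hj, map_smul, smul_smul]
      have := hg.quart (by omega)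
      simp only [mul_assoc] at this ⊢
      rw [this]
  · obtain rfl | rfl | h : j = 0 ∨ j = 0 + 1 ∨ 1 < j := by omega
    · have := QZ k h2
      rwa [Z_pos h1 h2] at this
    · have e1 : 𝐃 (0 + 1) k = 𝐨 1 (𝐙 k) := by
        rw [Z_pos h1 h2]; exact (oD_succ (Nat.zero_le n) h1 h2).symm
      rw [e1, QZ k h2, q, q, map_add, map_add, map_add, rsm, rsm, rsm, rsm, rsm, rsm, QZ k h2]
    · obtain ⟨j, rfl⟩ : ∃ i', j = i' + 2 := ⟨j - 2, by omega⟩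
      -- `W = t_1 U` with `U` commuting with `t_0`
      have hW : up g 1 (j + 1) = g 1 * up g 2 j := up_succ' _ _
      have hU : up g 2 j * g 0 = g 0 * up g 2 j := by
        refine (commute_up fun s hs hs' => ?_).symm
        exact hg.br.cm (by omega) (by omega) (by omega)
      have hUk : up g 2 j * g 0 ^ k = g 0 ^ k * up g 2 j := by
        refine (Commute.pow_right ?_ k)
        exact hU
      have hd0 := oD_zero' (ξ := ξ) (f := f) (g := g) (r := r) (n := n) (j := j + 1) hj h1 h2
      rw [hW] at hd0
      have hd1 : 𝐨 1 (𝐃 (j + 1 + 1) k) = g 1 • 𝐃 (j + 1 + 1) k := oD_lt le_rfl (by omega) hj h1 h2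
      have hquart := hg.quart (by omega)
      have hquad := hg.quad 1 le_rfl (by omega)
      have hδ := delta hξ (g 0) (g 1) hquart hquad k
      have hcm : Commute (g 1 * g 0 * g 1) (g 0) := by
        show g 1 * g 0 * g 1 * g 0 = g 0 * (g 1 * g 0 * g 1)
        rw [← hquart]; simp only [mul_assoc]
      have hz : ∀ k, g 1 * g 0 * g 1 * g 0 ^ k * g 1 - (ξ - 1) • (g 1 * g 0 * g 1 * g 0 ^ k) =
          ξ • (g 0 ^ k * g 1 * g 0) := by
        intro k
        rw [(hcm.pow_right k).eq, mul_assoc, mul_assoc (g 1 * g 0), hquad]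
        simp only [mul_add, mul_smul_comm, mul_assoc, mul_one]
        abel
      have Fk := F k h2.le
      set N := 𝐨 0 (𝐨 1 (𝐨 0 (𝐃 (j + 1 + 1) k))) with hN
      have hNe : N = (g 0 * g 1) • (g 0 • 𝐃 (j + 1 + 1) k +
          (ξ - 1) • ((g 0 ^ k * (g 1 * up g 2 j)) • 𝐙 1 - (g 0 * (g 1 * up g 2 j)) • 𝐙 k)) +
          (ξ - 1) • ((g 0 ^ k * (g 1 * up g 2 j) * g 0) • 𝐨 1 (𝐙 1) -
            (g 0 * (g 1 * up g 2 j)) • (g 0 • 𝐨 1 (𝐙 k) +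
              (ξ - 1) • (g 0 ^ k • 𝐙 1 - g 0 • 𝐙 k))) := by
        rw [hN, hd0, map_add, map_smul, rsm, hd1, map_sub, map_smul, map_smul, map_add, rsm,
          map_sub, map_smul, map_smul, map_smul, map_smul, hd0, F1, Fk, smul_smul, smul_smul]
      have hA : 𝐨 0 (𝐨 1 (𝐨 0 (𝐨 1 (𝐃 (j + 1 + 1) k)))) = g 1 • N := by
        rw [hd1, map_smul, map_smul, map_smul]
      change 𝐨 0 (𝐨 1 (𝐨 0 (𝐨 1 (𝐃 (j + 1 + 1) k)))) = 𝐨 1 N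
      rw [hA]
      have hN1 : 𝐨 1 N = (g 0 * g 1) • (g 0 • g 1 • 𝐃 (j + 1 + 1) k +
          (ξ - 1) • ((g 0 ^ k * (g 1 * up g 2 j)) • 𝐨 1 (𝐙 1) -
            (g 0 * (g 1 * up g 2 j)) • 𝐨 1 (𝐙 k))) +
          (ξ - 1) • ((g 0 ^ k * (g 1 * up g 2 j) * g 0) • ((ξ - 1) • 𝐨 1 (𝐙 1) + ξ • 𝐙 1) -
            (g 0 * (g 1 * up g 2 j)) • (g 0 • ((ξ - 1) • 𝐨 1 (𝐙 k) + ξ • 𝐙 k) +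
              (ξ - 1) • (g 0 ^ k • 𝐨 1 (𝐙 1) - g 0 • 𝐨 1 (𝐙 k)))) := by
        rw [hNe]
        simp only [map_add, map_sub, map_smul, rsm, hd1, q]
      rw [hN1, hNe]
      generalize 𝐨 1 (𝐙 1) = v1
      generalize 𝐨 1 (𝐙 k) = vk
      generalize 𝐙 1 = w1
      generalize 𝐙 k = wk
      generalize 𝐃 (j + 1 + 1) k = v
      have cU : ∀ x : B, x * (g 1 * up g 2 j) * g 0 = x * g 1 * g 0 * up g 2 j := by
        intro x; simp only [mul_assoc, hU]
      have cUk : ∀ x : B, x * (g 1 * up g 2 j) * g 0 ^ k = x * g 1 * g 0 ^ k * up g 2 j := by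
        intro x; simp only [mul_assoc, hUk]
      generalize hh : up g 2 j = U at *
      have E1 : (g 1 * g 0 * g 1 * g 0) • v = (g 0 * g 1 * g 0 * g 1) • v := by rw [hquart]
      have E2 := congrArg (fun b : B => (ξ - 1) • (b * U) • w1) (hz k)
      have E3 := congrArg (fun b : B => (ξ - 1) • (b * U) • wk) (hz 1)
      have E4 := congrArg (fun b : B => (ξ - 1) • (b * U) • v1) hδ
      have E5 := congrArg (fun b : B => (ξ - 1) • (b * U) • vk) hquart
      simp only [pow_one] at E3
      generalize ξ - 1 = c at *
      simp only [smul_add, smul_sub, smul_comm (_ : B) (_ : R), smul_smul, cU, cUk, sub_mul,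
        sub_smul, smul_mul_assoc, smul_assoc] at E2 E3 E4 E5 ⊢
      simp only [← mul_assoc] at E1 E2 E3 E4 E5 ⊢
      linear_combination (norm := skip) E1 + E2 - E3 - E4 + E5
      abel

lemma aeval_op {p : R[X]} {v : Xv r n →₀ B} (h : 𝐨 0 v = g 0 • v) :
    aeval (𝐨 0) p v = aeval (g 0) p • v := by
  induction p using Polynomial.induction_on' with
  | add p q hp hq => simp only [map_add, LinearMap.add_apply, add_smul, hp, hq]
  | monomial k a =>
    rw [aeval_monomial, aeval_monomial]
    have : ∀ k, (𝐨 0 ^ k) v = g 0 ^ k • v := by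
      intro k
      induction k with
      | zero => simp
      | succ k ih => rw [pow_succ', Module.End.mul_apply, ih, map_smul, h, smul_smul, pow_succ]
    rw [Module.End.mul_apply, this, ← Algebra.smul_def, Module.algebraMap_end_apply, smul_assoc]

lemma op_cyc (hr : 1 ≤ r) (hf : f.Monic) (hd : f.natDegree = r) (hg : HRel ξ f n g) :
    aeval (𝐨 0) f = 0 := by
  have hpow : ∀ k ≤ r, (𝐨 0 ^ k) (𝐙 0) = 𝐙 k := by
    intro k
    induction k with
    | zero => simp
    | succ k ih => intro hk; rw [pow_succ', Module.End.mul_apply, ih (by omega), oZ (by omega)]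
  have h0 : aeval (𝐨 0) f (𝐙 0) = 0 := by
    rw [aeval_eq_sum_r hf hd, LinearMap.add_apply, hpow r le_rfl, Z_r hr, LinearMap.sum_apply,
      ← sub_eq_add_neg, ← Finset.sum_sub_distrib]
    refine Finset.sum_eq_zero fun q hq => ?_
    rw [LinearMap.smul_apply, hpow q (Finset.mem_range.1 hq).le, sub_self]
  have hZ : ∀ k ≤ r, aeval (𝐨 0) f (𝐙 k) = 0 := by
    intro k hk
    rw [← hpow k hk, ← Module.End.mul_apply]
    have : Commute (aeval (𝐨 0) f) (𝐨 0 ^ k) := by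
      have := (Commute.all f (X ^ k : R[X])).map (aeval (𝐨 0))
      simpa using this
    rw [this.eq, Module.End.mul_apply, h0, map_zero]
  refine end_ext (fun j hj => ?_) (fun j hj k h1 h2 => ?_)
  · rw [LinearMap.zero_apply]
    rcases j with _ | j
    · rw [← Z_zero (f := f)]; exact h0
    · rw [aeval_op (oE_zero hj), hg.cyc (by omega), zero_smul]
  · rw [LinearMap.zero_apply]
    rcases j with _ | j
    · rw [← Z_pos (f := f) h1 h2]; exact hZ k h2.le
    · have h3 : ∀ q, 1 ≤ q → q ≤ k → 𝐨 0 (∑ i ∈ Finset.Ico 1 q,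
          (g 0 ^ (k - i) * up g 1 j) • 𝐙 i) =
          g 0 • (∑ i ∈ Finset.Ico 1 q, (g 0 ^ (k - i) * up g 1 j) • 𝐙 i) +
          (g 0 ^ (k - q + 1) * up g 1 j) • 𝐙 q - (g 0 ^ k * up g 1 j) • 𝐙 1 := by
        intro q hq
        induction q, hq using Nat.le_induction with
        | base => intro hk; simp [Nat.sub_add_cancel hk]
        | succ q hq ih =>
          intro hk
          rw [Finset.sum_Ico_succ_top hq, map_add, ih (by omega), map_smul, oZ (by omega),
            smul_add]
          have e : k - q = k - (q + 1) + 1 := by omega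
          rw [← e, smul_smul, ← mul_assoc, ← pow_succ']
          abel
      have h4 := h3 k h1 le_rfl
      set S := ∑ i ∈ Finset.Ico 1 k, (g 0 ^ (k - i) * up g 1 j) • 𝐙 i with hS
      have h5 : 𝐨 0 (𝐃 (j + 1) k + (ξ - 1) • S) = g 0 • (𝐃 (j + 1) k + (ξ - 1) • S) := by
        rw [map_add, rsm, h4, oD_zero' hj h1 h2]
        simp only [smul_add, smul_sub, smul_comm (_ : B) (_ : R), Nat.sub_self, zero_add, pow_one]
        abel
      have h6 := aeval_op (p := f) h5
      rw [hg.cyc (by omega), zero_smul, map_add, LinearMap.map_smul_of_tower] at h6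
      have h7 : aeval (𝐨 0) f S = 0 := by
        rw [hS, map_sum]
        refine Finset.sum_eq_zero fun i hi => ?_
        rw [Finset.mem_Ico] at hi
        rw [map_smul, hZ i (by omega), smul_zero]
      rwa [h7, smul_zero, add_zero] at h6

/-- The table defines operators satisfying the relations of the Hecke algebra of rank `n + 1`. -/
lemma HRel_op (hξ : IsUnit ξ) (hr : 1 ≤ r) (hf : f.Monic) (hd : f.natDegree = r)
    (hg : HRel ξ f n g) : HRel ξ f (n + 1) 𝐨 where
  cyc _ := op_cyc hr hf hd hg
  quart h := op_quart h hξ hr hf hd hg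
  quad i h1 h2 := op_quad i h1 h2 hg
  comm i j h1 h2 := by
    rcases Nat.eq_zero_or_pos i with rfl | h
    · exact op_comm_zero j (by omega) h2 hr hg
    · exact op_comm_pos i j h h1 h2 hg
  braid i h1 h2 := op_braid i h1 h2 hg

lemma aeval_mop {A : Type*} [Ring A] [Algebra R A] (p : R[X]) (x : A) :
    aeval (MulOpposite.op x) p = MulOpposite.op (aeval x p) := by
  rw [aeval_eq_sum_range, aeval_eq_sum_range, ← MulOpposite.coe_opLinearEquiv (R := R)]
  rw [map_sum]
  simp

lemma HRel.mop {t : ℕ → B} (h : HRel ξ f n t) : HRel ξ f n (fun i => MulOpposite.op (t i)) where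
  cyc h0 := by rw [aeval_mop, h.cyc h0]; rfl
  quart h1 := by
    have := h.quart h1
    simp only [← MulOpposite.op_mul]
    simp only [mul_assoc] at this ⊢
    rw [this]
  quad i h1 h2 := by
    rw [← MulOpposite.op_mul, h.quad i h1 h2]; simp
  comm i j h1 h2 := by
    rw [← MulOpposite.op_mul, ← h.comm i j h1 h2]; rfl
  braid i h1 h2 := by
    have := h.braid i h1 h2
    simp only [← MulOpposite.op_mul]
    simp only [mul_assoc] at this ⊢
    rw [this]

end TowerRel
end HC

/-! ### The tower `H_n → H_{n+1}` -/

namespace HC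
open Polynomial

section Tower2

/-- The standing hypotheses on the parameters. -/
class Good {R : Type} [CommRing R] {r : ℕ} (ξ : R) (Q : Fin r → R) : Prop where
  nt : Nontrivial R
  hr : 1 ≤ r
  hξ : IsUnit ξ
  hQ : ∀ i, IsUnit (Q i)

variable {R : Type} [CommRing R] {r : ℕ} {ξ : R} {Q : Fin r → R} {n : ℕ}

lemma HRel.mono {B : Type*} [Ring B] [Algebra R B] {f : R[X]} {t : ℕ → B} {m : ℕ}
    (h : HRel ξ f n t) (hm : m ≤ n) : HRel ξ f m t where
  cyc h0 := h.cyc (by omega)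
  quart h0 := h.quart (by omega)
  quad i h1 h2 := h.quad i h1 (by omega)
  comm i j h1 h2 := h.comm i j h1 (by omega)
  braid i h1 h2 := h.braid i h1 (by omega)

/-- The embedding of `H_n` in `H_{n+1}`. -/
def iot (n : ℕ) : HA R r n ξ Q →ₐ[R] HA R r (n + 1) ξ Q :=
  liftH (HRel_tn.mono (Nat.le_succ n))

lemma iot_tn {i : ℕ} (hi : i < n) : iot n (tn R r n ξ Q i) = tn R r (n + 1) ξ Q i :=
  liftH_tn _ hi

lemma map_up {A B : Type*} [Monoid A] [Monoid B] (φ : A →* B) (t : ℕ → A) (s : ℕ → B) (a l : ℕ)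
    (h : ∀ i, a ≤ i → i < a + l → φ (t i) = s i) : φ (up t a l) = up s a l := by
  induction l with
  | zero => simp
  | succ l ih =>
    rw [up_succ, up_succ, map_mul, ih (fun i h1 h2 => h i h1 (by omega)),
      h _ (by omega) (by omega)]

lemma map_dn {A B : Type*} [Monoid A] [Monoid B] (φ : A →* B) (t : ℕ → A) (s : ℕ → B) (a l : ℕ)
    (h : ∀ i, a ≤ i → i < a + l → φ (t i) = s i) : φ (dn t a l) = dn s a l := by
  induction l with
  | zero => simp
  | succ l ih =>
    rw [dn_succ, dn_succ, map_mul, ih (fun i h1 h2 => h i h1 (by omega)),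
      h _ (by omega) (by omega)]

/-- The element of `H_{n+1}` a basis label stands for. -/
def hat (R : Type) [CommRing R] (r n : ℕ) (ξ : R) (Q : Fin r → R) : XI → HA R r (n + 1) ξ Q
  | .e j => dn (tn R r (n + 1) ξ Q) (j + 1) (n - j)
  | .d j k => dn (tn R r (n + 1) ξ Q) 1 n * tn R r (n + 1) ξ Q 0 ^ k * up (tn R r (n + 1) ξ Q) 1 j

/-- The map `∑ b_x x ↦ ∑ b_x x̂` from the abstract free module to `H_{n+1}`. -/
def back (n : ℕ) : (Xv r n →₀ HA R r n ξ Q) →ₗ[R] HA R r (n + 1) ξ Q :=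
  Finsupp.lsum R (fun x : Xv r n =>
    (LinearMap.mulRight R (hat R r n ξ Q x.1)).comp (iot n).toLinearMap)

lemma back_single (x : Xv r n) (b : HA R r n ξ Q) :
    back n (Finsupp.single x b) = iot n b * hat R r n ξ Q x.1 := by
  simp [back]

lemma back_smul (b : HA R r n ξ Q) (v : Xv r n →₀ HA R r n ξ Q) :
    back n (b • v) = iot n b * back n v := by
  induction v using Finsupp.induction_linear with
  | zero => simp
  | add v w hv hw => rw [smul_add, map_add, hv, hw, map_add, mul_add]
  | single x a => rw [Finsupp.smul_single, back_single, back_single, smul_eq_mul, map_mul, mul_assoc]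

local notation "𝐭" => tn R r (n + 1) ξ Q
local notation "𝐠" => tn R r n ξ Q
local notation "𝐄" => Ev (HA R r n ξ Q) r n
local notation "𝐃" => Dv (HA R r n ξ Q) r n
local notation "𝐙" => Zv (HA R r n ξ Q) (fp Q) r n
local notation "𝐨" => opn ξ (fp Q) r n (tn R r n ξ Q)

lemma back_E {j : ℕ} (h : j ≤ n) : back n (𝐄 j) = dn 𝐭 (j + 1) (n - j) := by
  rw [Ev_eq h, back_single, map_one, one_mul]; rfl

lemma back_D {j k : ℕ} (h : j ≤ n) (h1 : 1 ≤ k) (h2 : k < r) :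
    back n (𝐃 j k) = dn 𝐭 1 n * 𝐭 0 ^ k * up 𝐭 1 j := by
  rw [Dv_eq h h1 h2, back_single, map_one, one_mul]; rfl

lemma back_Z [hG : Good ξ Q] {k : ℕ} (hk : k ≤ r) : back n (𝐙 k) = dn 𝐭 1 n * 𝐭 0 ^ k := by
  have main : ∀ q < r, back n (𝐙 q) = dn 𝐭 1 n * 𝐭 0 ^ q := by
    intro q hq
    rcases Nat.eq_zero_or_pos q with rfl | h
    · rw [Z_zero, back_E (Nat.zero_le n)]; simp
    · rw [Z_pos h hq, back_D (Nat.zero_le n) h hq]; simp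
  rcases Nat.lt_or_ge k r with h | h
  · exact main k h
  · have hkr : k = r := le_antisymm hk h
    have := hG.nt
    have hc := (HRel_tn (R := R) (r := r) (n := n + 1) (ξ := ξ) (Q := Q)).cyc (by omega)
    rw [aeval_eq_sum_r (fp_monic Q) (fp_natDegree Q)] at hc
    rw [hkr, Z_r hG.hr, map_neg, map_sum, eq_neg_of_add_eq_zero_right hc, mul_neg, Finset.mul_sum]
    congr 1
    refine Finset.sum_congr rfl fun q hq => ?_
    rw [map_smul, main q (Finset.mem_range.1 hq), mul_smul_comm]

lemma dn_mul_shift {i : ℕ} (h1 : 1 ≤ i) (h2 : i < n) : dn 𝐭 1 n * 𝐭 (i + 1) = 𝐭 i * dn 𝐭 1 n :=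
  (HRel_tn.br.mul_dn (n := n + 1) le_rfl (by omega) h1 (by omega)).symm

lemma dn_mul_up {j k : ℕ} (hj : j + 1 ≤ n) :
    dn 𝐭 1 n * 𝐭 0 ^ k * up 𝐭 2 j = up 𝐭 1 j * (dn 𝐭 1 n * 𝐭 0 ^ k) := by
  induction j with
  | zero => simp
  | succ j ih =>
    have c : 𝐭 0 ^ k * 𝐭 (2 + j) = 𝐭 (2 + j) * 𝐭 0 ^ k :=
      ((HRel_tn.br.cm (n := n + 1) (i := 0) (j := 2 + j) (by omega) (by omega)
        (by omega)).pow_left k)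
    have e : 2 + j = 1 + j + 1 := by omega
    have c2 := dn_mul_shift (R := R) (r := r) (ξ := ξ) (Q := Q) (n := n) (i := 1 + j)
      (by omega) (by omega)
    rw [up_succ, ← mul_assoc, ih (by omega), up_succ, mul_assoc, mul_assoc, c, ← mul_assoc _ _ (𝐭 0 ^ k),
      e, c2]
    simp only [mul_assoc]

/-- The map `back` intertwines the tabulated operators with right multiplication by the
generators. -/
lemma back_op [hG : Good ξ Q] {i : ℕ} (hi : i < n + 1) (v : Xv r n →₀ HA R r n ξ Q) :
    back n (𝐨 i v) = back n v * 𝐭 i := by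
  have hbr := (HRel_tn (R := R) (r := r) (n := n + 1) (ξ := ξ) (Q := Q)).br
  have hrel := (HRel_tn (R := R) (r := r) (n := n + 1) (ξ := ξ) (Q := Q))
  have hE : ∀ j ≤ n, back n (𝐨 i (𝐄 j)) = back n (𝐄 j) * 𝐭 i := by
    intro j hj
    rcases Nat.eq_zero_or_pos i with rfl | hi0
    · rcases j with _ | j
      · rw [← Z_zero (f := fp Q), oZ hG.hr, back_Z hG.hr, back_Z (by omega)]; simp
      · rw [oE_zero hj, back_smul, iot_tn (by omega), back_E hj]
        refine commute_dn fun s hs hs' => ?_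
        exact hbr.cm (by omega) (by omega) (by omega)
    · obtain ⟨i, rfl⟩ : ∃ i', i = i' + 1 := ⟨i - 1, by omega⟩
      obtain h | rfl | rfl | h : i + 1 < j ∨ j = i + 1 ∨ i = j ∨ j < i := by omega
      · rw [oE_lt hi0 h hj, back_smul, iot_tn (by omega), back_E hj]
        refine commute_dn fun s hs hs' => ?_
        exact hbr.cm (by omega) (by omega) (by omega)
      · rw [oE_eq hj, back_E hj, back_E (by omega)]
        have e : n - i = (n - (i + 1)) + 1 := by omega
        rw [e, dn_succ']
      · rw [oE_succ hj, map_add, map_smul, map_smul, back_E hj, back_E (by omega)]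
        have e : n - i = (n - (i + 1)) + 1 := by omega
        rw [e, dn_succ', mul_assoc, hrel.quad _ hi0 hi, mul_add, mul_smul_comm, mul_smul_comm,
          mul_one]
        abel
      · rw [oE_gt (by omega) hj, back_smul, iot_tn (by omega), back_E hj]
        exact hbr.mul_dn (by omega) (by omega) (by omega) (by omega)
  have hD : ∀ j ≤ n, ∀ k, 1 ≤ k → k < r → back n (𝐨 i (𝐃 j k)) = back n (𝐃 j k) * 𝐭 i := by
    intro j hj k h1 h2
    rcases Nat.eq_zero_or_pos i with rfl | hi0
    · rcases j with _ | j
      · rw [← Z_pos (f := fp Q) h1 h2, oZ h2, back_Z h2, back_Z h2.le, mul_assoc, pow_succ]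
      · rw [oD_zero' hj h1 h2, map_add, LinearMap.map_smul (back n) (ξ - 1), map_sub, back_smul,
          back_smul, back_smul,
          back_D hj h1 h2, back_Z (by omega), back_Z h2.le, map_mul, map_mul, map_pow,
          iot_tn (by omega)]
        have hup : iot n (up 𝐠 1 j) = up 𝐭 1 j :=
          map_up (iot n).toMonoidHom _ _ _ _ fun i h1 h2 => iot_tn (by omega)
        rw [hup]
        obtain ⟨m, rfl⟩ : ∃ m, n = m + 1 := ⟨n - 1, by omega⟩
        have hδ := delta hG.hξ _ _ (hrel.quart (by omega)) (hrel.quad 1 le_rfl (by omega)) k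
        have c1 : up (tn R r (m + 1 + 1) ξ Q) 2 j * tn R r (m + 1 + 1) ξ Q 0 =
            tn R r (m + 1 + 1) ξ Q 0 * up (tn R r (m + 1 + 1) ξ Q) 2 j := by
          refine (commute_up fun s hs hs' => ?_).symm
          exact hbr.cm (by omega) (by omega) (by omega)
        have c2 : tn R r (m + 1 + 1) ξ Q 0 * dn (tn R r (m + 1 + 1) ξ Q) 2 m =
            dn (tn R r (m + 1 + 1) ξ Q) 2 m * tn R r (m + 1 + 1) ξ Q 0 := by
          refine (commute_dn fun s hs hs' => ?_)
          exact hbr.cm (by omega) (by omega) (by omega)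
        have d1 := dn_mul_up (R := R) (r := r) (ξ := ξ) (Q := Q) (n := m + 1) (k := 1) hj
        have d2 := dn_mul_up (R := R) (r := r) (ξ := ξ) (Q := Q) (n := m + 1) (k := k) hj
        rw [mul_assoc (_ ^ k), ← d1, mul_assoc (tn R r (m + 1 + 1) ξ Q 0) (up _ 1 j), ← d2,
          up_succ', mul_assoc _ _ (tn R r (m + 1 + 1) ξ Q 0),
          mul_assoc _ _ (tn R r (m + 1 + 1) ξ Q 0), c1]
        have hδ2 := congrArg (fun b => dn (tn R r (m + 1 + 1) ξ Q) 2 m * b *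
          up (tn R r (m + 1 + 1) ξ Q) 2 j) hδ
        have c3 : ∀ x, dn (tn R r (m + 1 + 1) ξ Q) 2 m * (tn R r (m + 1 + 1) ξ Q 0 * x) =
            tn R r (m + 1 + 1) ξ Q 0 * (dn (tn R r (m + 1 + 1) ξ Q) 2 m * x) := by
          intro x; rw [← mul_assoc, ← c2, mul_assoc]
        have c3k : ∀ x, dn (tn R r (m + 1 + 1) ξ Q) 2 m * (tn R r (m + 1 + 1) ξ Q 0 ^ k * x) =
            tn R r (m + 1 + 1) ξ Q 0 ^ k * (dn (tn R r (m + 1 + 1) ξ Q) 2 m * x) := by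
          intro x
          have : Commute (tn R r (m + 1 + 1) ξ Q 0 ^ k) (dn (tn R r (m + 1 + 1) ξ Q) 2 m) :=
            Commute.pow_left c2 k
          rw [← mul_assoc, ← this.eq, mul_assoc]
        simp only [mul_sub, sub_mul, mul_smul_comm, smul_mul_assoc, smul_sub, mul_assoc,
          c3, c3k] at hδ2
        simp only [dn_succ', mul_assoc, pow_one, smul_sub, Nat.reduceAdd]
        rw [sub_eq_iff_eq_add] at hδ2
        rw [hδ2]
        abel
    · obtain ⟨i, rfl⟩ : ∃ i', i = i' + 1 := ⟨i - 1, by omega⟩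
      have c : ∀ s, 2 ≤ s → s ≤ n → 𝐭 0 ^ k * 𝐭 s = 𝐭 s * 𝐭 0 ^ k := fun s hs hs' =>
        ((hbr.cm (i := 0) (j := s) (by omega) (by omega) (by omega)).pow_left k)
      obtain h | rfl | rfl | h : i + 1 < j ∨ j = i + 1 ∨ i = j ∨ j < i := by omega
      · rw [oD_lt hi0 h hj h1 h2, back_smul, iot_tn (by omega), back_D hj h1 h2]
        rw [mul_assoc _ _ (𝐭 (i + 1)), hbr.up_mul le_rfl (by omega) hi0 (by omega),
          mul_assoc (dn 𝐭 1 n) (𝐭 0 ^ k) (𝐭 (i + 1 + 1) * _), ← mul_assoc (𝐭 0 ^ k),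
          c _ (by omega) (by omega), mul_assoc (𝐭 (i + 1 + 1)),
          ← mul_assoc (dn 𝐭 1 n) (𝐭 (i + 1 + 1)), dn_mul_shift hi0 (by omega)]
        simp only [mul_assoc]
      · rw [oD_eq hj h1 h2, map_add, map_smul, map_smul, back_D hj h1 h2, back_D (by omega) h1 h2,
          up_succ, add_comm 1 i, mul_assoc _ _ (𝐭 (i + 1)), mul_assoc _ _ (𝐭 (i + 1)),
          hrel.quad _ hi0 hi]
        simp only [mul_add, mul_smul_comm, mul_one, mul_assoc]
        abel
      · rw [oD_succ hj h1 h2, back_D hj h1 h2, back_D (by omega) h1 h2, up_succ, add_comm 1 i,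
          ← mul_assoc]
      · rw [oD_gt (by omega) hj h1 h2, back_smul, iot_tn (by omega), back_D hj h1 h2]
        have c2 : up 𝐭 1 j * 𝐭 (i + 1) = 𝐭 (i + 1) * up 𝐭 1 j := by
          refine (commute_up fun s hs hs' => ?_).symm
          exact hbr.cm (by omega) (by omega) (by omega)
        rw [mul_assoc _ _ (𝐭 (i + 1)), c2, mul_assoc (dn 𝐭 1 n) (𝐭 0 ^ k) (𝐭 (i + 1) * _),
          ← mul_assoc (𝐭 0 ^ k), c _ (by omega) (by omega), mul_assoc (𝐭 (i + 1)),
          ← mul_assoc (dn 𝐭 1 n) (𝐭 (i + 1)), dn_mul_shift (by omega) (by omega)]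
        simp only [mul_assoc]
  induction v using Finsupp.induction_linear with
  | zero => simp
  | add v w hv hw => rw [map_add, map_add, hv, hw, map_add, add_mul]
  | single x b =>
    have : Finsupp.single x b = b • Finsupp.single x (1 : HA R r n ξ Q) := by simp
    rw [this, map_smul, back_smul, back_smul, mul_assoc]
    congr 1
    rcases x with ⟨j | ⟨j, k⟩, hx⟩
    · rw [← Ev_eq hx, hE j hx]
    · rw [← Dv_eq hx.1 hx.2.1 hx.2.2, hD _ hx.1 _ hx.2.1 hx.2.2]

end Tower2
end HC

/-! ### Coordinates and the relative trace -/

namespace HC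
open Polynomial

section Coeffs
variable {R : Type} [CommRing R] {B : Type*} [Ring B] [Algebra R B]
variable {ξ : R} {f : R[X]} {r n : ℕ} {g : ℕ → B}

/-- The valid label `e j`. -/
def xe {r n j : ℕ} (h : j ≤ n) : Xv r n := ⟨.e j, h⟩

/-- The valid label `d j k`. -/
def xd {r n j k : ℕ} (h : j ≤ n) (h1 : 1 ≤ k) (h2 : k < r) : Xv r n := ⟨.d j k, h, h1, h2⟩

@[simp] lemma xe_val {j : ℕ} (h : j ≤ n) : (xe h : Xv r n).1 = .e j := rfl
@[simp] lemma xd_val {j k : ℕ} (h : j ≤ n) (h1 : 1 ≤ k) (h2 : k < r) :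
    (xd h h1 h2 : Xv r n).1 = .d j k := rfl

lemma sing_apply (x y : Xv r n) (b : B) :
    Finsupp.single x b y = if x.1 = y.1 then b else 0 := by
  rw [Finsupp.single_apply]; simp only [Subtype.ext_iff]

lemma Ev_apply (j : ℕ) (x : Xv r n) : Ev B r n j x = if x.1 = .e j then 1 else 0 := by
  rcases x with ⟨x, hx⟩
  by_cases h : j ≤ n
  · rw [Ev_eq h, sing_apply]
    simp only [eq_comm]
  · have h' : ¬ (XI.e j).valid r n := h
    rw [Ev, dif_neg h', if_neg]
    · rfl
    · rintro rfl; exact h' hx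

lemma Dv_apply (j k : ℕ) (x : Xv r n) : Dv B r n j k x = if x.1 = .d j k then 1 else 0 := by
  rcases x with ⟨x, hx⟩
  by_cases h : (XI.d j k).valid r n
  · rw [Dv_eq h.1 h.2.1 h.2.2, sing_apply]
    simp only [eq_comm]
  · rw [Dv, dif_neg h, if_neg]
    · rfl
    · rintro rfl; exact h hx

lemma opn_single (i : ℕ) (x : Xv r n) (b : B) (y : Xv r n) :
    opn ξ f r n g i (Finsupp.single x b) y = b * tab ξ f r n g i x.1 y := by
  rw [opn, Finsupp.linearCombination_single, Finsupp.smul_apply, smul_eq_mul]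

lemma Zv_apply_e {k j : ℕ} (hk : 1 ≤ k) (hj : j ≤ n) (hjk : 1 ≤ j ∨ k < r) :
    Zv B f r n k (xe (hj)) = 0 := by
  rw [Zv, if_neg (by omega)]
  split_ifs with h
  · simp [Dv_apply]
  · rw [Finsupp.neg_apply, Finsupp.finsetSum_apply, Finset.sum_eq_zero, neg_zero]
    intro q _
    rw [Finsupp.smul_apply]
    split_ifs
    · rw [Ev_apply, if_neg, smul_zero]
      intro h; simp at h; omega
    · simp [Dv_apply]

lemma Zv_r_e (hr : 1 ≤ r) : Zv B f r n r (xe (Nat.zero_le n)) = - f.coeff 0 • (1 : B) := by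
  rw [Zv, if_neg (by omega), if_neg (by omega), Finsupp.neg_apply, Finsupp.finsetSum_apply,
    Finset.sum_eq_single 0]
  · simp [Ev_apply]
  · intro q _ hq
    simp [hq, Dv_apply]
  · intro h; simp at h; omega

lemma Zv_r_d {k : ℕ} (h1 : 1 ≤ k) (h2 : k < r) :
    Zv B f r n r (xd (j := 0) (k := k) (Nat.zero_le n) (h1) (h2)) = - f.coeff k • (1 : B) := by
  rw [Zv, if_neg (by omega), if_neg (by omega), Finsupp.neg_apply, Finsupp.finsetSum_apply,
    Finset.sum_eq_single k]
  · rw [if_neg (by omega)]; simp [Dv_apply]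
  · intro q _ hq
    rw [Finsupp.smul_apply]
    split_ifs
    · simp [Ev_apply]
    · rw [Dv_apply, if_neg, smul_zero]
      simp; omega
  · intro h; simp at h; omega

lemma op_apply_top {i : ℕ} (hi : i < n) (v : Xv r n →₀ B) :
    opn ξ f r n g i v (xe (le_refl n)) = v (xe (le_refl n)) * g i := by
  induction v using Finsupp.induction_linear with
  | zero => simp
  | add v w hv hw => rw [map_add, Finsupp.add_apply, hv, hw, Finsupp.add_apply, add_mul]
  | single x b =>
    rw [opn_single]
    rcases x with ⟨j | ⟨j, k⟩, hx⟩
    · have hx' : j ≤ n := hx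
      simp only [tab]
      split_ifs with h1 h2 h3 h4 h5
      · rw [Zv_apply_e le_rfl _ (by omega), sing_apply, if_neg]
        · simp
        · simp; omega
      · subst h1
        rw [Finsupp.smul_apply, Ev_apply, sing_apply]
        by_cases h : j = n <;> simp [h, eq_comm]
      · rw [Finsupp.smul_apply, Ev_apply, sing_apply]
        by_cases h : j = n <;> simp [h, eq_comm]
      · rw [Ev_apply, sing_apply, if_neg, if_neg] <;> simp <;> omega
      · rw [Finsupp.add_apply, Finsupp.smul_apply, Finsupp.smul_apply, Ev_apply, Ev_apply,
          sing_apply, if_neg, if_neg, if_neg] <;> simp <;> omega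
      · rw [Finsupp.smul_apply, Ev_apply, sing_apply, if_neg, if_neg] <;> simp <;> omega
    · rw [sing_apply, if_neg (by simp)]
      simp only [tab]
      split_ifs with h1 h2 h3 h4 h5
      · rw [Zv_apply_e (by omega) _ (by omega)]; simp
      all_goals simp [Dv_apply]

lemma op_apply_e {j : ℕ} (hj : j + 1 ≤ n) (v : Xv r n →₀ B) :
    opn ξ f r n g (j + 1) v (xe (hj)) = ξ • v (xe (Nat.le_of_succ_le hj)) := by
  induction v using Finsupp.induction_linear with
  | zero => simp
  | add v w hv hw => rw [map_add, Finsupp.add_apply, hv, hw, Finsupp.add_apply, smul_add]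
  | single x b =>
    rw [opn_single]
    rcases x with ⟨l | ⟨l, k⟩, hx⟩
    · simp only [tab, sing_apply, xe_val, xd_val, XI.e.injEq]
      obtain h | h | h | h : j + 1 < l ∨ j + 1 = l ∨ j = l ∨ l < j := by omega
      · simp (disch := omega) only [if_neg, if_pos, Finsupp.smul_apply, Ev_apply, xe_val, XI.e.injEq, smul_zero, mul_zero]
      · subst h
        simp (disch := omega) only [if_neg, Ev_apply, if_true, XI.e.injEq]; simp
      · subst h
        simp (disch := omega) only [if_neg, Ev_apply, if_true, XI.e.injEq, Finsupp.add_apply,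
          Finsupp.smul_apply]; simp
      · simp (disch := omega) only [if_neg, if_pos, Finsupp.smul_apply, Ev_apply, xe_val, XI.e.injEq, smul_zero, mul_zero]
    · rw [sing_apply, if_neg (by simp)]
      simp only [tab]
      rw [if_neg (by omega)]
      split_ifs with h1 h2 h3 h4 h5
      all_goals simp [Dv_apply]

lemma op_apply_e0 (hr : 2 ≤ r) (v : Xv r n →₀ B) :
    opn ξ f r n g 0 v (xe (Nat.zero_le n)) =
      - f.coeff 0 • v (xd (j := 0) (k := (r - 1)) (Nat.zero_le n) (by omega) (by omega)) := by
  induction v using Finsupp.induction_linear with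
  | zero => simp
  | add v w hv hw => rw [map_add, Finsupp.add_apply, hv, hw, Finsupp.add_apply, smul_add]
  | single x b =>
    rw [opn_single]
    rcases x with ⟨l | ⟨l, k⟩, hx⟩
    · rw [sing_apply, if_neg (by simp)]
      simp only [tab, if_true]
      split_ifs with h
      · rw [Zv_apply_e le_rfl _ (by omega)]; simp
      · rw [Finsupp.smul_apply, Ev_apply, if_neg] <;> simp; omega
    · simp only [tab, if_true, sing_apply, xe_val, xd_val, XI.d.injEq]
      split_ifs with h1 h2 h3
      · have : k + 1 = r := by omega
        rw [this, Zv_r_e (by omega)]; simp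
      · have := hx.2.2
        rw [Zv_apply_e (by omega) _ (by omega)]; simp
      · omega
      · simp [Dv_apply]

lemma op_apply_d {j k : ℕ} (hj : j + 1 ≤ n) (h1 : 1 ≤ k) (h2 : k < r) (v : Xv r n →₀ B) :
    opn ξ f r n g (j + 1) v (xd (j := j) (k := k) (Nat.le_of_succ_le hj) (h1) (h2)) =
      ξ • v (xd (j := (j + 1)) (k := k) (hj) (h1) (h2)) := by
  induction v using Finsupp.induction_linear with
  | zero => simp
  | add v w hv hw => rw [map_add, Finsupp.add_apply, hv, hw, Finsupp.add_apply, smul_add]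
  | single x b =>
    rw [opn_single]
    rcases x with ⟨l | ⟨l, k'⟩, hx⟩
    · rw [sing_apply, if_neg (by simp)]
      simp only [tab]
      rw [if_neg (by omega)]
      split_ifs <;> simp [Ev_apply]
    · simp only [tab, sing_apply, xe_val, xd_val, XI.d.injEq]
      obtain h | h | h | h : j + 1 < l ∨ l = j + 1 ∨ l = j ∨ l < j := by omega
      · simp (disch := omega) only [if_neg, if_pos, Finsupp.smul_apply, Dv_apply, xd_val, XI.d.injEq, smul_zero, mul_zero]
      · subst h
        simp (disch := omega) only [if_neg, if_pos, Finsupp.smul_apply, Finsupp.add_apply, Dv_apply,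
          XI.d.injEq, smul_zero, mul_zero]
        by_cases hk : k' = k
        · simp [hk, Dv_apply]
        · have hk' : ¬ k = k' := fun h => hk h.symm
          simp [hk, hk', Dv_apply]
      · subst h
        simp (disch := omega) only [if_neg, if_pos, if_true, Finsupp.smul_apply, Finsupp.add_apply,
          Dv_apply, xd_val, XI.d.injEq, smul_zero, mul_zero]
      · simp (disch := omega) only [if_neg, if_pos, Finsupp.smul_apply, Dv_apply, xd_val, XI.d.injEq, smul_zero, mul_zero]

lemma op_apply_d0 {k : ℕ} (h1 : 1 ≤ k) (h2 : k + 1 < r) (v : Xv r n →₀ B) :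
    opn ξ f r n g 0 v (xd (j := 0) (k := (k + 1)) (Nat.zero_le n) (by omega) (h2)) =
      v (xd (j := 0) (k := k) (Nat.zero_le n) (h1) (by omega))
      - f.coeff (k + 1) • v (xd (j := 0) (k := (r - 1)) (Nat.zero_le n) (by omega) (by omega))
      - (ξ - 1) • ∑ j : Fin n, v (xd (j := (j + 1)) (k := (k + 1)) (j.2) (by omega) (h2)) * (g 0 * up g 1 j) := by
  induction v using Finsupp.induction_linear with
  | zero => simp
  | add v w hv hw =>
    rw [map_add, Finsupp.add_apply, hv, hw]
    simp only [Finsupp.add_apply, smul_add, add_mul, Finset.sum_add_distrib]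
    abel
  | single x b =>
    rw [opn_single]
    rcases x with ⟨l | ⟨l, k'⟩, hx⟩
    · simp only [tab, sing_apply, xe_val, xd_val, reduceCtorEq, if_false, if_true]
      split_ifs with h
      · rw [Z_pos le_rfl (by omega), Dv_apply, if_neg] <;> simp; omega
      · simp [Ev_apply]
    · obtain ⟨hl, hk1, hk2⟩ := hx
      simp only [tab, sing_apply, xe_val, xd_val, XI.d.injEq, if_true]
      rcases l with _ | l
      · rw [if_pos rfl]
        rw [Finset.sum_eq_zero (by intro j _; rw [if_neg (by omega), zero_mul])]
        obtain h | h : k' + 1 < r ∨ k' + 1 = r := by omega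
        · rw [Z_pos (by omega) h, Dv_apply]
          simp only [XI.d.injEq]
          rw [if_neg (c := _ ∧ k' = r - 1) (by omega)]
          by_cases hk : k' = k
          · simp [hk]
          · have hk' : ¬ k = k' := fun h => hk h.symm
            simp [hk, hk']
        · rw [if_neg (c := _ ∧ k' = k) (by omega), if_pos (c := _ ∧ k' = r - 1) (by omega), h,
            Zv_r_d (by omega) h2]
          simp
      · rw [if_neg (by omega), if_neg (c := _ ∧ k' = k) (by omega),
          if_neg (c := _ ∧ k' = r - 1) (by omega), Nat.add_sub_cancel]
        rw [Finset.sum_eq_single ⟨l, hl⟩]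
        · simp only [Finsupp.add_apply, Finsupp.sub_apply, Finsupp.smul_apply, Dv_apply,
            xd_val, XI.d.injEq]
          by_cases hk : k' = k + 1
          · subst hk
            rw [if_neg (by omega), if_neg (by omega)]
            simp
          · rw [if_neg (by omega), if_neg (by omega), if_neg (by omega), if_neg (by omega)]
            simp
        · intro j _ hj
          rw [if_neg, zero_mul]
          rintro ⟨h, -⟩
          exact hj (Fin.ext (by simp; omega))
        · simp

end Coeffs

section Ev

variable {R : Type} [CommRing R] {r : ℕ} {ξ : R} {Q : Fin r → R} {n : ℕ}

local notation "𝐭" => tn R r (n + 1) ξ Q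
local notation "𝐠" => tn R r n ξ Q
local notation "𝐄" => Ev (HA R r n ξ Q) r n
local notation "𝐃" => Dv (HA R r n ξ Q) r n
local notation "𝐙" => Zv (HA R r n ξ Q) (fp Q) r n
local notation "𝐨" => opn ξ (fp Q) r n (tn R r n ξ Q)

/-- The right action of `H_{n+1}` on the free left `H_n`-module on the labels, as a
homomorphism to the opposite of the endomorphism ring. -/
def rho [hG : Good ξ Q] (n : ℕ) : HA R r (n + 1) ξ Q →ₐ[R]
    (Module.End (HA R r n ξ Q) (Xv r n →₀ HA R r n ξ Q))ᵐᵒᵖ :=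
  haveI := hG.nt
  liftH (HRel_op hG.hξ hG.hr (fp_monic Q) (fp_natDegree Q) HRel_tn).mop

/-- The right action of an element of `H_{n+1}`. -/
def act [Good ξ Q] (h : HA R r (n + 1) ξ Q) :
    Module.End (HA R r n ξ Q) (Xv r n →₀ HA R r n ξ Q) := (rho n h).unop

lemma op_En {i : ℕ} (hi : i < n) : 𝐨 i (𝐄 n) = 𝐠 i • 𝐄 n := by
  rcases Nat.eq_zero_or_pos i with rfl | h
  · obtain ⟨m, rfl⟩ : ∃ m, n = m + 1 := ⟨n - 1, by omega⟩
    exact oE_zero le_rfl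
  · exact oE_lt h hi le_rfl

variable [hG : Good ξ Q]

lemma act_mul (h h' : HA R r (n + 1) ξ Q) (v) : act (h * h') v = act h' (act h v) := by
  simp [act]

lemma act_one (v) : act (1 : HA R r (n + 1) ξ Q) v = v := by simp [act]

lemma act_tn {i : ℕ} (hi : i < n + 1) : act (𝐭 i) = 𝐨 i := by
  rw [act, rho, liftH_tn _ hi]; rfl

lemma act_add (h h' : HA R r (n + 1) ξ Q) (v) : act (h + h') v = act h v + act h' v := by
  simp [act]

lemma act_smul (c : R) (h : HA R r (n + 1) ξ Q) (v) : act (c • h) v = c • act h v := by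
  simp [act]

lemma back_act (h : HA R r (n + 1) ξ Q) (v) : back n (act h v) = back n v * h := by
  let P : Submodule R (HA R r (n + 1) ξ Q) :=
    { carrier := {h | ∀ v, back n (act h v) = back n v * h}
      add_mem' := by
        intro a b ha hb v; rw [act_add, map_add, ha, hb, mul_add]
      zero_mem' := by intro v; simp [act]
      smul_mem' := by
        intro c a ha v; rw [act_smul, LinearMap.map_smul (back n), ha, mul_smul_comm] }
  exact mem_of_left P (fun v => by rw [act_one, mul_one]) (fun i hi x hx v => by
    rw [act_mul, hx, act_tn hi, back_op hi, mul_assoc]) h v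

/-- The coordinates of an element of `H_{n+1}` over `H_n`. -/
def ev (n : ℕ) : HA R r (n + 1) ξ Q →ₗ[R] (Xv r n →₀ HA R r n ξ Q) where
  toFun h := act h (Ev (HA R r n ξ Q) r n n)
  map_add' h h' := act_add h h' _
  map_smul' c h := act_smul c h _

lemma ev_mul (h h' : HA R r (n + 1) ξ Q) : ev n (h * h') = act h' (ev n h) := act_mul _ _ _

lemma ev_mul_tn (h : HA R r (n + 1) ξ Q) {i : ℕ} (hi : i < n + 1) :
    ev n (h * 𝐭 i) = 𝐨 i (ev n h) := by rw [ev_mul, act_tn hi]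

lemma ev_one : ev n (1 : HA R r (n + 1) ξ Q) = 𝐄 n := act_one _

lemma back_ev (h : HA R r (n + 1) ξ Q) : back n (ev n h) = h := by
  refine (back_act h (𝐄 n)).trans ?_
  rw [back_E le_rfl]
  simp

lemma ev_iot (b : HA R r n ξ Q) : ev n (iot n b) = b • 𝐄 n := by
  let P : Submodule R (HA R r n ξ Q) :=
    { carrier := {b | ev n (iot n b) = b • 𝐄 n}
      add_mem' := by
        intro a b ha hb
        simp only [Set.mem_ofPred_eq] at *; rw [map_add, map_add, ha, hb, add_smul]
      zero_mem' := by simp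
      smul_mem' := by
        intro c a ha
        simp only [Set.mem_ofPred_eq] at *
        rw [map_smul, LinearMap.map_smul (ev n), ha, smul_assoc] }
  refine mem_of_right P (by simp [P, ev_one]) (fun i hi x hx => ?_) b
  simp only [P, Submodule.mem_mk, AddSubmonoid.mem_mk, AddSubsemigroup.mem_mk,
    Set.mem_ofPred_eq] at *
  rw [map_mul, iot_tn hi, ev_mul_tn _ (by omega), hx, map_smul, op_En hi, mul_smul]

lemma ev_iot_mul (b : HA R r n ξ Q) (h : HA R r (n + 1) ξ Q) :
    ev n (iot n b * h) = b • ev n h := by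
  rw [ev_mul, ev_iot, map_smul]; rfl

lemma ev_dn {j : ℕ} (hj : j ≤ n) : ev n (dn 𝐭 (j + 1) (n - j)) = 𝐄 j := by
  induction hj using Nat.decreasingInduction with
  | self => simp [ev_one]
  | of_succ j hj ih =>
    have e : n - j = (n - (j + 1)) + 1 := by omega
    rw [e, dn_succ', ev_mul_tn _ (by omega), ih, oE_eq hj]

lemma ev_dn_pow {k : ℕ} (hk : k ≤ r) : ev n (dn 𝐭 1 n * 𝐭 0 ^ k) = 𝐙 k := by
  induction k with
  | zero =>
    rw [pow_zero, mul_one, Z_zero, ← ev_dn (Nat.zero_le n)]; rfl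
  | succ k ih =>
    rw [pow_succ, ← mul_assoc, ev_mul_tn _ (by omega), ih (by omega), oZ (by omega)]

lemma ev_d {j k : ℕ} (hj : j ≤ n) (h1 : 1 ≤ k) (h2 : k < r) :
    ev n (dn 𝐭 1 n * 𝐭 0 ^ k * up 𝐭 1 j) = 𝐃 j k := by
  induction j with
  | zero => rw [up_zero, mul_one, ev_dn_pow h2.le, Z_pos h1 h2]
  | succ j ih =>
    rw [up_succ, ← mul_assoc, ev_mul_tn _ (by omega), ih (by omega), add_comm 1 j,
      oD_succ (by omega) h1 h2]

lemma ev_hat (x : Xv r n) : ev n (hat R r n ξ Q x.1) = Finsupp.single x 1 := by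
  rcases x with ⟨j | ⟨j, k⟩, hx⟩
  · exact (ev_dn hx).trans (Ev_eq hx)
  · exact (ev_d hx.1 hx.2.1 hx.2.2).trans (Dv_eq hx.1 hx.2.1 hx.2.2)

/-- Together with `back_ev`: `H_{n+1}` is free over `H_n` on the elements `hat x`. -/
lemma ev_back (v : Xv r n →₀ HA R r n ξ Q) : ev n (back n v) = v := by
  induction v using Finsupp.induction_linear with
  | zero => simp
  | add v w hv hw => rw [map_add, map_add, hv, hw]
  | single x b => rw [back_single, ev_iot_mul, ev_hat]; simp

instance : Finite (Xv r n) := by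
  let F : Xv r n → Fin (n + 1) ⊕ Fin (n + 1) × Fin r := fun x => match x with
    | ⟨.e j, h⟩ => .inl ⟨j, Nat.lt_succ_of_le h⟩
    | ⟨.d j k, h⟩ => .inr (⟨j, Nat.lt_succ_of_le h.1⟩, ⟨k, h.2.2⟩)
  refine Finite.of_injective F ?_
  rintro ⟨j | ⟨j, k⟩, hx⟩ ⟨j' | ⟨j', k'⟩, hy⟩ h <;> simp [F] at h ⊢ <;> try exact h

instance : Fintype (Xv r n) := Fintype.ofFinite _

/-- The expansion of an element of `H_{n+1}` in the basis `hat x` over `H_n`. -/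
lemma expand (h : HA R r (n + 1) ξ Q) :
    h = ∑ x : Xv r n, iot n (ev n h x) * hat R r n ξ Q x.1 := by
  conv_lhs => rw [← back_ev h, ← Finsupp.univ_sum_single (ev n h), map_sum]
  simp only [back_single]

/-- The relative trace `H_{n+1} → H_n`, the coefficient at `1`. -/
def eps (n : ℕ) : HA R r (n + 1) ξ Q →ₗ[R] HA R r n ξ Q :=
  (Finsupp.lapply (xe (le_refl n) : Xv r n)).comp (ev n)

lemma eps_apply (h : HA R r (n + 1) ξ Q) : eps n h = ev n h (xe (le_refl n)) := rfl

lemma eps_iot_mul (b : HA R r n ξ Q) (h : HA R r (n + 1) ξ Q) :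
    eps n (iot n b * h) = b * eps n h := by
  rw [eps_apply, ev_iot_mul]; rfl

lemma eps_mul_iot (h : HA R r (n + 1) ξ Q) (b : HA R r n ξ Q) :
    eps n (h * iot n b) = eps n h * b := by
  let P : Submodule R (HA R r n ξ Q) :=
    { carrier := {b | ∀ h, eps n (h * iot n b) = eps n h * b}
      add_mem' := by
        intro a b ha hb h
        rw [map_add, mul_add, map_add, ha, hb, mul_add]
      zero_mem' := by simp
      smul_mem' := by
        intro c a ha h
        rw [map_smul, mul_smul_comm, map_smul, ha, mul_smul_comm] }
  refine mem_of_left P (by simp [P]) (fun i hi x hx h => ?_) b h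
  rw [map_mul (iot n), ← mul_assoc, hx, iot_tn hi, eps_apply, ev_mul_tn _ (by omega), op_apply_top hi,
    mul_assoc]; rfl

lemma eps_one : eps n (1 : HA R r (n + 1) ξ Q) = 1 := by
  rw [eps_apply, ev_one, Ev_apply, xe_val, if_pos rfl]

/-- Every coordinate function is of the form `h ↦ ε(h y)`. -/
lemma exists_dual (x : Xv r n) : ∃ y : HA R r (n + 1) ξ Q, ∀ h, ev n h x = eps n (h * y) := by
  obtain ⟨u, hu⟩ := hG.hξ
  have hu' : (↑u⁻¹ : R) * ξ = 1 := by rw [← hu, Units.inv_mul]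
  have hE : ∀ j (hj : j ≤ n), ∃ y : HA R r (n + 1) ξ Q, ∀ h, ev n h (xe (hj)) = eps n (h * y) := by
    intro j hj
    induction hj using Nat.decreasingInduction with
    | self => exact ⟨1, fun h => by rw [mul_one]; rfl⟩
    | of_succ j hj ih =>
      obtain ⟨y, hy⟩ := ih
      refine ⟨(↑u⁻¹ : R) • (𝐭 (j + 1) * y), fun h => ?_⟩
      rw [mul_smul_comm, map_smul, ← mul_assoc, ← hy, ev_mul_tn _ (by omega), op_apply_e hj,
        smul_smul, hu', one_smul]
  have step : ∀ k (h1 : 1 ≤ k) (h2 : k < r),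
      (∃ y : HA R r (n + 1) ξ Q, ∀ h, ev n h (xd (j := 0) (k := k) (Nat.zero_le n) (h1) (h2)) = eps n (h * y)) →
      ∀ j (hj : j ≤ n), ∃ y : HA R r (n + 1) ξ Q, ∀ h, ev n h (xd (j := j) (k := k) (hj) (h1) (h2)) = eps n (h * y) := by
    intro k h1 h2 h0 j
    induction j with
    | zero => exact fun _ => h0
    | succ j ih =>
      intro hj
      obtain ⟨y, hy⟩ := ih (by omega)
      refine ⟨(↑u⁻¹ : R) • (𝐭 (j + 1) * y), fun h => ?_⟩
      rw [mul_smul_comm, map_smul, ← mul_assoc, ← hy, ev_mul_tn _ (by omega), op_apply_d hj,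
        smul_smul, hu', one_smul]
  have hD0 : ∀ (h1 : 1 ≤ r - 1) (h2 : r - 1 < r), ∃ y : HA R r (n + 1) ξ Q, ∀ h,
      ev n h (xd (j := 0) (k := (r - 1)) (Nat.zero_le n) (h1) (h2)) = eps n (h * y) := by
    intro h1 h2
    obtain ⟨y, hy⟩ := hE 0 (Nat.zero_le n)
    obtain ⟨w, hw⟩ := fp_coeff_zero Q hG.hQ
    refine ⟨-(↑w⁻¹ : R) • (𝐭 0 * y), fun h => ?_⟩
    rw [mul_smul_comm, map_smul, ← mul_assoc, ← hy, ev_mul_tn _ (by omega),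
      op_apply_e0 (by omega), ← hw, smul_smul, neg_mul_neg, Units.inv_mul, one_smul]
  have hD : ∀ k (h1 : 1 ≤ k) (h2 : k < r), ∃ y : HA R r (n + 1) ξ Q, ∀ h,
      ev n h (xd (j := 0) (k := k) (Nat.zero_le n) (h1) (h2)) = eps n (h * y) := by
    intro k h1 h2
    obtain ⟨s, hs⟩ : ∃ s, k + s = r - 1 := ⟨r - 1 - k, by omega⟩
    induction s generalizing k with
    | zero =>
      have : k = r - 1 := by omega
      subst this
      exact hD0 h1 h2
    | succ s ih =>
      have ih' := ih (k + 1) (by omega) (by omega) (by omega)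
      obtain ⟨y, hy⟩ := ih'
      obtain ⟨y0, hy0⟩ := hD0 (by omega) (by omega)
      have hst := step (k + 1) (by omega) (by omega) ⟨y, hy⟩
      choose w hw using fun j : Fin n => hst (j + 1) j.2
      refine ⟨𝐭 0 * y + (fp Q).coeff (k + 1) • y0 +
        (ξ - 1) • ∑ j : Fin n, w j * iot n (𝐠 0 * up 𝐠 1 j), fun h => ?_⟩
      rw [mul_add, mul_add, map_add, map_add, ← mul_assoc, ← hy, ev_mul_tn _ (by omega),
        op_apply_d0 h1 (by omega), mul_smul_comm, map_smul, ← hy0, mul_smul_comm, map_smul,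
        Finset.mul_sum, map_sum]
      have : ∀ j : Fin n, eps n (h * (w j * iot n (𝐠 0 * up 𝐠 1 j))) =
          ev n h (xd (j := (j + 1)) (k := (k + 1)) (j.2) (by omega) (by omega)) * (𝐠 0 * up 𝐠 1 j) := by
        intro j
        rw [← mul_assoc, eps_mul_iot, hw]
      simp only [this]
      abel
  rcases x with ⟨j | ⟨j, k⟩, hx⟩
  · exact hE j hx
  · exact step k hx.2.1 hx.2.2 (hD k _ _) j hx.1

end Ev
end HC

/-! ### Jucys–Murphy elements and the relative trace -/

namespace HC
open Polynomial

section JM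

variable {R : Type} [CommRing R] {B : Type*} [Ring B] [Algebra R B]
variable {ξ : R} {f : R[X]} {n : ℕ} {t : ℕ → B}

/-- Jucys–Murphy elements; `v` stands for `ξ⁻¹`. -/
def lm (v : R) (t : ℕ → B) : ℕ → B
  | 0 => t 0
  | j + 1 => v • (t (j + 1) * lm v t j * t (j + 1))

lemma lm_far (h : HRel ξ f n t) (v : R) {i j : ℕ} (hij : j + 1 < i) (hi : i < n) :
    Commute (t i) (lm v t j) := by
  induction j with
  | zero => exact h.br.cm hi (by omega) (by omega)
  | succ j ih =>
    have c : Commute (t i) (t (j + 1)) := h.br.cm hi (by omega) (by omega)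
    exact ((c.mul_right (ih (by omega))).mul_right c).smul_right v

lemma lm_comm (h : HRel ξ f n t) (v : R) {i j : ℕ} (hij : i < j) (hj : j < n) :
    Commute (t i) (lm v t j) := by
  induction j with
  | zero => omega
  | succ j ih =>
    rcases Nat.lt_or_ge i j with hi | hi
    · have c : Commute (t i) (t (j + 1)) := h.br.cm (by omega) (by omega) (by omega)
      exact ((c.mul_right (ih hi (by omega))).mul_right c).smul_right v
    · obtain rfl : i = j := by omega
      refine Commute.smul_right ?_ v
      rcases i with _ | j
      · have := h.quart (by omega)
        simp only [zero_add, lm]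
        unfold Commute SemiconjBy
        simp only [← mul_assoc]
        exact this
      · have c : t (j + 1 + 1) * lm v t j = lm v t j * t (j + 1 + 1) := lm_far h v (by omega) hj
        have b := h.braid (j + 1) (by omega) hj
        simp only [lm, mul_smul_comm, smul_mul_assoc]
        refine Commute.smul_right ?_ v
        unfold Commute SemiconjBy
        generalize lm v t j = x at *
        generalize t (j + 1 + 1) = T at *
        generalize t (j + 1) = s at *
        calc s * (T * (s * x * s) * T) = (s * T * s) * x * s * T := by noncomm_ring
          _ = T * s * (T * x) * s * T := by rw [b]; noncomm_ring
          _ = T * s * x * (T * s * T) := by rw [c]; noncomm_ring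
          _ = T * (s * x * s) * T * s := by rw [← b]; noncomm_ring

lemma map_lm {B' : Type*} [Ring B'] [Algebra R B'] (φ : B →ₐ[R] B') (v : R) (s : ℕ → B') (j : ℕ)
    (h : ∀ i ≤ j, φ (t i) = s i) : φ (lm v t j) = lm v s j := by
  induction j with
  | zero => exact h 0 le_rfl
  | succ j ih =>
    simp only [lm]
    rw [map_smul, map_mul, map_mul, ih (fun i hi => h i (by omega)), h _ le_rfl]

end JM

section TT
variable {R : Type} [CommRing R] {B : Type*} [Ring B] [Algebra R B]
variable {ξ v : R} {T a b : B}

lemma jm_bT (hv : v * ξ = 1) (hT : T * T = (ξ - 1) • T + ξ • (1 : B))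
    (hb : b = v • (T * a * T)) : b * T = T * a + (ξ - 1) • b := by
  rw [hb, smul_mul_assoc, mul_assoc, hT, mul_add, mul_smul_comm, mul_smul_comm, mul_one, smul_add,
    smul_smul v ξ, hv, one_smul, smul_comm, add_comm]

lemma jm_Tb (hv : v * ξ = 1) (hT : T * T = (ξ - 1) • T + ξ • (1 : B))
    (hb : b = v • (T * a * T)) : T * b = a * T + (ξ - 1) • b := by
  rw [hb, mul_smul_comm, ← mul_assoc, ← mul_assoc, hT, add_mul, add_mul, smul_mul_assoc,
    smul_mul_assoc, smul_mul_assoc, smul_mul_assoc, one_mul, smul_add,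
    smul_smul v ξ, hv, one_smul, smul_comm, add_comm]

lemma jm_powT (hv : v * ξ = 1) (hT : T * T = (ξ - 1) • T + ξ • (1 : B))
    (hb : b = v • (T * a * T)) (k : ℕ) :
    b ^ k * T = T * a ^ k +
      (ξ - 1) • ∑ u ∈ Finset.range k, b ^ (u + 1) * a ^ (k - 1 - u) := by
  induction k with
  | zero => simp
  | succ k ih =>
    rw [pow_succ', mul_assoc, ih, mul_add, ← mul_assoc, jm_bT hv hT hb, add_mul, mul_assoc,
      ← pow_succ', Finset.sum_range_succ', add_assoc]
    congr 1
    rw [smul_mul_assoc, mul_smul_comm, ← smul_add, add_comm]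
    congr 1
    rw [Finset.mul_sum]
    congr 1
    · refine Finset.sum_congr rfl fun u _ => ?_
      rw [← mul_assoc, ← pow_succ']
      congr 2
      omega
    · simp

lemma jm_Tpow (hv : v * ξ = 1) (hT : T * T = (ξ - 1) • T + ξ • (1 : B))
    (hb : b = v • (T * a * T)) (hab : Commute a b) (k : ℕ) :
    T * b ^ k = a ^ k * T +
      (ξ - 1) • ∑ u ∈ Finset.range k, b ^ (u + 1) * a ^ (k - 1 - u) := by
  induction k with
  | zero => simp
  | succ k ih =>
    rw [pow_succ b, ← mul_assoc, ih, add_mul, mul_assoc, jm_Tb hv hT hb, mul_add, ← mul_assoc,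
      ← pow_succ, Finset.sum_range_succ', add_assoc]
    congr 1
    rw [smul_mul_assoc, mul_smul_comm, ← smul_add, add_comm]
    congr 1
    rw [Finset.sum_mul]
    congr 1
    · refine Finset.sum_congr rfl fun u _ => ?_
      rw [mul_assoc, (hab.pow_left _).eq, ← mul_assoc, ← pow_succ]
      congr 2
      omega
    · simp [(hab.pow_left _).eq]

lemma jm_TaT (hv : v * ξ = 1) (hT : T * T = (ξ - 1) • T + ξ • (1 : B))
    (hb : b = v • (T * a * T)) (i : ℕ) :
    T * a ^ (i + 1) * T = ξ • b ^ (i + 1) -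
      (ξ - 1) • ∑ q ∈ Finset.range i, b ^ (q + 1) * a ^ (i - q) * T := by
  have h := jm_powT hv hT hb (i + 1)
  have h2 : T * a ^ (i + 1) = b ^ (i + 1) * T -
      (ξ - 1) • ∑ u ∈ Finset.range (i + 1), b ^ (u + 1) * a ^ (i + 1 - 1 - u) := by
    rw [h]; simp
  rw [h2, Finset.sum_range_succ, sub_mul, mul_assoc, hT, smul_mul_assoc, add_mul, Finset.sum_mul]
  simp only [mul_add, mul_smul_comm, Nat.add_sub_cancel, Nat.sub_self, pow_zero, mul_one, smul_add]
  abel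

end TT

section Trace

variable {R : Type} [CommRing R] {r : ℕ} {ξ : R} {Q : Fin r → R} {n : ℕ}

/-- The inverse of `ξ`. -/
def vv (ξ : R) : R := Ring.inverse ξ

lemma vv_mul [hG : Good ξ Q] : vv ξ * ξ = 1 := Ring.inverse_mul_cancel _ hG.hξ

/-- The last Jucys–Murphy element of `H_{n+1}`. -/
def LL (R : Type) [CommRing R] (r n : ℕ) (ξ : R) (Q : Fin r → R) : HA R r (n + 1) ξ Q :=
  lm (vv ξ) (tn R r (n + 1) ξ Q) n

lemma LL_succ : LL R r (n + 1) ξ Q = vv ξ • (tn R r (n + 2) ξ Q (n + 1) *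
    iot (n + 1) (LL R r n ξ Q) * tn R r (n + 2) ξ Q (n + 1)) := by
  conv_lhs => rw [LL, lm]
  rw [LL, map_lm (iot (n + 1)) (vv ξ) (tn R r (n + 2) ξ Q) n fun i hi => iot_tn (by omega)]

lemma iot_commute {x : HA R r (n + 1) ξ Q} (h : ∀ i < n, Commute (tn R r (n + 1) ξ Q i) x)
    (b : HA R r n ξ Q) : Commute (iot n b) x := by
  have : b ∈ (Subalgebra.centralizer R {x}).comap (iot n) := by
    refine mem_of_adjoin (fun i hi => ?_) b
    rw [Subalgebra.mem_comap, Subalgebra.mem_centralizer_iff, iot_tn hi]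
    rintro g rfl
    exact (h i hi).symm
  rw [Subalgebra.mem_comap, Subalgebra.mem_centralizer_iff] at this
  exact (this x rfl).symm

lemma LL_commute (b : HA R r n ξ Q) : Commute (iot n b) (LL R r n ξ Q) :=
  iot_commute (fun _ hi => lm_comm HRel_tn _ hi (Nat.lt_succ_self n)) b

lemma T_commute (b : HA R r n ξ Q) :
    Commute (iot (n + 1) (iot n b)) (tn R r (n + 2) ξ Q (n + 1)) := by
  have : (iot (n + 1) (iot n b)) = ((iot (n + 1)).comp (iot n)) b := rfl
  rw [this]
  have : b ∈ (Subalgebra.centralizer R {tn R r (n + 2) ξ Q (n + 1)}).comap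
      ((iot (n + 1)).comp (iot n)) := by
    refine mem_of_adjoin (fun i hi => ?_) b
    rw [Subalgebra.mem_comap, Subalgebra.mem_centralizer_iff, AlgHom.comp_apply, iot_tn hi,
      iot_tn (by omega)]
    rintro g rfl
    exact HRel_tn.br.cm (n := n + 2) (by omega) (by omega) (by omega)
  rw [Subalgebra.mem_comap, Subalgebra.mem_centralizer_iff] at this
  exact (this _ rfl).symm

lemma iot_dn {a l : ℕ} (h : a + l ≤ n) :
    iot n (dn (tn R r n ξ Q) a l) = dn (tn R r (n + 1) ξ Q) a l :=
  map_dn (iot n).toMonoidHom _ _ _ _ fun _ _ _ => iot_tn (by omega)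

lemma iot_up {a l : ℕ} (h : a + l ≤ n) :
    iot n (up (tn R r n ξ Q) a l) = up (tn R r (n + 1) ξ Q) a l :=
  map_up (iot n).toMonoidHom _ _ _ _ fun _ _ _ => iot_tn (by omega)

/-- The part of the basis of `H_{n+1}` that lies in `t_n H_n`. -/
lemma hat_cases (x : Xv r (n + 1)) (hx : x.1 ≠ .e (n + 1)) :
    (∃ h : HA R r (n + 1) ξ Q, hat R r (n + 1) ξ Q x.1 =
      tn R r (n + 2) ξ Q (n + 1) * iot (n + 1) h) ∨
    ∃ k, 1 ≤ k ∧ k < r ∧ x.1 = .d (n + 1) k ∧ hat R r (n + 1) ξ Q x.1 =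
      tn R r (n + 2) ξ Q (n + 1) * iot (n + 1) (hat R r n ξ Q (.d n k)) *
      tn R r (n + 2) ξ Q (n + 1) := by
  rcases x with ⟨j | ⟨j, k⟩, hv⟩
  · have hj : j ≤ n + 1 := hv
    have hj' : j ≠ n + 1 := fun h => hx (congrArg XI.e h)
    refine .inl ⟨dn (tn R r (n + 1) ξ Q) (j + 1) (n - j), ?_⟩
    rw [iot_dn (by omega)]
    simp only [hat]
    rw [show n + 1 - j = (n - j) + 1 by omega, dn_succ, show j + 1 + (n - j) = n + 1 by omega]
  · obtain ⟨hj, h1, h2⟩ := hv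
    rcases Nat.lt_or_ge j (n + 1) with h | h
    · refine .inl ⟨dn (tn R r (n + 1) ξ Q) 1 n * tn R r (n + 1) ξ Q 0 ^ k *
        up (tn R r (n + 1) ξ Q) 1 j, ?_⟩
      rw [map_mul, map_mul, map_pow, iot_dn (by omega), iot_up (by omega), iot_tn (by omega)]
      simp only [hat]
      rw [dn_succ, add_comm 1 n]
      simp only [mul_assoc]
    · obtain rfl : j = n + 1 := by omega
      refine .inr ⟨k, h1, h2, rfl, ?_⟩
      simp only [hat]
      rw [map_mul, map_mul, map_pow, iot_dn (by omega), iot_up (by omega), iot_tn (by omega),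
        dn_succ, up_succ, add_comm 1 n]
      simp only [mul_assoc]

variable [hG : Good ξ Q]

lemma eps_hat (x : Xv r n) (hx : x.1 ≠ .e n) : eps n (hat R r n ξ Q x.1) = 0 := by
  rw [eps_apply, ev_hat, sing_apply, xe_val, if_neg hx]

lemma eps_T : eps (n + 1) (tn R r (n + 2) ξ Q (n + 1)) = 0 := by
  have := eps_hat (R := R) (ξ := ξ) (Q := Q) (xe (Nat.le_succ n) : Xv r (n + 1)) (by simp)
  simpa [hat] using this

lemma eps_Tiot (h : HA R r (n + 1) ξ Q) :
    eps (n + 1) (tn R r (n + 2) ξ Q (n + 1) * iot (n + 1) h) = 0 := by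
  rw [eps_mul_iot, eps_T, zero_mul]

lemma eps_iotT (h : HA R r (n + 1) ξ Q) :
    eps (n + 1) (iot (n + 1) h * tn R r (n + 2) ξ Q (n + 1)) = 0 := by
  rw [eps_iot_mul, eps_T, mul_zero]

/-- Conjugation by the last generator relates the relative traces of two consecutive levels; this
is what makes `tau` symmetric. -/
lemma eps_TgT (g : HA R r (n + 1) ξ Q) :
    eps (n + 1) (tn R r (n + 2) ξ Q (n + 1) * iot (n + 1) g * tn R r (n + 2) ξ Q (n + 1)) =
      ξ • iot n (eps n g) := by
  have key : ∀ x : Xv r n, eps (n + 1) (tn R r (n + 2) ξ Q (n + 1) *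
      iot (n + 1) (hat R r n ξ Q x.1) * tn R r (n + 2) ξ Q (n + 1)) =
      ξ • iot n (eps n (hat R r n ξ Q x.1)) := by
    intro x
    have hrel := (HRel_tn (R := R) (r := r) (n := n + 2) (ξ := ξ) (Q := Q))
    by_cases hx : x.1 = .e n
    · have e1 : hat R r n ξ Q x.1 = 1 := by rw [hx]; simp [hat]
      rw [e1, map_one, mul_one, hrel.quad _ (by omega) (by omega), eps_one, map_one, map_add,
        map_smul, map_smul, eps_T, eps_one, smul_zero, zero_add]
    · rw [eps_hat x hx, map_zero, smul_zero]
      rcases n with _ | n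
      · rcases x with ⟨j | ⟨j, k⟩, hv⟩
        · have hj : j ≤ 0 := hv
          obtain rfl : j = 0 := by omega
          exact absurd rfl hx
        · obtain ⟨hj, h1, h2⟩ := hv
          obtain rfl : j = 0 := by omega
          have := eps_hat (R := R) (ξ := ξ) (Q := Q) (xd le_rfl h1 h2 : Xv r 1) (by simp)
          rw [← this]
          congr 1
          simp [hat, iot_tn]
      · rcases hat_cases (R := R) (ξ := ξ) (Q := Q) x hx with ⟨h, hh⟩ | ⟨k, h1, h2, hk, -⟩
        · rw [hh, map_mul (iot (n + 1 + 1)), iot_tn (by omega)]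
          have e := (T_commute (R := R) (ξ := ξ) (Q := Q) (n := n + 1) h).eq
          have b := hrel.braid (n + 1) (by omega) (by omega)
          rw [← mul_assoc, mul_assoc _ _ (tn R r (n + 2 + 1) ξ Q (n + 1 + 1)), e, ← mul_assoc, ← b]
          rw [← iot_tn (show n + 1 < n + 1 + 1 by omega), mul_assoc, mul_assoc, ← map_mul,
            eps_iot_mul, eps_Tiot, mul_zero]
        · have := eps_hat (R := R) (ξ := ξ) (Q := Q) (xd le_rfl h1 h2 : Xv r (n + 1 + 1)) (by simp)
          rw [← this, hk]
          congr 1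
          simp only [hat, xd_val]
          rw [map_mul, map_mul, map_pow, iot_dn (by omega), iot_up (by omega), iot_tn (by omega),
            dn_succ 1 (n + 1), up_succ 1 (n + 1), add_comm 1 (n + 1)]
          simp only [mul_assoc]
  conv_lhs => rw [expand g]
  conv_rhs => rw [expand g]
  simp only [map_sum, Finset.mul_sum, Finset.sum_mul, Finset.smul_sum]
  refine Finset.sum_congr rfl fun x _ => ?_
  rw [eps_iot_mul, map_mul (iot (n + 1)), map_mul (iot n), ← mul_smul_comm, ← key x, ← mul_assoc,
    ← (T_commute (ev n g x)).eq, mul_assoc, mul_assoc, eps_iot_mul, mul_assoc]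

lemma eps_LL {i : ℕ} (h1 : 1 ≤ i) (h2 : i < r) : eps n (LL R r n ξ Q ^ i) = 0 := by
  induction n generalizing i with
  | zero =>
    have := eps_hat (R := R) (ξ := ξ) (Q := Q) (xd le_rfl h1 h2 : Xv r 0) (by simp)
    rw [← this]
    congr 1
    simp [hat, LL, lm]
  | succ n ih =>
    induction i using Nat.strong_induction_on with
    | _ i ih2 =>
    obtain ⟨i, rfl⟩ : ∃ i', i = i' + 1 := ⟨i - 1, by omega⟩
    have hT := (HRel_tn (R := R) (r := r) (n := n + 2) (ξ := ξ) (Q := Q)).quad (n + 1)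
      (by omega) (by omega)
    have hb := LL_succ (R := R) (r := r) (n := n) (ξ := ξ) (Q := Q)
    have h := jm_TaT (vv_mul (Q := Q)) hT hb i
    have h' := congrArg (eps (n + 1)) h
    rw [← map_pow, eps_TgT, ih h1 h2, map_zero, smul_zero, map_sub, map_smul, map_smul, map_sum,
      Finset.sum_eq_zero, smul_zero, sub_zero] at h'
    · have := congrArg (fun z => vv ξ • z) h'
      simpa [smul_smul, vv_mul (Q := Q)] using this.symm
    · intro q hq
      rw [Finset.mem_range] at hq
      rw [← map_pow, (((LL_commute (R := R) (r := r) (ξ := ξ) (Q := Q)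
        (LL R r n ξ Q ^ (i - q))).pow_right (q + 1)).eq).symm, mul_assoc, eps_iot_mul,
        jm_powT (vv_mul (Q := Q)) hT hb, map_add, map_smul, map_sum, ← map_pow, eps_Tiot,
        Finset.sum_eq_zero, smul_zero, add_zero, mul_zero]
      intro u hu
      rw [Finset.mem_range] at hu
      rw [← map_pow, eps_mul_iot, ih2 (u + 1) (by omega) (by omega) (by omega), zero_mul]

lemma eps_LLT {i : ℕ} (h2 : i < r) :
    eps (n + 1) (LL R r (n + 1) ξ Q ^ i * tn R r (n + 2) ξ Q (n + 1)) = 0 := by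
  have hT := (HRel_tn (R := R) (r := r) (n := n + 2) (ξ := ξ) (Q := Q)).quad (n + 1)
      (by omega) (by omega)
  have hb := LL_succ (R := R) (r := r) (n := n) (ξ := ξ) (Q := Q)
  rw [jm_powT (vv_mul (Q := Q)) hT hb, map_add, map_smul, map_sum, ← map_pow, eps_Tiot,
        Finset.sum_eq_zero, smul_zero, add_zero]
  intro u hu
  rw [Finset.mem_range] at hu
  rw [← map_pow, eps_mul_iot, eps_LL (by omega) (by omega), zero_mul]

lemma eps_TLL {i : ℕ} (h2 : i < r) :
    eps (n + 1) (tn R r (n + 2) ξ Q (n + 1) * LL R r (n + 1) ξ Q ^ i) = 0 := by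
  have hT := (HRel_tn (R := R) (r := r) (n := n + 2) (ξ := ξ) (Q := Q)).quad (n + 1)
      (by omega) (by omega)
  have hb := LL_succ (R := R) (r := r) (n := n) (ξ := ξ) (Q := Q)
  rw [jm_Tpow (vv_mul (Q := Q)) hT hb (LL_commute _), map_add, map_smul, map_sum, ← map_pow, eps_iotT,
        Finset.sum_eq_zero, smul_zero, add_zero]
  intro u hu
  rw [Finset.mem_range] at hu
  rw [← map_pow, eps_mul_iot, eps_LL (by omega) (by omega), zero_mul]

end Trace
end HC

/-! ### The symmetrizing form -/

namespace HC
open Polynomial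

section Span

variable {R : Type} [CommRing R] {r : ℕ} {ξ : R} {Q : Fin r → R} {n : ℕ}

/-- The bimodule spanned by the nontrivial double coset representatives of `H_n` in `H_{n+1}`. -/
def KK (R : Type) [CommRing R] (r n : ℕ) (ξ : R) (Q : Fin r → R) :
    Submodule R (HA R r (n + 1) ξ Q) :=
  Submodule.span R ({x | ∃ g u, 1 ≤ u ∧ u < r ∧ x = iot n g * LL R r n ξ Q ^ u} ∪
    {x | ∃ g h, 1 ≤ n ∧ x = iot n g * tn R r (n + 1) ξ Q n * iot n h})

lemma KK_b (g : HA R r n ξ Q) {u : ℕ} (h1 : 1 ≤ u) (h2 : u < r) :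
    iot n g * LL R r n ξ Q ^ u ∈ KK R r n ξ Q :=
  Submodule.subset_span (.inl ⟨g, u, h1, h2, rfl⟩)

lemma KK_T (g h : HA R r n ξ Q) (h1 : 1 ≤ n) :
    iot n g * tn R r (n + 1) ξ Q n * iot n h ∈ KK R r n ξ Q :=
  Submodule.subset_span (.inr ⟨g, h, h1, rfl⟩)

lemma KK_left (g : HA R r n ξ Q) {x : HA R r (n + 1) ξ Q} (hx : x ∈ KK R r n ξ Q) :
    iot n g * x ∈ KK R r n ξ Q := by
  refine Submodule.span_induction (p := fun x _ => iot n g * x ∈ KK R r n ξ Q) ?_ ?_ ?_ ?_ hx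
  · rintro x (⟨g', u, h1, h2, rfl⟩ | ⟨g', h, h1, rfl⟩)
    · rw [← mul_assoc, ← map_mul]; exact KK_b _ h1 h2
    · rw [← mul_assoc, ← mul_assoc, ← map_mul]; exact KK_T _ _ h1
  · simp
  · intro x y _ _ h h'; rw [mul_add]; exact add_mem h h'
  · intro a x _ h; rw [mul_smul_comm]; exact Submodule.smul_mem _ _ h

lemma KK_step [hG : Good ξ Q] {x : HA R r (n + 1) ξ Q} (hx : x ∈ KK R r n ξ Q) :
    tn R r (n + 2) ξ Q (n + 1) * iot (n + 1) x * tn R r (n + 2) ξ Q (n + 1) ∈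
      KK R r (n + 1) ξ Q := by
  have hrel := (HRel_tn (R := R) (r := r) (n := n + 2) (ξ := ξ) (Q := Q))
  have hT := hrel.quad (n + 1) (by omega) (by omega)
  have hb := LL_succ (R := R) (r := r) (n := n) (ξ := ξ) (Q := Q)
  refine Submodule.span_induction (p := fun x _ => tn R r (n + 2) ξ Q (n + 1) * iot (n + 1) x *
    tn R r (n + 2) ξ Q (n + 1) ∈ KK R r (n + 1) ξ Q) ?_ ?_ ?_ ?_ hx
  · rintro x (⟨g, u, h1, h2, rfl⟩ | ⟨g, h, h1, rfl⟩)
    · obtain ⟨i, rfl⟩ : ∃ i, u = i + 1 := ⟨u - 1, by omega⟩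
      rw [map_mul, map_pow, ← mul_assoc, ← (T_commute g).eq, mul_assoc, mul_assoc, ← mul_assoc _ _
        (tn R r (n + 2) ξ Q (n + 1)), jm_TaT (vv_mul (Q := Q)) hT hb]
      refine KK_left _ (sub_mem (Submodule.smul_mem _ _ ?_) (Submodule.smul_mem _ _
        (Submodule.sum_mem _ fun q hq => ?_)))
      · rw [← one_mul (_ ^ _), ← map_one (iot (n + 1))]
        exact KK_b _ h1 h2
      · rw [Finset.mem_range] at hq
        rw [← map_pow, (((LL_commute (R := R) (r := r) (ξ := ξ) (Q := Q)
          (LL R r n ξ Q ^ (i - q))).pow_right (q + 1)).eq).symm, mul_assoc,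
          jm_powT (vv_mul (Q := Q)) hT hb]
        refine KK_left _ (add_mem ?_ (Submodule.smul_mem _ _ (Submodule.sum_mem _ fun u hu => ?_)))
        · rw [← one_mul (_ * _), ← mul_assoc, ← map_one (iot (n + 1)), ← map_pow]
          exact KK_T _ _ (by omega)
        · rw [Finset.mem_range] at hu
          rw [← map_pow, ← ((LL_commute (R := R) (r := r) (ξ := ξ) (Q := Q)
            (LL R r n ξ Q ^ (q + 1 - 1 - u))).pow_right (u + 1)).eq]
          exact KK_b _ (by omega) (by omega)
    · obtain ⟨m, rfl⟩ : ∃ m, n = m + 1 := ⟨n - 1, by omega⟩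
      have b := hrel.braid (m + 1) (by omega) (by omega)
      have e1 := (T_commute g).eq
      have e2 := (T_commute h).eq
      rw [map_mul, map_mul, iot_tn (by omega)]
      have : tn R r (m + 1 + 2) ξ Q (m + 1 + 1) * (iot (m + 1 + 1) (iot (m + 1) g) *
          tn R r (m + 1 + 2) ξ Q (m + 1) * iot (m + 1 + 1) (iot (m + 1) h)) *
          tn R r (m + 1 + 2) ξ Q (m + 1 + 1) = iot (m + 1 + 1) (iot (m + 1) g *
            tn R r (m + 1 + 1) ξ Q (m + 1)) * tn R r (m + 1 + 2) ξ Q (m + 1 + 1) *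
            iot (m + 1 + 1) (tn R r (m + 1 + 1) ξ Q (m + 1) * iot (m + 1) h) := by
        rw [map_mul, map_mul, iot_tn (by omega)]
        generalize tn R r (m + 1 + 2) ξ Q (m + 1 + 1) = T at *
        generalize tn R r (m + 1 + 2) ξ Q (m + 1) = s at *
        generalize iot (m + 1 + 1) (iot (m + 1) g) = g at *
        generalize iot (m + 1 + 1) (iot (m + 1) h) = h at *
        calc T * (g * s * h) * T = T * g * s * (h * T) := by noncomm_ring
          _ = g * (T * s * T) * h := by rw [e2, ← e1]; noncomm_ring
          _ = _ := by rw [← b]; noncomm_ring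
      rw [this]
      exact KK_T _ _ (by omega)
  · simp
  · intro x y _ _ h h'; rw [map_add, mul_add, add_mul]; exact add_mem h h'
  · intro a x _ h; rw [map_smul, mul_smul_comm, smul_mul_assoc]; exact Submodule.smul_mem _ _ h

lemma KK_hat [hG : Good ξ Q] (n : ℕ) {k : ℕ} (h1 : 1 ≤ k) (h2 : k < r) :
    hat R r n ξ Q (.d n k) ∈ KK R r n ξ Q := by
  induction n with
  | zero =>
    have : hat R r 0 ξ Q (.d 0 k) = iot 0 1 * LL R r 0 ξ Q ^ k := by simp [hat, LL, lm]
    rw [this]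
    exact KK_b _ h1 h2
  | succ n ih =>
    rcases hat_cases (R := R) (ξ := ξ) (Q := Q) (xd le_rfl h1 h2 : Xv r (n + 1)) (by simp) with
      ⟨h, hh⟩ | ⟨k', _, _, hk, hh⟩
    · rw [xd_val] at hh
      rw [hh, ← one_mul (_ * _), ← mul_assoc, ← map_one (iot (n + 1))]
      exact KK_T _ _ (by omega)
    · rw [xd_val] at hh hk
      obtain rfl : k = k' := by simpa using hk
      rw [hh]
      exact KK_step ih

/-- Double coset decomposition of `H_{n+1}` with respect to `H_n`. -/
lemma KK_top [hG : Good ξ Q] (x : HA R r (n + 1) ξ Q) :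
    x ∈ LinearMap.range (iot n).toLinearMap ⊔ KK R r n ξ Q := by
  rw [expand x]
  refine Submodule.sum_mem _ fun y _ => ?_
  by_cases hy : y.1 = .e n
  · refine Submodule.mem_sup_left ⟨ev n x y, ?_⟩
    rw [hy]; simp [hat]
  refine Submodule.mem_sup_right (KK_left _ ?_)
  rcases n with _ | n
  · rcases y with ⟨j | ⟨j, k⟩, hv⟩
    · have hj : j ≤ 0 := hv
      obtain rfl : j = 0 := by omega
      exact absurd rfl hy
    · obtain ⟨hj, h1, h2⟩ := hv
      obtain rfl : j = 0 := by omega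
      exact KK_hat 0 h1 h2
  · rcases hat_cases (R := R) (ξ := ξ) (Q := Q) y hy with ⟨h, hh⟩ | ⟨k, h1, h2, hk, -⟩
    · rw [hh, ← one_mul (_ * _), ← mul_assoc, ← map_one (iot (n + 1))]
      exact KK_T _ _ (by omega)
    · rw [hk]
      exact KK_hat _ h1 h2

end Span

section Tau

variable {R : Type} [CommRing R] {r : ℕ} {ξ : R} {Q : Fin r → R} {n : ℕ}

lemma HRel_zero : HRel ξ (fp Q) 0 (fun _ => (0 : R)) where
  cyc h := by omega
  quart h := by omega
  quad i h h' := by omega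
  comm i j h h' := by omega
  braid i h h' := by omega

variable [hG : Good ξ Q]

/-- The canonical symmetrizing form. -/
def tau : ∀ n : ℕ, HA R r n ξ Q →ₗ[R] R
  | 0 => (liftH HRel_zero).toLinearMap
  | n + 1 => tau n ∘ₗ eps n

lemma tau_succ (x : HA R r (n + 1) ξ Q) : tau (n + 1) x = tau n (eps n x) := rfl

lemma tau_zero_smul (x : HA R r 0 ξ Q) : x = tau 0 x • (1 : HA R r 0 ξ Q) := by
  have : x ∈ (⊥ : Subalgebra R (HA R r 0 ξ Q)) := mem_of_adjoin (fun i hi => by omega) x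
  obtain ⟨a, rfl⟩ := Algebra.mem_bot.1 this
  have : tau 0 (algebraMap R (HA R r 0 ξ Q) a) = a := by
    change liftH HRel_zero (algebraMap R (HA R r 0 ξ Q) a) = a
    rw [AlgHom.commutes]; rfl
  rw [this, Algebra.algebraMap_eq_smul_one]

lemma tau_one (n : ℕ) : tau n (1 : HA R r n ξ Q) = 1 := by
  induction n with
  | zero => exact map_one (liftH HRel_zero)
  | succ n ih => rw [tau_succ, eps_one, ih]

/-- The form `tau` is symmetric. It suffices to let one argument be a generator; all but the last
one come from `H_n`, and for the last one the other argument is decomposed into double cosets. -/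
lemma tau_comm (n : ℕ) (x y : HA R r n ξ Q) : tau n (x * y) = tau n (y * x) := by
  induction n with
  | zero => 
    rw [tau_zero_smul x, smul_mul_assoc, mul_smul_comm, one_mul, mul_one]
  | succ n ih =>
    let P : Subalgebra R (HA R r (n + 1) ξ Q) :=
      { carrier := {x | ∀ y, tau (n + 1) (x * y) = tau (n + 1) (y * x)}
        mul_mem' := by
          intro a b ha hb y
          rw [mul_assoc, ha, mul_assoc, hb, mul_assoc]
        add_mem' := by
          intro a b ha hb y
          rw [add_mul, mul_add, map_add, map_add, ha, hb]
        algebraMap_mem' := by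
          intro a y
          rw [Algebra.commutes] }
    refine (mem_of_adjoin (P := P) (fun i hi => ?_) x : _ ∈ P) y
    intro y
    rcases Nat.lt_or_ge i n with hi' | hi'
    · rw [← iot_tn hi', tau_succ, tau_succ, eps_iot_mul, eps_mul_iot, ih]
    obtain rfl : i = n := by omega
    rcases i with _ | n
    · have : y ∈ Subalgebra.centralizer R {tn R r 1 ξ Q 0} := by
        refine mem_of_adjoin (fun i hi => ?_) y
        obtain rfl : i = 0 := by omega
        rw [Subalgebra.mem_centralizer_iff]
        rintro g rfl
        rfl
      rw [Subalgebra.mem_centralizer_iff] at this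
      rw [this _ rfl]
    · have hy : y ∈ LinearMap.range (iot (n + 1)).toLinearMap ⊔ KK R r (n + 1) ξ Q := KK_top y
      have : LinearMap.range (iot (n + 1)).toLinearMap ⊔ KK R r (n + 1) ξ Q ≤
          LinearMap.eqLocus
            (tau (n + 2) ∘ₗ LinearMap.mulLeft R (tn R r (n + 2) ξ Q (n + 1)))
            (tau (n + 2) ∘ₗ LinearMap.mulRight R (tn R r (n + 2) ξ Q (n + 1))) := by
        refine sup_le ?_ (Submodule.span_le.2 ?_)
        · rintro _ ⟨g, rfl⟩
          change tau (n + 2) (tn R r (n + 2) ξ Q (n + 1) * iot (n + 1) g) =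
            tau (n + 2) (iot (n + 1) g * tn R r (n + 2) ξ Q (n + 1))
          rw [tau_succ (n := n + 1), tau_succ (n := n + 1), eps_Tiot, eps_iotT]
        · rintro x (⟨g, u, h1, h2, rfl⟩ | ⟨g, h, h1, rfl⟩)
          · change tau (n + 2) (tn R r (n + 2) ξ Q (n + 1) * (iot (n + 1) g *
              LL R r (n + 1) ξ Q ^ u)) = tau (n + 2) (iot (n + 1) g *
              LL R r (n + 1) ξ Q ^ u * tn R r (n + 2) ξ Q (n + 1))
            rw [tau_succ (n := n + 1), tau_succ (n := n + 1), mul_assoc, eps_iot_mul, eps_LLT h2,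
              ((LL_commute g).pow_right u).eq, ← mul_assoc, eps_mul_iot, eps_TLL h2, zero_mul,
              mul_zero]
          · change tau (n + 2) (tn R r (n + 2) ξ Q (n + 1) * (iot (n + 1) g *
              tn R r (n + 2) ξ Q (n + 1) * iot (n + 1) h)) = tau (n + 2) (iot (n + 1) g *
              tn R r (n + 2) ξ Q (n + 1) * iot (n + 1) h * tn R r (n + 2) ξ Q (n + 1))
            rw [← mul_assoc, ← mul_assoc, tau_succ (n := n + 1), tau_succ (n := n + 1),
              eps_mul_iot, mul_assoc (iot (n + 1) g),
              mul_assoc (iot (n + 1) g), eps_iot_mul, eps_TgT, eps_TgT, smul_mul_assoc,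
              mul_smul_comm, LinearMap.map_smul, LinearMap.map_smul, tau_succ, tau_succ,
              eps_iot_mul, eps_mul_iot]
      exact this hy

/-- Existence of a pair of dual families for the symmetrizing form. -/
lemma exists_dual_system (n : ℕ) : ∃ (I : Type) (_ : Fintype I) (b y : I → HA R r n ξ Q),
    ∀ h, h = ∑ i, tau n (h * y i) • b i := by
  induction n with
  | zero => exact ⟨Unit, inferInstance, fun _ => 1, fun _ => 1, fun h => by
      simpa using tau_zero_smul h⟩
  | succ n ih =>
    obtain ⟨I, _, b, y, hby⟩ := ih
    choose w hw using fun x : Xv r n => exists_dual (ξ := ξ) (Q := Q) x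
    refine ⟨Xv r n × I, inferInstance, fun p => iot n (b p.2) * hat R r n ξ Q p.1.1,
      fun p => w p.1 * iot n (y p.2), fun h => ?_⟩
    conv_lhs => rw [expand h]
    rw [Fintype.sum_prod_type]
    refine Finset.sum_congr rfl fun x _ => ?_
    conv_lhs => rw [hby (ev n h x)]
    rw [map_sum, Finset.sum_mul]
    refine Finset.sum_congr rfl fun i _ => ?_
    rw [map_smul, smul_mul_assoc, tau_succ, ← mul_assoc, eps_mul_iot, ← hw]

end Tau
end HC

/-! ### Cyclic rotation of words in the graded algebra -/

namespace HC
open Polynomial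

section Swap

set_option linter.unusedSectionVars false

variable {G : Type*} [Ring G] {V : Type*} [Zero V] {y : ℕ → G} {ψ : G → V} {p q : G}

/-- `ψ` allows cyclic rotation of the factor `x`. -/
def Rot (ψ : G → V) (x : G) : Prop := ∀ z, ψ (x * z) = ψ (z * x)

lemma Rot.one : Rot ψ 1 := fun z => by rw [one_mul, mul_one]

lemma Rot.mul {a b : G} (ha : Rot ψ a) (hb : Rot ψ b) : Rot ψ (a * b) := fun z => by
  rw [mul_assoc, ha, mul_assoc, hb, mul_assoc]

lemma Rot.up {a l : ℕ} (h : ∀ i, a ≤ i → i < a + l → Rot ψ (y i)) : Rot ψ (up y a l) := by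
  induction l with
  | zero => exact Rot.one
  | succ l ih => exact (ih fun i h1 h2 => h i h1 (by omega)).mul (h _ (by omega) (by omega))

lemma Rot.dn {a l : ℕ} (h : ∀ i, a ≤ i → i < a + l → Rot ψ (y i)) : Rot ψ (dn y a l) := by
  induction l with
  | zero => exact Rot.one
  | succ l ih => exact (h _ (by omega) (by omega)).mul (ih fun i h1 h2 => h i h1 (by omega))

lemma up_mul_up (hB : ∀ n, Br n y) {N j l : ℕ} (hj : 1 ≤ j) (h : j + l ≤ N) :
    up y 1 N * up y j l = up y (j + 1) l * up y 1 N := by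
  induction l with
  | zero => simp
  | succ l ih =>
    rw [up_succ, ← mul_assoc, ih (by omega), mul_assoc,
      (hB (1 + N)).up_mul le_rfl le_rfl (by omega) (by omega), up_succ, ← mul_assoc]
    congr 3; omega

lemma up_mul_dn (hB : ∀ n, Br n y) {N j l : ℕ} (hj : 1 ≤ j) (h : j + l ≤ N) :
    up y 1 N * dn y j l = dn y (j + 1) l * up y 1 N := by
  induction l with
  | zero => simp
  | succ l ih =>
    rw [dn_succ, ← mul_assoc, (hB (1 + N)).up_mul le_rfl le_rfl (by omega) (by omega), mul_assoc,
      ih (by omega), dn_succ, ← mul_assoc]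
    congr 3; omega

lemma up_mul_last (hsq : ∀ i, 1 ≤ i → y i * y i = 0) {N : ℕ} (hN : 1 ≤ N) :
    up y 1 N * y N = 0 := by
  obtain ⟨M, rfl⟩ : ∃ M, N = M + 1 := ⟨N - 1, by omega⟩
  rw [up_succ, mul_assoc, add_comm 1 M, hsq _ (by omega), mul_zero]

/-- An unlabelled block followed by a labelled one gives zero. -/
lemma swap_zero (hB : ∀ n, Br n y) (hsq : ∀ i, 1 ≤ i → y i * y i = 0) (h0 : ψ 0 = 0)
    {a b : ℕ} (hψ : ∀ i, 1 ≤ i → i ≤ a + b + 1 → Rot ψ (y i))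
    (hq : ∀ i, 2 ≤ i → Commute q (y i)) :
    ψ (up y 1 a * dn y 1 (a + 1) * q * up y 1 (a + b + 1)) = 0 := by
  set C := up y 1 (a + b + 1) with hC
  have rot : ∀ j, 1 ≤ j → j ≤ b + 1 → Rot ψ (up y j a * dn y j (a + 1)) := fun j h1 h2 =>
    (Rot.up fun i _ _ => hψ i (by omega) (by omega)).mul
      (Rot.dn fun i _ _ => hψ i (by omega) (by omega))
  have key : ∀ j, j ≤ b → ψ (up y 1 a * dn y 1 (a + 1) * q * C) =
      ψ (q * C * (up y (j + 1) a * dn y (j + 1) (a + 1))) := by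
    intro j hj
    induction j with
    | zero => rw [mul_assoc, rot 1 le_rfl (by omega)]
    | succ j ih =>
      rw [ih (by omega), mul_assoc, ← mul_assoc C, up_mul_up hB (by omega) (by omega),
        mul_assoc _ C, up_mul_dn hB (by omega) (by omega), ← mul_assoc _ _ C, ← mul_assoc,
        ((commute_up fun i _ _ => hq i (by omega)).mul_right
          (commute_dn fun i _ _ => hq i (by omega))).eq, mul_assoc, rot _ (by omega) (by omega)]
  rw [key b le_rfl, mul_assoc, ← mul_assoc C, up_mul_up hB (by omega) (by omega), dn_succ,
    mul_assoc _ C, ← mul_assoc C, show b + 1 + a = a + b + 1 by omega,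
    up_mul_last hsq (by omega), zero_mul, mul_zero, mul_zero, h0]

/-- The palindrome `y_{j+1} ⋯ y_2 y_1 y_2 ⋯ y_{j+1}`. -/
def pal (y : ℕ → G) : ℕ → G
  | 0 => y 1
  | j + 1 => y (j + 2) * pal y j * y (j + 2)

lemma pal_comm (hB : ∀ n, Br n y) {j i : ℕ} (hi : j + 3 ≤ i) : Commute (y i) (pal y j) := by
  induction j with
  | zero => exact (hB (i + 1)).cm (by omega) (by omega) (by omega)
  | succ j ih =>
    have c : Commute (y i) (y (j + 2)) := (hB (i + 1)).cm (by omega) (by omega) (by omega)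
    exact (c.mul_right (ih (by omega))).mul_right c

lemma up_dn_eq_pal (hB : ∀ n, Br n y) (j : ℕ) : up y 1 j * dn y 1 (j + 1) = pal y j := by
  induction j with
  | zero => simp [pal]
  | succ j ih =>
    rw [pal, ← ih, up_succ, dn_succ, dn_succ]
    have c1 : Commute (y (j + 2)) (up y 1 j) :=
      commute_up fun i _ _ => (hB (j + 3)).cm (by omega) (by omega) (by omega)
    have c2 : Commute (y (j + 2)) (dn y 1 j) :=
      commute_dn fun i _ _ => (hB (j + 3)).cm (by omega) (by omega) (by omega)
    have b := (hB (j + 3)).braid (j + 1) (by omega) (by omega)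
    rw [show 1 + j = j + 1 by omega, show 1 + (j + 1) = j + 2 by omega]
    generalize up y 1 j = A at *
    generalize dn y 1 j = D at *
    change y (j + 1) * y (j + 2) * y (j + 1) = y (j + 2) * y (j + 1) * y (j + 2) at b
    calc A * y (j + 1) * (y (j + 2) * (y (j + 1) * D))
        = A * (y (j + 1) * y (j + 2) * y (j + 1)) * D := by noncomm_ring
      _ = (A * y (j + 2)) * y (j + 1) * (y (j + 2) * D) := by rw [b]; noncomm_ring
      _ = _ := by rw [← c1.eq, c2.eq]; noncomm_ring

/-- Rotating a letter through the word `p X q Y C`, two indices at a time. -/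
lemma swap_rot (hB : ∀ n, Br n y) {N j M : ℕ} (hM : M ≤ N) (hj : 2 ≤ j) {X : G}
    (hψ : ∀ i, 1 ≤ i → i ≤ N → Rot ψ (y i))
    (hX : ∀ i, j + 1 ≤ i → Commute (y i) X)
    (d : ℕ) (hd : j + 2 * d ≤ M) :
    ψ (X * (up y j (M + 1 - j) * up y 1 N) * y j) =
      ψ (X * (up y j (M + 1 - j) * up y 1 N) * y (j + 2 * d)) := by
  induction d with
  | zero => rfl
  | succ d ih =>
    rw [ih (by omega), mul_assoc, mul_assoc (up y j _),
      (hB (1 + N)).up_mul le_rfl le_rfl (by omega) (by omega), ← mul_assoc (up y j _),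
      (hB (M + 1)).up_mul (by omega) (by omega) (by omega) (by omega),
      mul_assoc, ← mul_assoc X, ← (hX _ (by omega)).eq, mul_assoc, hψ _ (by omega) (by omega)]
    rfl

lemma swap_step (hB : ∀ n, Br n y) {N j e : ℕ} (hM : j + 2 + 2 * e ≤ N)
    (hψ : ∀ i, 1 ≤ i → i ≤ N → Rot ψ (y i))
    (hp : ∀ i, 2 ≤ i → Commute p (y i)) (hq : ∀ i, 2 ≤ i → Commute q (y i)) :
    ψ (p * pal y (j + 1) * q * (up y (j + 3) (2 * e) * up y 1 N)) =
      ψ (p * pal y j * q * (up y (j + 2) (2 * e + 1) * up y 1 N) * y (j + 2 + 2 * e)) := by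
  have h := swap_rot (ψ := ψ) hB (N := N) (j := j + 2) (M := j + 2 + 2 * e)
    (X := p * pal y j * q) hM (by omega) hψ
    (fun i hi => (((hp i (by omega)).symm.mul_right (pal_comm hB (by omega))).mul_right
      (hq i (by omega)).symm)) e le_rfl
  rw [show j + 2 + 2 * e + 1 - (j + 2) = 2 * e + 1 by omega] at h
  rw [← h, ← hψ _ (by omega) (by omega), pal, up_succ']
  congr 1
  have e1 := (hp (j + 2) (by omega)).eq
  have e2 := (hq (j + 2) (by omega)).eq
  calc p * (y (j + 2) * pal y j * y (j + 2)) * q * (up y (j + 3) (2 * e) * up y 1 N)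
      = (p * y (j + 2)) * pal y j * (y (j + 2) * q) * (up y (j + 3) (2 * e) * up y 1 N) := by
        noncomm_ring
    _ = _ := by rw [e1, ← e2]; noncomm_ring

lemma swap_next (hB : ∀ n, Br n y) {N j e : ℕ} (hM : j + 2 + 2 * e < N)
    (hψ : ∀ i, 1 ≤ i → i ≤ N → Rot ψ (y i))
    (hp : ∀ i, 2 ≤ i → Commute p (y i)) (hq : ∀ i, 2 ≤ i → Commute q (y i)) :
    ψ (p * pal y (j + 1) * q * (up y (j + 3) (2 * e) * up y 1 N)) =
      ψ (p * pal y j * q * (up y (j + 2) (2 * (e + 1)) * up y 1 N)) := by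
  rw [swap_step hB hM.le hψ hp hq, mul_assoc, mul_assoc (up y (j + 2) _),
    (hB (1 + N)).up_mul le_rfl le_rfl (by omega) (by omega), ← mul_assoc (up y (j + 2) _),
    show 2 * (e + 1) = 2 * e + 1 + 1 by omega, up_succ _ (2 * e + 1)]
  rfl

lemma swap_chain (hB : ∀ n, Br n y) {a b e : ℕ} (hea : e ≤ a) (heb : e ≤ b)
    (hψ : ∀ i, 1 ≤ i → i ≤ a + b + 1 → Rot ψ (y i))
    (hp : ∀ i, 2 ≤ i → Commute p (y i)) (hq : ∀ i, 2 ≤ i → Commute q (y i)) :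
    ψ (p * pal y a * q * up y 1 (a + b + 1)) =
      ψ (p * pal y (a - e) * q * (up y (a - e + 2) (2 * e) * up y 1 (a + b + 1))) := by
  induction e with
  | zero => simp
  | succ e ih =>
    rw [ih (by omega) (by omega)]
    obtain ⟨j, hj⟩ : ∃ j, a = j + 1 + e := ⟨a - 1 - e, by omega⟩
    rw [show a - e = j + 1 by omega, show a - (e + 1) = j by omega]
    exact swap_next hB (by omega) hψ hp hq

/-- A labelled block followed by a smaller labelled one gives zero. -/
lemma swap_gt (hB : ∀ n, Br n y) (hsq : ∀ i, 1 ≤ i → y i * y i = 0) (h0 : ψ 0 = 0)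
    {a b : ℕ} (hab : b < a) (hψ : ∀ i, 1 ≤ i → i ≤ a + b + 1 → Rot ψ (y i))
    (hp : ∀ i, 2 ≤ i → Commute p (y i)) (hq : ∀ i, 2 ≤ i → Commute q (y i)) :
    ψ (p * (up y 1 a * dn y 1 (a + 1)) * q * up y 1 (a + b + 1)) = 0 := by
  rw [up_dn_eq_pal hB, swap_chain hB hab.le le_rfl hψ hp hq]
  obtain ⟨j, hj⟩ : ∃ j, a = j + 1 + b := ⟨a - 1 - b, by omega⟩
  rw [show a - b = j + 1 by omega]
  refine (swap_step hB (by omega) hψ hp hq).trans ?_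
  rw [show j + 2 + 2 * b = a + b + 1 by omega, mul_assoc, mul_assoc (up y (j + 2) _),
    up_mul_last hsq (by omega), mul_zero, mul_zero, h0]

lemma swap_end (hB : ∀ n, Br n y) {a : ℕ}
    (hψ : ∀ i, 1 ≤ i → i ≤ 2 * a + 1 → Rot ψ (y i))
    (hp : ∀ i, 2 ≤ i → Commute p (y i)) (hq : ∀ i, 2 ≤ i → Commute q (y i)) :
    ψ (p * (up y 1 a * dn y 1 (a + 1)) * q * up y 1 (a + a + 1)) =
      ψ (p * y 1 * q * (y 1 * (up y 2 (2 * a) * up y 1 (2 * a)))) := by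
  rw [up_dn_eq_pal hB, swap_chain hB (e := a) le_rfl le_rfl (fun i h1 h2 => hψ i h1 (by omega))
    hp hq, Nat.sub_self, pal, ← two_mul, ← mul_assoc (y 1) (up y 2 _), ← up_succ' 1,
    up_mul_up hB le_rfl (by omega)]

/-- Two labelled blocks of the same size can be interchanged. -/
lemma swap_eq (hB : ∀ n, Br n y)
    {a : ℕ} (hψ : ∀ i, 1 ≤ i → i ≤ 2 * a + 1 → Rot ψ (y i))
    (hp : ∀ i, 2 ≤ i → Commute p (y i)) (hq : ∀ i, 2 ≤ i → Commute q (y i))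
    (hpq : Commute p (y 1 * q * y 1)) :
    ψ (p * (up y 1 a * dn y 1 (a + 1)) * q * up y 1 (a + a + 1)) =
      ψ (q * (up y 1 a * dn y 1 (a + 1)) * p * up y 1 (a + a + 1)) := by
  rw [swap_end hB hψ hp hq, swap_end hB hψ hq hp]
  set W := up y 2 (2 * a) * up y 1 (2 * a) with hW
  have w1 : ∀ i, 1 ≤ i → i + 2 ≤ 2 * a + 1 → W * y i = y (i + 2) * W := by
    intro i h1 h2
    rw [hW, mul_assoc, (hB (1 + 2 * a)).up_mul le_rfl le_rfl h1 (by omega), ← mul_assoc,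
      (hB (2 + 2 * a)).up_mul (by omega) le_rfl (by omega) (by omega), mul_assoc]
  have w2 : W * y (2 * a + 1) = y 1 * W := by
    have := up_mul_up hB (N := 2 * a + 1) (j := 1) (l := 2 * a) le_rfl (by omega)
    rw [hW, mul_assoc, show 2 * a + 1 = 1 + 2 * a by omega, ← up_succ, ← this, up_succ', mul_assoc]
  have key : ∀ d, d ≤ a → ψ (p * y 1 * q * (y 1 * W)) = ψ (q * y 1 * p * W * y (1 + 2 * d)) := by
    intro d hd
    induction d with
    | zero =>
      rw [← hψ _ (by omega) (by omega)]
      congr 1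
      calc p * y 1 * q * (y 1 * W) = p * (y 1 * q * y 1) * W := by noncomm_ring
        _ = _ := by rw [hpq.eq]; noncomm_ring
    | succ d ih =>
      have c : Commute (y (1 + 2 * d + 2)) (q * y 1 * p) :=
        ((hq _ (by omega)).symm.mul_right ((hB (2 * d + 4)).cm (by omega) (by omega)
          (by omega))).mul_right (hp _ (by omega)).symm
      rw [ih (by omega), mul_assoc, w1 _ (by omega) (by omega), ← mul_assoc, ← c.eq, mul_assoc,
        hψ _ (by omega) (by omega)]
      rfl
  rw [key a le_rfl, mul_assoc, add_comm 1, w2]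

end Swap
end HC

/-! ### Coloured compositions and their words -/

namespace HC
open Polynomial

section Blocks

variable {B : Type*} [Monoid B] (t : ℕ → B)

/-- The word `t_m ⋯ t_1 t_0^k t_1 ⋯ t_m`. -/
def bb (m k : ℕ) : B := dn t 1 m * t 0 ^ k * up t 1 m

/-- The word of a block `(a, k)` of size `a` and colour `k` at offset `m`. -/
def blk (m : ℕ) (x : ℕ × ℕ) : B := (if x.2 = 0 then 1 else bb t m x.2) * up t (m + 1) (x.1 - 1)

/-- The total size of a list of blocks. -/
def sz (c : List (ℕ × ℕ)) : ℕ := (c.map Prod.fst).sum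

/-- The word of a coloured composition; the list of blocks is read from its end. -/
def Wf (m : ℕ) : List (ℕ × ℕ) → B
  | [] => 1
  | x :: c => Wf m c * blk t (m + sz c) x

variable {t}

@[simp] lemma sz_nil : sz [] = 0 := rfl
@[simp] lemma sz_cons (x : ℕ × ℕ) (c : List (ℕ × ℕ)) : sz (x :: c) = x.1 + sz c := by simp [sz]
@[simp] lemma sz_append (c d : List (ℕ × ℕ)) : sz (c ++ d) = sz c + sz d := by simp [sz]

lemma bb_zero (k : ℕ) : bb t 0 k = t 0 ^ k := by simp [bb]

lemma bb_succ (m k : ℕ) : bb t (m + 1) k = t (m + 1) * bb t m k * t (m + 1) := by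
  simp only [bb, dn_succ, up_succ, add_comm 1 m, mul_assoc]

lemma Wf_append (m : ℕ) (d c : List (ℕ × ℕ)) : Wf t m (d ++ c) = Wf t m c * Wf t (m + sz c) d := by
  induction d with
  | nil => simp [Wf]
  | cons x d ih =>
    simp only [List.cons_append, Wf, ih, sz_append, mul_assoc]
    congr 3
    omega

lemma map_bb {B' : Type*} [Monoid B'] (φ : B →* B') (s : ℕ → B') (m k : ℕ)
    (h : ∀ i ≤ m, φ (t i) = s i) : φ (bb t m k) = bb s m k := by
  rw [bb, bb, map_mul, map_mul, map_pow, h 0 (by omega),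
    map_dn φ t s _ _ fun i _ _ => h i (by omega), map_up φ t s _ _ fun i _ _ => h i (by omega)]

lemma map_blk {B' : Type*} [Monoid B'] (φ : B →* B') (s : ℕ → B') (m : ℕ) (x : ℕ × ℕ)
    (hx : 1 ≤ x.1) (h : ∀ i < m + x.1, φ (t i) = s i) : φ (blk t m x) = blk s m x := by
  rw [blk, blk, map_mul, map_up φ t s _ _ fun i _ _ => h i (by omega)]
  congr 1
  split_ifs
  · exact map_one φ
  · exact map_bb φ s _ _ fun i _ => h i (by omega)

lemma map_Wf {B' : Type*} [Monoid B'] (φ : B →* B') (s : ℕ → B') (m : ℕ) (c : List (ℕ × ℕ))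
    (hc : ∀ x ∈ c, 1 ≤ x.1) (h : ∀ i < m + sz c, φ (t i) = s i) : φ (Wf t m c) = Wf s m c := by
  induction c with
  | nil => exact map_one φ
  | cons x c ih =>
    rw [sz_cons] at h
    rw [Wf, Wf, map_mul, ih (fun z hz => hc z (by simp [hz])) fun i hi => h i (by omega),
      map_blk φ s _ _ (hc x (by simp)) fun i hi => h i (by omega)]

lemma commute_bb {z : B} {m k : ℕ} (h : ∀ i ≤ m, Commute z (t i)) : Commute z (bb t m k) :=
  ((commute_dn fun i _ _ => h i (by omega)).mul_right ((h 0 (by omega)).pow_right k)).mul_right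
    (commute_up fun i _ _ => h i (by omega))

lemma commute_blk {z : B} {m : ℕ} {x : ℕ × ℕ} (hx : 1 ≤ x.1)
    (h : ∀ i < m + x.1, Commute z (t i)) : Commute z (blk t m x) := by
  refine Commute.mul_right ?_ (commute_up fun i _ _ => h i (by omega))
  split_ifs
  · exact Commute.one_right _
  · exact commute_bb fun i _ => h i (by omega)

lemma commute_Wf {z : B} {m : ℕ} {c : List (ℕ × ℕ)} (hc : ∀ x ∈ c, 1 ≤ x.1)
    (h : ∀ i < m + sz c, Commute z (t i)) : Commute z (Wf t m c) := by
  induction c with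
  | nil => exact Commute.one_right _
  | cons x c ih =>
    rw [sz_cons] at h
    exact (ih (fun z hz => hc z (by simp [hz])) fun i hi => h i (by omega)).mul_right
      (commute_blk (hc x (by simp)) fun i hi => h i (by omega))

lemma up_shift (s a l : ℕ) : up (fun i => t (s + i)) a l = up t (s + a) l := by
  induction l with
  | zero => rfl
  | succ l ih => rw [up_succ, up_succ, ih, add_assoc]

lemma dn_shift (s a l : ℕ) : dn (fun i => t (s + i)) a l = dn t (s + a) l := by
  induction l with
  | zero => rfl
  | succ l ih => rw [dn_succ, dn_succ, ih, add_assoc]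

end Blocks

/-- Insertion sort driven by adjacent transpositions, under a permutation-invariant
condition `P` on the lists. -/
lemma sort_lemma {α V : Type*} [Zero V] (le : α → α → Prop) [DecidableRel le] (F : List α → V)
    (P : List α → Prop) (hP : ∀ l l' : List α, l.Perm l' → P l → P l')
    (h : ∀ d x y c, P (d ++ x :: y :: c) → ¬ le x y →
      F (d ++ x :: y :: c) = 0 ∨ F (d ++ x :: y :: c) = F (d ++ y :: x :: c)) :
    ∀ c d, P (d ++ c) → F (d ++ c) = 0 ∨ F (d ++ c) = F (d ++ c.insertionSort le) := by
  have ins : ∀ c x d, P (d ++ x :: c) →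
      F (d ++ x :: c) = 0 ∨ F (d ++ x :: c) = F (d ++ c.orderedInsert le x) := by
    intro c
    induction c with
    | nil => intro x d _; right; rfl
    | cons y c ih =>
      intro x d hp
      rw [List.orderedInsert]
      split_ifs with hxy
      · right; rfl
      · rcases h d x y c hp hxy with h0 | h1
        · exact .inl h0
        · rw [h1]
          have := ih x (d ++ [y]) (hP _ _ (by
            simpa using (List.Perm.swap y x c).append_left d) hp)
          simpa using this
  intro c
  induction c with
  | nil => intro d _; right; rfl
  | cons x c ih =>
    intro d hp
    have h1 := ih (d ++ [x]) (by simpa using hp)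
    rw [List.append_assoc, List.append_assoc] at h1
    rcases h1 with h1 | h1
    · exact .inl h1
    · rw [List.singleton_append] at h1
      rw [h1, List.singleton_append]
      change _ ∨ _ = F (d ++ List.orderedInsert le x (List.insertionSort le c))
      exact ins _ x d (hP _ _ (((List.perm_insertionSort le c).symm.cons x).append_left d) hp)

section Graded

variable {R : Type} [CommRing R] {G : Type*} [Ring G] [Algebra R G]

/-- The relations of the associated graded of the Hecke algebra for the filtration
by the number of letters different from `t_0`. -/
structure GRel (R : Type) [CommRing R] {G : Type*} [Ring G] [Algebra R G] (r : ℕ) (t : ℕ → G) :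
    Prop where
  sq : ∀ i, 1 ≤ i → t i * t i = 0
  comm : ∀ i j, i + 1 < j → t i * t j = t j * t i
  braid : ∀ i, 1 ≤ i → t i * t (i + 1) * t i = t (i + 1) * t i * t (i + 1)
  quart : ∀ k, t 0 * (t 1 * t 0 ^ k * t 1) = (t 1 * t 0 ^ k * t 1) * t 0
  cyc : t 0 ^ r ∈ Submodule.span R {x | ∃ k < r, x = t 0 ^ k}

variable {r : ℕ} {t : ℕ → G}

lemma GRel.br (hG : GRel R r t) (n : ℕ) : Br n t := ⟨fun i j h _ => hG.comm i j h, fun i h _ => hG.braid i h⟩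

lemma GRel.cm (hG : GRel R r t) {i j : ℕ} (h : i + 1 < j ∨ j + 1 < i) : Commute (t i) (t j) :=
  (hG.br (i + j + 1)).cm (by omega) (by omega) h

lemma GRel.bb_far (hG : GRel R r t) {i m k : ℕ} (h : m + 1 < i) : Commute (t i) (bb t m k) :=
  commute_bb fun j _ => hG.cm (by omega)

lemma GRel.bb_comm (hG : GRel R r t) {i m k : ℕ} (hi : i < m) : Commute (t i) (bb t m k) := by
  induction m with
  | zero => omega
  | succ m ih =>
    rw [bb_succ]
    rcases Nat.lt_or_ge i m with hi' | hi'
    · have c : Commute (t i) (t (m + 1)) := hG.cm (by omega)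
      exact (c.mul_right (ih hi')).mul_right c
    · obtain rfl : i = m := by omega
      rcases i with _ | j
      · rw [bb_zero]; exact hG.quart k
      · have c : t (j + 1 + 1) * bb t j k = bb t j k * t (j + 1 + 1) := hG.bb_far (by omega)
        have b := hG.braid (j + 1) (by omega)
        rw [bb_succ]
        unfold Commute SemiconjBy
        generalize bb t j k = x at *
        generalize t (j + 1 + 1) = T at *
        generalize t (j + 1) = s at *
        calc s * (T * (s * x * s) * T) = (s * T * s) * x * s * T := by noncomm_ring
          _ = T * s * (T * x) * s * T := by rw [b]; noncomm_ring
          _ = T * s * x * (T * s * T) := by rw [c]; noncomm_ring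
          _ = T * (s * x * s) * T * s := by rw [← b]; noncomm_ring

lemma GRel.blk_comm (hG : GRel R r t) {i m : ℕ} (hi : i < m) (x : ℕ × ℕ) : Commute (t i) (blk t m x) := by
  refine Commute.mul_right ?_ (commute_up fun j _ _ => hG.cm (by omega))
  split_ifs
  · exact Commute.one_right _
  · exact hG.bb_comm hi

lemma GRel.Wf_comm (hG : GRel R r t) {i m : ℕ} (hi : i < m) (c : List (ℕ × ℕ)) : Commute (t i) (Wf t m c) := by
  induction c with
  | nil => exact Commute.one_right _
  | cons x c ih => exact ih.mul_right (hG.blk_comm (by omega) x)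

end Graded
end HC

/-! ### Reduction to words of coloured compositions -/

namespace HC
open Polynomial

section Mackey

variable {R : Type} [CommRing R] {G : Type*} [Ring G] [Algebra R G]
variable {r : ℕ} {t : ℕ → G}

/-- The subalgebra generated by `t_i`, `i < m`. -/
def GG (R : Type) [CommRing R] {G : Type*} [Ring G] [Algebra R G] (t : ℕ → G) (m : ℕ) :
    Subalgebra R G := Algebra.adjoin R (t '' Set.Iio m)

lemma GG_gen {i m : ℕ} (h : i < m) : t i ∈ GG R t m := Algebra.subset_adjoin ⟨i, h, rfl⟩

lemma GG_mono {m m' : ℕ} (h : m ≤ m') : GG R t m ≤ GG R t m' :=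
  Algebra.adjoin_mono (Set.image_mono fun _ hi => lt_of_lt_of_le hi h)

lemma GG_commute {m : ℕ} {v : G} (h : ∀ i < m, Commute (t i) v) {g : G} (hg : g ∈ GG R t m) :
    Commute g v := by
  have : GG R t m ≤ Subalgebra.centralizer R {v} := by
    refine Algebra.adjoin_le ?_
    rintro _ ⟨i, hi, rfl⟩
    rw [SetLike.mem_coe, Subalgebra.mem_centralizer_iff]
    rintro _ rfl
    exact (h i hi).symm
  exact ((Subalgebra.mem_centralizer_iff R).1 (this hg) v rfl).symm

lemma GG_le_of_right {m : ℕ} (P : Submodule R G) (h1 : (1 : G) ∈ P)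
    (h : ∀ i < m, ∀ x ∈ P, x * t i ∈ P) {g : G} (hg : g ∈ GG R t m) : g ∈ P := by
  let S : Subalgebra R G :=
    { carrier := {a | ∀ x ∈ P, x * a ∈ P}
      mul_mem' := by
        intro a b ha hb x hx
        rw [← mul_assoc]; exact hb _ (ha _ hx)
      add_mem' := by
        intro a b ha hb x hx
        rw [mul_add]; exact P.add_mem (ha _ hx) (hb _ hx)
      algebraMap_mem' := by
        intro a x hx
        rw [← Algebra.commutes, ← Algebra.smul_def]; exact P.smul_mem _ hx }
  have : GG R t m ≤ S := by
    refine Algebra.adjoin_le ?_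
    rintro _ ⟨i, hi, rfl⟩
    exact fun x hx => h i hi x hx
  simpa using this hg 1 h1

/-- The span of the double cosets of `G_m` in `G_{m+1}`. -/
def MM (R : Type) [CommRing R] {G : Type*} [Ring G] [Algebra R G] (r : ℕ) (t : ℕ → G) (m : ℕ) :
    Submodule R G :=
  Submodule.span R ({x | x ∈ GG R t m} ∪
    ({x | ∃ g ∈ GG R t m, ∃ h ∈ GG R t m, 1 ≤ m ∧ x = g * t m * h} ∪
    {x | ∃ g ∈ GG R t m, ∃ k, 1 ≤ k ∧ k < r ∧ x = g * bb t m k}))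

lemma MM_G {m : ℕ} {g : G} (hg : g ∈ GG R t m) : g ∈ MM R r t m :=
  Submodule.subset_span (.inl hg)

lemma MM_T {m : ℕ} {g h : G} (hg : g ∈ GG R t m) (hh : h ∈ GG R t m) (hm : 1 ≤ m) :
    g * t m * h ∈ MM R r t m :=
  Submodule.subset_span (.inr (.inl ⟨g, hg, h, hh, hm, rfl⟩))

lemma MM_b {m k : ℕ} {g : G} (hg : g ∈ GG R t m) (h1 : 1 ≤ k) (h2 : k < r) :
    g * bb t m k ∈ MM R r t m :=
  Submodule.subset_span (.inr (.inr ⟨g, hg, k, h1, h2, rfl⟩))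

lemma MM_left {m : ℕ} {g : G} (hg : g ∈ GG R t m) {x : G} (hx : x ∈ MM R r t m) :
    g * x ∈ MM R r t m := by
  refine Submodule.span_induction (p := fun x _ => g * x ∈ MM R r t m) ?_ ?_ ?_ ?_ hx
  · rintro x (hx | ⟨g', hg', h, hh, hm, rfl⟩ | ⟨g', hg', k, h1, h2, rfl⟩)
    · exact MM_G (mul_mem hg hx)
    · rw [← mul_assoc, ← mul_assoc]; exact MM_T (mul_mem hg hg') hh hm
    · rw [← mul_assoc]; exact MM_b (mul_mem hg hg') h1 h2
  · simp
  · intro x y _ _ h h'; rw [mul_add]; exact add_mem h h'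
  · intro a x _ h; rw [mul_smul_comm]; exact Submodule.smul_mem _ _ h

/-- Double coset decomposition: every element of `G_{m+1}` lies in `MM`. -/
lemma GRel.mackey (hG : GRel R r t) (hr : 1 ≤ r) (m : ℕ) {g : G} (hg : g ∈ GG R t (m + 1)) :
    g ∈ MM R r t m := by
  induction m generalizing g with
  | zero =>
    have pw : ∀ k < r, t 0 ^ k ∈ MM R r t 0 := by
      intro k hk
      rcases Nat.eq_zero_or_pos k with rfl | h
      · rw [pow_zero]; exact MM_G (one_mem _)
      · rw [← bb_zero, ← one_mul (bb t 0 k)]; exact MM_b (one_mem _) h hk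
    have pr : t 0 ^ r ∈ MM R r t 0 := by
      refine (Submodule.span_le.2 ?_) hG.cyc
      rintro _ ⟨k, hk, rfl⟩
      exact pw k hk
    refine GG_le_of_right _ (MM_G (one_mem _)) (fun i hi x hx => ?_) hg
    obtain rfl : i = 0 := by omega
    refine Submodule.span_induction (p := fun x _ => x * t 0 ∈ MM R r t 0) ?_ ?_ ?_ ?_ hx
    · rintro x (hx | ⟨g', hg', h, hh, hm, rfl⟩ | ⟨g', hg', k, h1, h2, rfl⟩)
      · refine MM_left hx ?_
        rw [← pow_one (t 0)]
        rcases Nat.lt_or_ge 1 r with h | h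
        · exact pw 1 h
        · obtain rfl : r = 1 := by omega
          exact pr
      · omega
      · rw [mul_assoc, bb_zero, ← pow_succ]
        refine MM_left hg' ?_
        rcases Nat.lt_or_ge (k + 1) r with h | h
        · exact pw _ h
        · rw [show k + 1 = r by omega]; exact pr
    · simp
    · intro x y _ _ h h'; rw [add_mul]; exact add_mem h h'
    · intro a x _ h; rw [smul_mul_assoc]; exact Submodule.smul_mem _ _ h
  | succ m ih =>
    refine GG_le_of_right _ (MM_G (one_mem _)) (fun i hi x hx => ?_) hg
    refine Submodule.span_induction (p := fun x _ => x * t i ∈ MM R r t (m + 1)) ?_ ?_ ?_ ?_ hx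
    · rintro x (hx | ⟨g', hg', h, hh, hm, rfl⟩ | ⟨g', hg', k, h1, h2, rfl⟩)
      · rcases Nat.lt_or_ge i (m + 1) with h | h
        · exact MM_G (mul_mem hx (GG_gen h))
        · obtain rfl : i = m + 1 := by omega
          rw [← mul_one (x * _)]
          exact MM_T hx (one_mem _) (by omega)
      · rcases Nat.lt_or_ge i (m + 1) with h' | h'
        · rw [mul_assoc]
          exact MM_T hg' (mul_mem hh (GG_gen h')) hm
        · obtain rfl : i = m + 1 := by omega
          rw [mul_assoc, mul_assoc]
          refine MM_left hg' ?_
          have far : ∀ z ∈ GG R t m, Commute z (t (m + 1)) := fun z hz =>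
            GG_commute (fun i hi => hG.cm (by omega)) hz
          have hle := GG_mono (R := R) (t := t) (Nat.le_succ m)
          refine Submodule.span_induction (p := fun h _ => t (m + 1) * (h * t (m + 1)) ∈
            MM R r t (m + 1)) ?_ ?_ ?_ ?_ (ih hh)
          · rintro x (hx | ⟨z, hz, w, hw, hm, rfl⟩ | ⟨z, hz, k, h1, h2, rfl⟩)
            · rw [(far x hx).eq, ← mul_assoc, hG.sq _ (by omega), zero_mul]
              exact zero_mem _
            · have : t (m + 1) * (z * t m * w * t (m + 1)) =
                  (z * t m) * t (m + 1) * (t m * w) := by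
                have b := hG.braid m hm
                have e1 := (far z hz).eq
                have e2 := (far w hw).eq
                calc t (m + 1) * (z * t m * w * t (m + 1))
                    = t (m + 1) * z * t m * (w * t (m + 1)) := by noncomm_ring
                  _ = z * (t (m + 1) * t m * t (m + 1)) * w := by rw [e2, ← e1]; noncomm_ring
                  _ = _ := by rw [← b]; noncomm_ring
              rw [this]
              exact MM_T (mul_mem (hle hz) (GG_gen (by omega)))
                (mul_mem (GG_gen (by omega)) (hle hw)) (by omega)
            · have : t (m + 1) * (z * bb t m k * t (m + 1)) = z * bb t (m + 1) k := by
                rw [bb_succ, mul_assoc z, ← mul_assoc, ← (far z hz).eq]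
                simp only [mul_assoc]
              rw [this]
              exact MM_b (hle hz) h1 h2
          · simp
          · intro x y _ _ h h'; rw [add_mul, mul_add]; exact add_mem h h'
          · intro a x _ h; rw [smul_mul_assoc, mul_smul_comm]; exact Submodule.smul_mem _ _ h
      · rcases Nat.lt_or_ge i (m + 1) with h | h
        · rw [mul_assoc, ← (hG.bb_comm h).eq, ← mul_assoc]
          exact MM_b (mul_mem hg' (GG_gen h)) h1 h2
        · obtain rfl : i = m + 1 := by omega
          rw [bb_succ, mul_assoc, mul_assoc, hG.sq _ (by omega), mul_zero, mul_zero]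
          exact zero_mem _
    · simp
    · intro x y _ _ h h'; rw [add_mul]; exact add_mem h h'
    · intro a x _ h; rw [smul_mul_assoc]; exact Submodule.smul_mem _ _ h

variable {V : Type*} [AddCommGroup V] [Module R V] {φ : G →ₗ[R] V}

/-- A trace function which vanishes on the words of all coloured compositions vanishes. -/
lemma GRel.words (hG : GRel R r t) (hr : 1 ≤ r) (hφ : ∀ x y, φ (x * y) = φ (y * x)) (m : ℕ)
    (v : G) (hv : ∀ i < m, Commute (t i) v)
    (h0 : ∀ c, (∀ x ∈ c, 1 ≤ x.1 ∧ x.2 < r) → sz c = m → φ (Wf t 0 c * v) = 0)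
    {g : G} (hg : g ∈ GG R t m) : φ (g * v) = 0 := by
  induction m using Nat.strong_induction_on generalizing v g with
  | _ m IH =>
  rcases m with _ | m
  · have : g ∈ (⊥ : Subalgebra R G) := by
      have : GG R t 0 = ⊥ := by
        rw [GG, show Set.Iio 0 = (∅ : Set ℕ) by ext; simp, Set.image_empty, Algebra.adjoin_empty]
      rwa [this] at hg
    obtain ⟨a, rfl⟩ := Algebra.mem_bot.1 this
    rw [← Algebra.smul_def, map_smul, ← one_mul v]
    rw [show φ (1 * v) = 0 from h0 [] (by simp) rfl, smul_zero]
  -- remove the last block, whose cycle part so far is `t_{s+1} ⋯ t_m`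
  have key : ∀ s l, s + l = m → ∀ h ∈ GG R t (s + 1), φ (h * up t (s + 1) l * v) = 0 := by
    have block : ∀ s l k, s + l = m → k < r → ∀ h ∈ GG R t s,
        φ (h * (blk t s (l + 1, k) * v)) = 0 := by
      intro s l k hsl hk h hh
      refine IH s (by omega) _ (fun i hi => (hG.blk_comm hi _).mul_right (hv i (by omega))) ?_ hh
      intro c hc hs
      have := h0 ((l + 1, k) :: c) (by
        intro x hx
        rcases List.mem_cons.1 hx with rfl | hx
        · exact ⟨by simp, hk⟩
        · exact hc x hx) (by rw [sz_cons, hs]; simp only; omega)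
      rw [Wf, hs, zero_add, mul_assoc] at this
      exact this
    have b0 : ∀ s l, blk t s (l + 1, 0) = up t (s + 1) l := by intro s l; simp [blk]
    have b1 : ∀ s l k, 1 ≤ k → blk t s (l + 1, k) = bb t s k * up t (s + 1) l := by
      intro s l k hk; simp [blk, show k ≠ 0 by omega]
    intro s
    induction s with
    | zero =>
      intro l hl h hh
      refine Submodule.span_induction (p := fun h _ => φ (h * up t (0 + 1) l * v) = 0)
        ?_ ?_ ?_ ?_ (hG.mackey hr 0 hh)
      · rintro x (hx | ⟨g', hg', h, hh, hm, rfl⟩ | ⟨g', hg', k, h1, h2, rfl⟩)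
        · rw [mul_assoc, ← b0]; exact block 0 l 0 hl hr _ hx
        · omega
        · rw [mul_assoc g', mul_assoc g', ← b1 _ _ _ h1]; exact block 0 l k hl h2 _ hg'
      · simp
      · intro x y _ _ h h'; rw [add_mul, add_mul, map_add, h, h', add_zero]
      · intro a x _ h; rw [smul_mul_assoc, smul_mul_assoc, map_smul, h, smul_zero]
    | succ s ihs =>
      intro l hl h hh
      refine Submodule.span_induction (p := fun h _ => φ (h * up t (s + 1 + 1) l * v) = 0)
        ?_ ?_ ?_ ?_ (hG.mackey hr (s + 1) hh)
      · rintro x (hx | ⟨g', hg', h, hh, hm, rfl⟩ | ⟨g', hg', k, h1, h2, rfl⟩)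
        · rw [mul_assoc, ← b0]; exact block _ l 0 hl hr _ hx
        · have e1 : Commute h (up t (s + 1 + 1) l) := by
            refine GG_commute (fun i hi => ?_) hh
            exact commute_up fun j h1 h2 => hG.cm (by omega)
          have e2 : Commute h v := GG_commute (fun i hi => hv i (by omega)) hh
          have := ihs (l + 1) (by omega) (h * g') (mul_mem hh hg')
          rw [up_succ'] at this
          rw [← this, mul_assoc h, mul_assoc h, hφ h, mul_assoc (_ * _) h, mul_assoc (_ * _) _ v,
            mul_assoc h, (e1.mul_right e2).eq]
          simp only [mul_assoc]
        · rw [mul_assoc g', mul_assoc g', ← b1 _ _ _ h1]; exact block _ l k hl h2 _ hg'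
      · simp
      · intro x y _ _ h h'; rw [add_mul, add_mul, map_add, h, h', add_zero]
      · intro a x _ h; rw [smul_mul_assoc, smul_mul_assoc, map_smul, h, smul_zero]
  simpa using key m 0 rfl g hg

end Mackey
end HC

/-! ### Sorting the blocks -/

namespace HC
open Polynomial

/-- The sort key of a block: blocks of nonzero colour come first, then size, then colour. -/
def key (x : ℕ × ℕ) : ℕ ×ₗ (ℕ ×ₗ ℕ) := toLex (if x.2 = 0 then 1 else 0, toLex (x.1, x.2))

/-- Lists of blocks are read from the end, so they are sorted in decreasing order of keys. -/
def le (x y : ℕ × ℕ) : Prop := key y ≤ key x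

instance : DecidableRel le := fun _ _ => inferInstanceAs (Decidable (_ ≤ _))

lemma key_inj {x y : ℕ × ℕ} (h : key x = key y) : x = y := by
  have h1 : (ofLex (ofLex (key x)).2) = (ofLex (ofLex (key y)).2) := by rw [h]
  exact h1

instance : Std.Total le := ⟨fun x y => le_total (key y) (key x)⟩
instance : IsTrans _ le := ⟨fun _ _ _ h h' => le_trans h' h⟩
instance : Std.Antisymm le := ⟨fun _ _ h h' => key_inj (le_antisymm h' h)⟩

lemma not_le_iff (x y : ℕ × ℕ) : ¬ le x y ↔
    (if x.2 = 0 then 1 else 0) < (if y.2 = 0 then 1 else 0) ∨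
    ((if x.2 = 0 then 1 else 0) = (if y.2 = 0 then 1 else 0) ∧
      (x.1 < y.1 ∨ x.1 = y.1 ∧ x.2 < y.2)) := by
  rw [le, not_le, key, key, Prod.Lex.toLex_lt_toLex, Prod.Lex.toLex_lt_toLex]

section Srt

variable {R : Type} [CommRing R] {G : Type*} [Ring G] [Algebra R G]
variable {r : ℕ} {t : ℕ → G}
variable {V : Type*} [AddCommGroup V] [Module R V] {φ : G →ₗ[R] V}

/-- Two consecutive blocks, the second one being labelled. -/
lemma blk_blk (s a b k l : ℕ) (hl : l ≠ 0) :
    blk t s (a + 1, k) * blk t (s + (a + 1)) (b + 1, l) =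
      (if k = 0 then 1 else bb t s k) * (up (fun i => t (s + i)) 1 a * dn (fun i => t (s + i)) 1 (a + 1))
        * bb t s l * up (fun i => t (s + i)) 1 (a + b + 1) := by
  rw [up_shift, up_shift, dn_shift, show a + b + 1 = a + 1 + b by omega, up_add _ (a + 1) b]
  simp only [blk, hl, if_false, Nat.add_sub_cancel]
  rw [bb, bb, bb, dn_add, up_add, add_comm 1 s]
  rw [show s + (a + 1) + 1 = s + 1 + (a + 1) by omega]
  simp only [mul_assoc]

/-- Two neighbouring blocks in the wrong order can be interchanged under a trace function, unless
the word is killed. The case of two blocks of colour zero is the hypothesis `hS`. -/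
lemma GRel.swap (hG : GRel R r t) (hφ : ∀ x y, φ (x * y) = φ (y * x))
    (n : ℕ)
    (hS : ∀ d c a b, (∀ x ∈ d ++ c, 1 ≤ x.1) → sz d + sz c + a + b + 2 = n → φ (Wf t 0 (d ++ (a + 1, 0) :: (b + 1, 0) :: c)) =
      φ (Wf t 0 (d ++ (b + 1, 0) :: (a + 1, 0) :: c)))
    (d : List (ℕ × ℕ)) (x y : ℕ × ℕ) (c : List (ℕ × ℕ))
    (hP : ∀ z ∈ d ++ x :: y :: c, 1 ≤ z.1) (hn : sz (d ++ x :: y :: c) = n) (hle : ¬ le x y) :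
    φ (Wf t 0 (d ++ x :: y :: c)) = 0 ∨
      φ (Wf t 0 (d ++ x :: y :: c)) = φ (Wf t 0 (d ++ y :: x :: c)) := by
  have hx := hP x (by simp)
  have hy := hP y (by simp)
  have hc : ∀ z ∈ c, 1 ≤ z.1 := fun z hz => hP z (by simp [hz])
  obtain ⟨b, hb⟩ : ∃ b, x.1 = b + 1 := ⟨x.1 - 1, by omega⟩
  obtain ⟨a, ha⟩ : ∃ a, y.1 = a + 1 := ⟨y.1 - 1, by omega⟩
  rw [not_le_iff] at hle
  obtain ⟨x1, l⟩ := x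
  obtain ⟨y1, k⟩ := y
  simp only at ha hb hle
  subst ha hb
  have exp : ∀ a k b l, Wf t 0 (d ++ (b + 1, l) :: (a + 1, k) :: c) =
      Wf t 0 c * (blk t (sz c) (a + 1, k) * blk t (sz c + (a + 1)) (b + 1, l)) *
        Wf t (sz c + (a + 1) + (b + 1)) d := by
    intro a k b l
    rw [Wf_append, Wf, Wf]
    simp only [sz_cons, zero_add, mul_assoc]
    rw [show b + 1 + (a + 1 + sz c) = sz c + (a + 1) + (b + 1) by omega,
      show a + 1 + sz c = sz c + (a + 1) by omega]
  by_cases hl : l = 0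
  · by_cases hk : k = 0
    · subst hl hk
      refine .inr (hS d c b a (fun z hz => hP z ?_) ?_)
      · simp only [List.mem_append, List.mem_cons] at hz ⊢; tauto
      · simp only [sz_append, sz_cons] at hn; omega
    · simp [hl, hk] at hle
  set ψ : G → V := fun z => φ (Wf t 0 c * z * Wf t (sz c + (a + 1) + (b + 1)) d) with hψ
  have hB : ∀ n, Br n (fun i => t (sz c + i)) := fun n =>
    ⟨fun i j h _ => hG.comm _ _ (by omega), fun i h _ => hG.braid _ (by omega)⟩
  have hsq : ∀ i, 1 ≤ i → t (sz c + i) * t (sz c + i) = 0 := fun i hi => hG.sq _ (by omega)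
  have h0 : ψ 0 = 0 := by simp [hψ]
  have hrot : ∀ i, 1 ≤ i → i ≤ a + b + 1 → Rot ψ (t (sz c + i)) := by
    intro i h1 h2 z
    have e1 : Commute (t (sz c + i)) (Wf t 0 c) :=
      commute_Wf hc fun j hj => hG.cm (by omega)
    have e2 : Commute (t (sz c + i)) (Wf t (sz c + (a + 1) + (b + 1)) d) :=
      hG.Wf_comm (by omega) d
    simp only [hψ]
    rw [← mul_assoc, ← e1.eq, mul_assoc, mul_assoc, hφ, mul_assoc, mul_assoc, ← e2.eq]
    simp only [mul_assoc]
  have far : ∀ k i, 2 ≤ i → Commute (bb t (sz c) k) (t (sz c + i)) := fun k i hi =>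
    (hG.bb_far (by omega)).symm
  rw [exp a k b l, blk_blk _ _ _ _ _ hl]
  change ψ _ = 0 ∨ ψ _ = _
  by_cases hk : k = 0
  · left
    rw [if_pos hk, one_mul]
    exact swap_zero hB hsq h0 hrot (far l)
  rw [if_neg hk]
  rw [if_neg hk, if_neg hl] at hle
  rcases Nat.lt_or_ge b a with hab | hab
  · left
    exact swap_gt hB hsq h0 hab hrot (far k) (far l)
  · right
    obtain rfl : b = a := by omega
    rw [exp b l b k, blk_blk _ _ _ _ _ hk, if_neg hl]
    refine swap_eq hB (fun i h1 h2 => hrot i h1 (by omega)) (far k) (far l) ?_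
    have : t (sz c + 1) * bb t (sz c) l * t (sz c + 1) = bb t (sz c + 1) l := (bb_succ _ _).symm
    rw [this]
    exact (commute_bb fun i hi => (hG.bb_comm (by omega)).symm).symm

/-- A trace function on `G_n` which vanishes on the words of sorted coloured compositions
vanishes. -/
lemma GRel.sorted (hG : GRel R r t) (hr : 1 ≤ r) (hφ : ∀ x y, φ (x * y) = φ (y * x))
    (n : ℕ)
    (hS : ∀ d c a b, (∀ x ∈ d ++ c, 1 ≤ x.1) → sz d + sz c + a + b + 2 = n → φ (Wf t 0 (d ++ (a + 1, 0) :: (b + 1, 0) :: c)) =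
      φ (Wf t 0 (d ++ (b + 1, 0) :: (a + 1, 0) :: c)))
    (h0 : ∀ c, (∀ x ∈ c, 1 ≤ x.1 ∧ x.2 < r) → sz c = n → φ (Wf t 0 (c.insertionSort le)) = 0)
    {g : G} (hg : g ∈ GG R t n) : φ g = 0 := by
  rw [← mul_one g]
  refine hG.words hr hφ n 1 (fun i _ => Commute.one_right _) (fun c hc hs => ?_) hg
  rw [mul_one]
  rcases sort_lemma le (fun c => φ (Wf t 0 c)) (fun c => (∀ x ∈ c, 1 ≤ x.1) ∧ sz c = n)
    (fun l l' hl hP => ⟨fun x hx => hP.1 x (hl.mem_iff.2 hx), by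
      rw [← hP.2]; exact ((hl.map Prod.fst).sum_eq).symm⟩)
    (fun d x y c hP h => hG.swap hφ n hS d x y c hP.1 hP.2 h) c []
    ⟨fun z hz => (hc z hz).1, hs⟩ with h | h
  · exact h
  · exact h.trans (h0 c hc hs)

end Srt
end HC

/-! ### Interchanging blocks of colour zero -/

namespace HC
open Polynomial

section Unlabelled

variable {B : Type*} [Ring B] {V : Type*} {y : ℕ → B} {N : ℕ}

/-- The braid `U_B ⋯ U_1` with `U_s = y_s ⋯ y_{s+A-1}`, which moves the strings `1, …, A`
past the next `B` strings. -/
def ww (y : ℕ → B) (A : ℕ) : ℕ → B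
  | 0 => 1
  | b + 1 => up y (b + 1) A * ww y A b

/-- Conjugation by the braid `ww` shifts the first group of strings up. -/
lemma ww_low (h : Br N y) {A i b : ℕ} (hi : 1 ≤ i) (hA : i < A) (hN : A + b ≤ N) :
    ww y A b * y i = y (i + b) * ww y A b := by
  induction b with
  | zero => simp [ww]
  | succ b ih =>
    rw [ww, mul_assoc, ih (by omega), ← mul_assoc,
      h.up_mul (by omega) (by omega) (by omega) (by omega), mul_assoc, add_assoc]

lemma ww_far (h : Br N y) {A i b : ℕ} (hi : A + b + 1 ≤ i) (hN : i < N) :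
    ww y A b * y i = y i * ww y A b := by
  induction b with
  | zero => simp [ww]
  | succ b ih =>
    have : up y (b + 1) A * y i = y i * up y (b + 1) A :=
      (commute_up (b := y i) fun j h1 h2 => h.cm (by omega) (by omega) (by omega)).symm
    rw [ww, mul_assoc, ih (by omega), ← mul_assoc, this, mul_assoc]

/-- Conjugation by the braid `ww` shifts the second group of strings down. -/
lemma ww_high (h : Br N y) {A i b : ℕ} (hi : 1 ≤ i) (hb : i < b) (hN : A + b ≤ N) :
    ww y A b * y (A + i) = y i * ww y A b := by
  induction b with
  | zero => omega
  | succ b ih =>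
    rcases Nat.lt_or_ge i b with hib | hib
    · have : up y (b + 1) A * y i = y i * up y (b + 1) A :=
        (commute_up (b := y i) fun j h1 h2 => h.cm (by omega) (by omega) (by omega)).symm
      rw [ww, mul_assoc, ih hib (by omega), ← mul_assoc, this, mul_assoc]
    · obtain rfl : i = b := by omega
      obtain ⟨j, rfl⟩ : ∃ j, i = j + 1 := ⟨i - 1, by omega⟩
      have key : ∀ l ≤ A, y (j + 1) * up y (j + 1 + 1) A * up y (j + 1) l =
          up y (j + 1 + 1) l * (y (j + 1) * up y (j + 1 + 1) A) := by
        intro l hl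
        induction l with
        | zero => simp
        | succ l ihl =>
          rw [up_succ, ← mul_assoc, ihl (by omega), mul_assoc, ← up_succ',
            h.up_mul (by omega) (by omega) (by omega) (by omega), up_succ (j + 1 + 1) l]
          rw [show j + 1 + l + 1 = j + 1 + 1 + l by omega, mul_assoc]
      have k := key A le_rfl
      rw [ww, ww, mul_assoc, mul_assoc, ww_far h (by omega) (by omega), ← mul_assoc (up y (j + 1) A),
        show A + (j + 1) = j + 1 + A by omega, ← up_succ, up_succ', ← mul_assoc, ← k]
      simp only [mul_assoc]

lemma Rot.of_inv {ψ : B → V} {w w' : B} (h : Rot ψ w) (h1 : w * w' = 1) (h2 : w' * w = 1) :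
    Rot ψ w' := fun z => by
  have := h (w' * z * w')
  rw [← mul_assoc, ← mul_assoc, h1, one_mul, mul_assoc (w' * z), h2, mul_one] at this
  exact this.symm

/-- Two adjacent unlabelled blocks can be interchanged. -/
lemma swap_unl {ψ : B → V} (h : Br N y) (A A' : ℕ) (hN : A + A' + 2 ≤ N)
    (hu : ∀ i, 1 ≤ i → i < A + A' + 2 → IsUnit (y i))
    (hψ : ∀ i, 1 ≤ i → i < A + A' + 2 → Rot ψ (y i)) :
    ψ (up y 1 A * up y (A + 1 + 1) A') = ψ (up y 1 A' * up y (A' + 1 + 1) A) := by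
  set w := ww y (A + 1) (A' + 1) with hw
  have upmem : ∀ (S : Submonoid B) (a l : ℕ), (∀ i, a ≤ i → i < a + l → y i ∈ S) →
      up y a l ∈ S := by
    intro S a l hS
    induction l with
    | zero => exact one_mem _
    | succ l ih =>
      exact mul_mem (ih fun i h1 h2 => hS i h1 (by omega)) (hS _ (by omega) (by omega))
  have wmem : ∀ S : Submonoid B, (∀ i, 1 ≤ i → i < A + A' + 2 → y i ∈ S) → w ∈ S := by
    intro S hS
    have : ∀ b ≤ A' + 1, ww y (A + 1) b ∈ S := by
      intro b hb
      induction b with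
      | zero => exact one_mem _
      | succ b ih =>
        exact mul_mem (upmem S _ _ fun i h1 h2 => hS i (by omega) (by omega)) (ih (by omega))
    exact this _ le_rfl
  obtain ⟨u, hwu⟩ : IsUnit w := wmem (IsUnit.submonoid B) hu
  have hrot : Rot ψ w := by
    refine wmem ⟨⟨{x | Rot ψ x}, fun ha hb => ?_⟩, ?_⟩ hψ
    · intro z
      rw [mul_assoc, ha, mul_assoc, hb, mul_assoc]
    · intro z; rw [one_mul, mul_one]
  have low : ∀ l ≤ A, w * up y 1 l = up y (A' + 1 + 1) l * w := by
    intro l hl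
    induction l with
    | zero => simp
    | succ l ih =>
      rw [up_succ, ← mul_assoc, ih (by omega), mul_assoc, hw,
        ww_low h (by omega) (by omega) (by omega), up_succ, mul_assoc,
        show 1 + l + (A' + 1) = A' + 1 + 1 + l by omega]
  have high : ∀ l ≤ A', w * up y (A + 1 + 1) l = up y 1 l * w := by
    intro l hl
    induction l with
    | zero => simp
    | succ l ih =>
      rw [up_succ, ← mul_assoc, ih (by omega), mul_assoc, hw,
        show A + 1 + 1 + l = (A + 1) + (1 + l) by omega,
        ww_high h (by omega) (by omega) (by omega), up_succ, mul_assoc]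
  have com : up y (A' + 1 + 1) A * up y 1 A' = up y 1 A' * up y (A' + 1 + 1) A := by
    refine commute_up fun i h1 h2 => (commute_up fun j h3 h4 => ?_).symm
    exact h.cm (by omega) (by omega) (by omega)
  have e : w * (up y 1 A * up y (A + 1 + 1) A') = (up y 1 A' * up y (A' + 1 + 1) A) * w := by
    rw [← mul_assoc, low A le_rfl, mul_assoc, high A' le_rfl, ← mul_assoc, com]
  have h1 : w * ↑u⁻¹ = 1 := by rw [← hwu, Units.mul_inv]
  have h2 : ↑u⁻¹ * w = 1 := by rw [← hwu, Units.inv_mul]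
  calc ψ (up y 1 A * up y (A + 1 + 1) A')
      = ψ (↑u⁻¹ * (w * (up y 1 A * up y (A + 1 + 1) A'))) := by rw [← mul_assoc, h2, one_mul]
    _ = _ := by rw [e, hrot.of_inv h1 h2, mul_assoc, h1, mul_one]

variable {t : ℕ → B}

lemma Br.bb_comm (h : Br N t) {i m k : ℕ} (h1 : 1 ≤ i) (hi : i < m) (hm : m < N) :
    Commute (t i) (bb t m k) := by
  have c : t (i + 1) * t 0 ^ k = t 0 ^ k * t (i + 1) :=
    ((h.cm (by omega) (by omega) (by omega) : Commute (t (i + 1)) (t 0)).pow_right k).eq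
  unfold Commute SemiconjBy
  rw [bb, ← mul_assoc, ← mul_assoc, h.mul_dn le_rfl (by omega) h1 (by omega), mul_assoc (dn t 1 m),
    c, mul_assoc _ _ (t i), h.up_mul le_rfl (by omega) h1 (by omega)]
  simp only [mul_assoc]

lemma Br.Wf_comm (h : Br N t) {i m : ℕ} (h1 : 1 ≤ i) (hi : i < m) (c : List (ℕ × ℕ))
    (hc : ∀ x ∈ c, 1 ≤ x.1) (hm : m + sz c ≤ N) : Commute (t i) (Wf t m c) := by
  induction c with
  | nil => exact Commute.one_right _
  | cons x c ih =>
    rw [sz_cons] at hm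
    have hx := hc x (by simp)
    refine (ih (fun z hz => hc z (by simp [hz])) (by omega)).mul_right (Commute.mul_right ?_
      (commute_up fun j _ _ => h.cm (by omega) (by omega) (by omega)))
    split_ifs
    · exact Commute.one_right _
    · exact h.bb_comm h1 (by omega) (by omega)

/-- Interchange of adjacent unlabelled blocks in the word of a coloured composition. -/
lemma Br.swap {φ : B → V} (h : Br N t) (hφ : ∀ x y, φ (x * y) = φ (y * x))
    (hu : ∀ i, 1 ≤ i → i < N → IsUnit (t i)) (d c : List (ℕ × ℕ)) (a b : ℕ)
    (hP : ∀ x ∈ d ++ c, 1 ≤ x.1) (hN : sz d + sz c + a + b + 2 = N) :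
    φ (Wf t 0 (d ++ (a + 1, 0) :: (b + 1, 0) :: c)) =
      φ (Wf t 0 (d ++ (b + 1, 0) :: (a + 1, 0) :: c)) := by
  have exp : ∀ a b, Wf t 0 (d ++ (b + 1, 0) :: (a + 1, 0) :: c) =
      Wf t 0 c * (up (fun i => t (sz c + i)) 1 a * up (fun i => t (sz c + i)) (a + 1 + 1) b) *
        Wf t (sz c + (a + 1) + (b + 1)) d := by
    intro a b
    rw [Wf_append, Wf, Wf, up_shift, up_shift]
    simp only [sz_cons, zero_add, mul_assoc, blk, if_true, one_mul, Nat.add_sub_cancel]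
    rw [show b + 1 + (a + 1 + sz c) = sz c + (a + 1) + (b + 1) by omega,
      show a + 1 + sz c + 1 = sz c + (a + 1 + 1) by omega]
  have hc : ∀ z ∈ c, 1 ≤ z.1 := fun z hz => hP z (by simp [hz])
  rw [exp, exp, show sz c + (a + 1) + (b + 1) = sz c + (b + 1) + (a + 1) by omega]
  refine swap_unl (N := b + a + 2)
    (ψ := fun z => φ (Wf t 0 c * z * Wf t (sz c + (b + 1) + (a + 1)) d)) ?_ b a le_rfl ?_ ?_
  · exact ⟨fun i j h1 _ => h.comm _ _ (by omega) (by omega), fun i h1 _ => h.braid _ (by omega) (by omega)⟩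
  · exact fun i h1 h2 => hu _ (by omega) (by omega)
  · intro i h1 h2 z
    have e1 : Commute (t (sz c + i)) (Wf t 0 c) :=
      commute_Wf hc fun j hj => h.cm (by omega) (by omega) (by omega)
    have e2 : Commute (t (sz c + i)) (Wf t (sz c + (b + 1) + (a + 1)) d) :=
      h.Wf_comm (by omega) (by omega) d (fun z hz => hP z (by simp [hz])) (by omega)
    simp only
    rw [← mul_assoc, ← e1.eq, mul_assoc, mul_assoc, hφ, mul_assoc, mul_assoc, ← e2.eq]
    simp only [mul_assoc]

end Unlabelled
end HC

/-! ### Radical quotients and membership -/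

namespace HC
open Polynomial

/-- The quotient of an algebra by the largest two-sided ideal on which a functional vanishes. -/
lemma exists_radical_quotient {R : Type} [CommRing R] {F : Type} [Ring F] [Algebra R F]
    {V : Type*} [AddCommGroup V] [Module R V] (Φ : F →ₗ[R] V) :
    ∃ (G : Type) (_ : Ring G) (_ : Algebra R G) (π : F →ₐ[R] G) (φ : G →ₗ[R] V),
      (∀ x, φ (π x) = Φ x) ∧ Function.Surjective π ∧
      ∀ x, (∀ u v, Φ (u * x * v) = 0) → π x = 0 := by
  let J : Ideal F :=
    { carrier := {x | ∀ u v, Φ (u * x * v) = 0}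
      add_mem' := by
        intro a b ha hb u v
        rw [mul_add, add_mul, map_add, ha, hb, add_zero]
      zero_mem' := by intro u v; simp
      smul_mem' := by
        intro c x hx u v
        rw [smul_eq_mul, ← mul_assoc]; exact hx _ _ }
  have : J.IsTwoSided := ⟨fun {a} b ha u v => by rw [← mul_assoc, mul_assoc]; exact ha _ _⟩
  have hJ : ∀ x ∈ J, Φ x = 0 := fun x hx => by simpa using hx 1 1
  let φ : F ⧸ J →ₗ[R] V :=
    { toFun := Quotient.lift Φ (fun a b hab => by
        have : a - b ∈ J := (Submodule.quotientRel_def J).1 hab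
        exact sub_eq_zero.1 (by rw [← map_sub]; exact hJ _ this))
      map_add' := by
        rintro ⟨a⟩ ⟨b⟩
        exact map_add Φ a b
      map_smul' := by
        rintro c ⟨a⟩
        exact map_smul Φ c a }
  refine ⟨F ⧸ J, inferInstance, inferInstance, Ideal.Quotient.mkₐ R J, φ, fun x => rfl,
    Ideal.Quotient.mkₐ_surjective R J, fun x hx => ?_⟩
  rw [Ideal.Quotient.mkₐ_eq_mk, Ideal.Quotient.eq_zero_iff_mem]
  exact hx

section Mem
variable {B : Type*} [Monoid B] {t : ℕ → B}

lemma up_mem (S : Submonoid B) {a l : ℕ} (h : ∀ i, i < a + l → t i ∈ S) : up t a l ∈ S := by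
  induction l with
  | zero => exact one_mem _
  | succ l ih => exact mul_mem (ih fun i h2 => h i (by omega)) (h _ (by omega))

lemma dn_mem (S : Submonoid B) {a l : ℕ} (h : ∀ i, i < a + l → t i ∈ S) : dn t a l ∈ S := by
  induction l with
  | zero => exact one_mem _
  | succ l ih => exact mul_mem (h _ (by omega)) (ih fun i h2 => h i (by omega))

lemma bb_mem (S : Submonoid B) {m k : ℕ} (h : ∀ i ≤ m, t i ∈ S) : bb t m k ∈ S :=
  mul_mem (mul_mem (dn_mem S fun i _ => h i (by omega)) (pow_mem (h 0 (by omega)) k))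
    (up_mem S fun i _ => h i (by omega))

lemma blk_mem (S : Submonoid B) {m : ℕ} {x : ℕ × ℕ} (hx : 1 ≤ x.1)
    (h : ∀ i < m + x.1, t i ∈ S) : blk t m x ∈ S := by
  refine mul_mem ?_ (up_mem S fun i _ => h i (by omega))
  split_ifs
  · exact one_mem _
  · exact bb_mem S fun i _ => h i (by omega)

lemma Wf_mem (S : Submonoid B) {m : ℕ} {c : List (ℕ × ℕ)} (hc : ∀ x ∈ c, 1 ≤ x.1)
    (h : ∀ i < m + sz c, t i ∈ S) : Wf t m c ∈ S := by
  induction c with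
  | nil => exact one_mem _
  | cons x c ih =>
    rw [sz_cons] at h
    exact mul_mem (ih (fun z hz => hc z (by simp [hz])) fun i hi => h i (by omega))
      (blk_mem S (hc x (by simp)) fun i hi => h i (by omega))

end Mem
end HC

/-! ### Filtration by the number of letters different from `t_0` -/

namespace HC
open Polynomial

/-- The number of letters different from `0` of a word. -/
def dg : FreeMonoid ℕ →* Multiplicative ℕ :=
  FreeMonoid.lift fun i => if i = 0 then 1 else Multiplicative.ofAdd 1

/-- The words whose letters are smaller than `n`. -/
def okS (n : ℕ) : Submonoid (FreeMonoid ℕ) where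
  carrier := {w | ∀ i ∈ w.toList, i < n}
  mul_mem' := by
    intro a b ha hb i hi
    rw [FreeMonoid.toList_mul, List.mem_append] at hi
    exact hi.elim (ha i) (hb i)
  one_mem' := by intro i hi; simp at hi

lemma okS_mul {n : ℕ} {a b : FreeMonoid ℕ} : a * b ∈ okS n ↔ a ∈ okS n ∧ b ∈ okS n := by
  refine ⟨fun h => ⟨fun i hi => h i ?_, fun i hi => h i ?_⟩, fun h => mul_mem h.1 h.2⟩
  · rw [FreeMonoid.toList_mul, List.mem_append]; exact .inl hi
  · rw [FreeMonoid.toList_mul, List.mem_append]; exact .inr hi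

lemma okS_of {n i : ℕ} : FreeMonoid.of i ∈ okS n ↔ i < n := by
  constructor
  · intro h; exact h i (by simp)
  · intro h j hj
    simp at hj
    omega

/-- The degree of a word. -/
def dd (w : FreeMonoid ℕ) : ℕ := (dg w).toAdd

lemma dd_mul (a b : FreeMonoid ℕ) : dd (a * b) = dd a + dd b := by simp [dd]
lemma dd_zero : dd (FreeMonoid.of 0) = 0 := by simp [dd, dg]
lemma dd_pos {i : ℕ} (h : 1 ≤ i) : dd (FreeMonoid.of i) = 1 := by
  simp [dd, dg, show i ≠ 0 by omega]
lemma dd_zero_pow (k : ℕ) : dd (FreeMonoid.of 0 ^ k) = 0 := by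
  induction k with
  | zero => simp [dd]
  | succ k ih => rw [pow_succ, dd_mul, ih, dd_zero]

lemma dd_Wf_swap (d c : List (ℕ × ℕ)) (a b : ℕ) (hP : ∀ x ∈ d ++ c, 1 ≤ x.1) :
    dd (Wf FreeMonoid.of 0 (d ++ (a + 1, 0) :: (b + 1, 0) :: c)) =
      dd (Wf FreeMonoid.of 0 (d ++ (b + 1, 0) :: (a + 1, 0) :: c)) := by
  have hd : ∀ x ∈ d, 1 ≤ x.1 := fun x hx => hP x (by simp [hx])
  have hc : ∀ x ∈ c, 1 ≤ x.1 := fun x hx => hP x (by simp [hx])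
  have hb : ∀ m a, dd (blk FreeMonoid.of m (a + 1, 0)) = a := by
    intro m a
    simp only [blk, if_true, one_mul, Nat.add_sub_cancel]
    induction a with
    | zero => simp [dd]
    | succ a ih => rw [up_succ, dd_mul, ih, dd_pos (by omega)]
  rw [Wf_append, Wf_append, Wf, Wf, Wf, Wf]
  simp only [dd_mul, hb, sz_cons]
  rw [show b + 1 + (a + 1 + sz c) = a + 1 + (b + 1 + sz c) by omega]
  omega

section Main

variable {R : Type} [CommRing R] {r n : ℕ} {ξ : R} {Q : Fin r → R}

/-- The value in the Hecke algebra of a word. -/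
def vl (R : Type) [CommRing R] (r n : ℕ) (ξ : R) (Q : Fin r → R) : FreeMonoid ℕ →* HA R r n ξ Q :=
  FreeMonoid.lift (tn R r n ξ Q)

lemma tn_isUnit (hξ : IsUnit ξ) {i : ℕ} (h1 : 1 ≤ i) (hi : i < n) : IsUnit (tn R r n ξ Q i) := by
  obtain ⟨u, rfl⟩ := hξ
  have q := (HRel_tn (R := R) (n := n) (Q := Q) (ξ := (u : R))).quad i h1 hi
  have c : tn R r n (u : R) Q i * (tn R r n (u : R) Q i - ((u : R) - 1) • 1) = (u : R) • 1 := by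
    rw [mul_sub, q, mul_smul_comm, mul_one]; abel
  have c' : (tn R r n (u : R) Q i - ((u : R) - 1) • 1) * tn R r n (u : R) Q i = (u : R) • 1 := by
    rw [sub_mul, q, smul_mul_assoc, one_mul]; abel
  refine ⟨⟨tn R r n (u : R) Q i, ((u⁻¹ : Rˣ) : R) • (tn R r n (u : R) Q i - ((u : R) - 1) • 1),
    ?_, ?_⟩, rfl⟩
  · rw [mul_smul_comm, c, smul_smul, Units.inv_mul, one_smul]
  · rw [smul_mul_assoc, c', smul_smul, Units.inv_mul, one_smul]

open Classical in
/-- The degree `l` part of the pull back of `φ` to the free algebra. -/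
def Phi {V : Type*} [AddCommGroup V] [Module R V] (φ : HA R r n ξ Q →ₗ[R] V) (l : ℕ) :
    MonoidAlgebra R (FreeMonoid ℕ) →ₗ[R] V :=
  (Finsupp.linearCombination R
    (fun w => if w ∈ okS n ∧ dd w = l then φ (vl R r n ξ Q w) else 0)) ∘ₗ
    (MonoidAlgebra.coeffLinearEquiv R).toLinearMap

variable {V : Type*} [AddCommGroup V] [Module R V] {φ : HA R r n ξ Q →ₗ[R] V} {l : ℕ}

open Classical in
lemma Phi_single (w : FreeMonoid ℕ) (a : R) : Phi φ l (MonoidAlgebra.single w a) =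
    a • if w ∈ okS n ∧ dd w = l then φ (vl R r n ξ Q w) else 0 := by
  simp [Phi]

local notation "𝐨" => MonoidAlgebra.of R (FreeMonoid ℕ)

lemma Phi_pos {w : FreeMonoid ℕ} (h1 : w ∈ okS n) (h2 : dd w = l) :
    Phi φ l (𝐨 w) = φ (vl R r n ξ Q w) := by
  rw [MonoidAlgebra.of_apply, Phi_single, if_pos ⟨h1, h2⟩, one_smul]

lemma Phi_neg {w : FreeMonoid ℕ} (h : ¬ (w ∈ okS n ∧ dd w = l)) :
    Phi φ l (𝐨 w) = 0 := by
  rw [MonoidAlgebra.of_apply, Phi_single, if_neg h, smul_zero]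

lemma Phi_trace (hφ : ∀ x y, φ (x * y) = φ (y * x)) (x y : MonoidAlgebra R (FreeMonoid ℕ)) :
    Phi φ l (x * y) = Phi φ l (y * x) := by
  induction x using MonoidAlgebra.induction_linear with
  | zero => simp
  | add a b ha hb => rw [add_mul, mul_add, map_add, map_add, ha, hb]
  | single u a =>
  induction y using MonoidAlgebra.induction_linear with
  | zero => simp
  | add a b ha hb => rw [add_mul, mul_add, map_add, map_add, ha, hb]
  | single v b =>
  rw [MonoidAlgebra.single_mul_single, MonoidAlgebra.single_mul_single, Phi_single, Phi_single,
    mul_comm a b, okS_mul, okS_mul, dd_mul, dd_mul, add_comm (dd u), and_comm (a := u ∈ okS n),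
    map_mul, hφ, ← map_mul]

/-- A two-sided multiple of `x` is killed by `Phi` as soon as this holds for multiples by words. -/
lemma Phi_test {x : MonoidAlgebra R (FreeMonoid ℕ)}
    (h : ∀ u v : FreeMonoid ℕ, Phi φ l (𝐨 u * x * 𝐨 v) = 0) (u v : MonoidAlgebra R (FreeMonoid ℕ)) :
    Phi φ l (u * x * v) = 0 := by
  induction u using MonoidAlgebra.induction_linear with
  | zero => simp
  | add a b ha hb => rw [add_mul, add_mul, map_add, ha, hb, add_zero]
  | single u a =>
  induction v using MonoidAlgebra.induction_linear with
  | zero => simp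
  | add a b ha hb => rw [mul_add, map_add, ha, hb, add_zero]
  | single v b =>
  have e : ∀ (w : FreeMonoid ℕ) (a : R), MonoidAlgebra.single w a = a • 𝐨 w := by
    intro w a; simp
  rw [e, e, smul_mul_assoc, smul_mul_assoc, mul_smul_comm, map_smul, map_smul, h, smul_zero,
    smul_zero]

end Main
end HC

/-! ### Spanning of the cocenter -/

namespace HC
open Polynomial

section Cocenter

variable {R : Type} [CommRing R] {r n : ℕ} {ξ : R} {Q : Fin r → R}
variable {V : Type*} [AddCommGroup V] [Module R V] {φ : HA R r n ξ Q →ₗ[R] V}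

lemma vl_of (i : ℕ) : vl R r n ξ Q (FreeMonoid.of i) = tn R r n ξ Q i := by simp [vl]

/-- A trace function vanishing on all words with fewer than `l` letters `≠ 0` and on the words of
the sorted coloured compositions vanishes on the words with `l` letters `≠ 0`. -/
lemma trace_step [hG : Good ξ Q] (hn : 1 ≤ n) (hφ : ∀ x y, φ (x * y) = φ (y * x))
    (h0 : ∀ c, (∀ x ∈ c, 1 ≤ x.1 ∧ x.2 < r) → sz c = n →
      φ (Wf (tn R r n ξ Q) 0 (c.insertionSort le)) = 0) (l : ℕ)
    (low : ∀ w ∈ okS n, dd w < l → φ (vl R r n ξ Q w) = 0) (w : FreeMonoid ℕ) (hw : w ∈ okS n)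
    (hl : dd w = l) : φ (vl R r n ξ Q w) = 0 := by
  obtain ⟨G, iG, aG, π, ψ, hψ, hsurj, hker⟩ := exists_radical_quotient (Phi φ l)
  have hH := HRel_tn (R := R) (n := n) (Q := Q) (ξ := ξ)
  set o := MonoidAlgebra.of R (FreeMonoid ℕ) with ho
  set t : ℕ → G := fun i => π (o (FreeMonoid.of i)) with ht
  have ker1 : ∀ x, (∀ u v : FreeMonoid ℕ, Phi φ l (o u * x * o v) = 0) → π x = 0 :=
    fun x hx => hker x (Phi_test hx)
  have rel1 : ∀ w, (∀ u ∈ okS n, ∀ v ∈ okS n, w ∈ okS n → dd u + dd w + dd v = l →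
      φ (vl R r n ξ Q u * vl R r n ξ Q w * vl R r n ξ Q v) = 0) → π (o w) = 0 := by
    intro w h
    refine ker1 _ fun u v => ?_
    rw [← map_mul, ← map_mul]
    by_cases hc : u * w * v ∈ okS n ∧ dd (u * w * v) = l
    · rw [Phi_pos hc.1 hc.2, map_mul (vl R r n ξ Q), map_mul (vl R r n ξ Q)]
      rw [okS_mul, okS_mul, dd_mul, dd_mul] at hc
      exact h u hc.1.1.1 v hc.1.2 hc.1.1.2 hc.2
    · exact Phi_neg hc
  have rel2 : ∀ w w', (w ∈ okS n ↔ w' ∈ okS n) → dd w = dd w' →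
      (∀ u ∈ okS n, ∀ v ∈ okS n, w ∈ okS n → dd u + dd w + dd v = l →
      φ (vl R r n ξ Q u * vl R r n ξ Q w * vl R r n ξ Q v) =
        φ (vl R r n ξ Q u * vl R r n ξ Q w' * vl R r n ξ Q v)) → π (o w) = π (o w') := by
    intro w w' h1 h2 h
    rw [← sub_eq_zero, ← map_sub]
    refine ker1 _ fun u v => ?_
    rw [mul_sub, sub_mul, ← map_mul, ← map_mul, ← map_mul, ← map_mul, map_sub, sub_eq_zero]
    by_cases hc : u * w * v ∈ okS n ∧ dd (u * w * v) = l
    · have hc' : u * w' * v ∈ okS n ∧ dd (u * w' * v) = l := by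
        rw [okS_mul, okS_mul, dd_mul, dd_mul] at hc ⊢
        rwa [← h1, ← h2]
      rw [Phi_pos hc.1 hc.2, Phi_pos hc'.1 hc'.2]
      rw [okS_mul, okS_mul, dd_mul, dd_mul] at hc
      simp only [map_mul]
      exact h u hc.1.1.1 v hc.1.2 hc.1.1.2 hc.2
    · have hc' : ¬ (u * w' * v ∈ okS n ∧ dd (u * w' * v) = l) := by
        rw [okS_mul, okS_mul, dd_mul, dd_mul] at hc ⊢
        rwa [← h1, ← h2]
      rw [Phi_neg hc, Phi_neg hc']
  have hrel : GRel R r t := by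
    refine ⟨?_, ?_, ?_, ?_, ?_⟩
    · intro i hi
      rw [ht]
      simp only
      rw [← map_mul, ← map_mul]
      refine rel1 _ fun u hu v hv hw hd => ?_
      rw [okS_mul, okS_of] at hw
      rw [dd_mul, dd_pos hi] at hd
      have e1 := low (u * FreeMonoid.of i * v) (mul_mem (mul_mem hu (okS_of.2 hw.1)) hv) (by
        rw [dd_mul, dd_mul, dd_pos hi]; omega)
      have e2 := low (u * v) (mul_mem hu hv) (by rw [dd_mul]; omega)
      rw [map_mul (vl R r n ξ Q), map_mul (vl R r n ξ Q), vl_of] at e1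
      rw [map_mul (vl R r n ξ Q)] at e2
      rw [map_mul (vl R r n ξ Q), vl_of, hH.quad i hi hw.1, mul_add, add_mul, mul_smul_comm, mul_smul_comm,
        mul_one, smul_mul_assoc, smul_mul_assoc, map_add, map_smul, map_smul, e1, e2, smul_zero,
        smul_zero, add_zero]
    · intro i j hij
      rw [ht]
      simp only
      rw [← map_mul, ← map_mul, ← map_mul, ← map_mul]
      refine rel2 _ _ (by rw [okS_mul, okS_mul, and_comm]) (by rw [dd_mul, dd_mul, add_comm])
        fun u hu v hv hw hd => ?_
      rw [okS_mul, okS_of, okS_of] at hw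
      rw [map_mul (vl R r n ξ Q), map_mul (vl R r n ξ Q), vl_of, vl_of, hH.comm i j hij hw.2]
    · intro i hi
      rw [ht]
      simp only
      simp only [← map_mul]
      refine rel2 _ _ (by simp only [okS_mul]; tauto) (by simp only [dd_mul, dd_pos hi,
        dd_pos (Nat.le_add_left 1 i)])
        fun u hu v hv hw hd => ?_
      simp only [okS_mul, okS_of] at hw
      simp only [map_mul, vl_of, hH.braid i hi hw.1.2]
    · intro k
      rw [ht]
      simp only
      simp only [← map_mul, ← map_pow]
      refine rel2 _ _ (by simp only [okS_mul]; tauto) (by simp only [dd_mul]; omega)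
        fun u hu v hv hw hd => ?_
      simp only [okS_mul, okS_of] at hw
      have hd' := delta hG.hξ _ _ (hH.quart hw.2.2) (hH.quad 1 le_rfl hw.2.2) k
      simp only [dd_mul, dd_zero, dd_zero_pow, dd_pos le_rfl] at hd
      have m0 : ∀ k, FreeMonoid.of 0 ^ k ∈ okS n := fun k => pow_mem (okS_of.2 hw.1) k
      have m1 : FreeMonoid.of 1 ∈ okS n := okS_of.2 hw.2.2
      have z0 : FreeMonoid.of 0 ∈ okS n := okS_of.2 hw.1
      have e1 := low (u * (FreeMonoid.of 0 * FreeMonoid.of 1 * FreeMonoid.of 0 ^ k) * v)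
        (mul_mem (mul_mem hu (mul_mem (mul_mem z0 m1) (m0 k))) hv) (by
        simp only [dd_mul, dd_pos le_rfl, dd_zero, dd_zero_pow]; omega)
      have e2 := low (u * (FreeMonoid.of 0 ^ k * FreeMonoid.of 1 * FreeMonoid.of 0) * v)
        (mul_mem (mul_mem hu (mul_mem (mul_mem (m0 k) m1) z0)) hv) (by
        simp only [dd_mul, dd_pos le_rfl, dd_zero, dd_zero_pow]; omega)
      simp only [map_mul, map_pow, vl_of] at e1 e2 ⊢
      rw [← sub_eq_zero, ← map_sub, ← sub_mul, ← mul_sub]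
      rw [← mul_assoc (tn R r n ξ Q 0), ← mul_assoc (tn R r n ξ Q 0), hd', mul_smul_comm,
        smul_mul_assoc, map_smul, mul_sub, sub_mul, map_sub, e1, e2, sub_zero, smul_zero]
    · have hN := hG.nt
      have z : ∑ k ∈ Finset.range (r + 1), (fp Q).coeff k • t 0 ^ k = 0 := by
        have : π (∑ k ∈ Finset.range (r + 1), (fp Q).coeff k • o (FreeMonoid.of 0 ^ k)) = 0 := by
          refine ker1 _ fun u v => ?_
          have z0 : ∀ k, FreeMonoid.of 0 ^ k ∈ okS n := fun k => pow_mem (okS_of.2 (by omega)) k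
          by_cases hc : u * v ∈ okS n ∧ dd (u * v) = l
          · have e : ∀ k, Phi φ l (o u * ((fp Q).coeff k • o (FreeMonoid.of 0 ^ k)) * o v) =
                φ (vl R r n ξ Q u * ((fp Q).coeff k • tn R r n ξ Q 0 ^ k) * vl R r n ξ Q v) := by
              intro k
              rw [mul_smul_comm, smul_mul_assoc, map_smul, ← map_mul, ← map_mul, Phi_pos, map_mul (vl R r n ξ Q),
                map_mul (vl R r n ξ Q), map_pow, vl_of, mul_smul_comm, smul_mul_assoc, map_smul]
              · rw [okS_mul] at hc
                rw [okS_mul, okS_mul]; exact ⟨⟨hc.1.1, z0 k⟩, hc.1.2⟩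
              · rw [dd_mul] at hc
                rw [dd_mul, dd_mul, dd_zero_pow]; omega
            rw [Finset.mul_sum, Finset.sum_mul, map_sum]
            simp only [e]
            rw [← map_sum, ← Finset.sum_mul, ← Finset.mul_sum]
            have := hH.cyc (by omega)
            rw [aeval_eq_sum_range, fp_natDegree] at this
            rw [this, mul_zero, zero_mul, map_zero]
          · rw [Finset.mul_sum, Finset.sum_mul, map_sum]
            refine Finset.sum_eq_zero fun k _ => ?_
            rw [mul_smul_comm, smul_mul_assoc, map_smul, ← map_mul, ← map_mul, Phi_neg, smul_zero]
            rw [okS_mul, okS_mul, dd_mul, dd_mul, dd_zero_pow]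
            rw [okS_mul, dd_mul] at hc
            intro h
            exact hc ⟨⟨h.1.1.1, h.1.2⟩, by omega⟩
        rw [map_sum] at this
        simpa only [map_smul, map_pow] using this
      rw [Finset.sum_range_succ] at z
      have hc : (fp Q).coeff r = 1 := by
        have := fp_monic Q
        rwa [Monic, leadingCoeff, fp_natDegree] at this
      rw [hc, one_smul, add_comm, ← eq_neg_iff_add_eq_zero] at z
      rw [z]
      refine neg_mem (sum_mem fun k hk => Submodule.smul_mem _ _ (Submodule.subset_span ?_))
      exact ⟨k, Finset.mem_range.1 hk, rfl⟩
  have htr : ∀ x y, ψ (x * y) = ψ (y * x) := by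
    intro x y
    obtain ⟨x, rfl⟩ := hsurj x
    obtain ⟨y, rfl⟩ := hsurj y
    rw [← map_mul, ← map_mul, hψ, hψ, Phi_trace hφ]
  have hWG : ∀ c, (∀ x ∈ c, 1 ≤ x.1) → Wf t 0 c = π (o (Wf FreeMonoid.of 0 c)) := by
    intro c hc
    rw [map_Wf o (fun i => o (FreeMonoid.of i)) 0 c hc (fun i _ => rfl)]
    exact (map_Wf (t := fun i => o (FreeMonoid.of i)) (π : MonoidAlgebra R (FreeMonoid ℕ) →* G) t 0 c hc
      (fun i _ => rfl)).symm
  have hWH : ∀ c, (∀ x ∈ c, 1 ≤ x.1) → vl R r n ξ Q (Wf FreeMonoid.of 0 c) =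
      Wf (tn R r n ξ Q) 0 c := fun c hc => map_Wf _ _ 0 c hc fun i _ => vl_of i
  have hWo : ∀ c, (∀ x ∈ c, 1 ≤ x.1) → sz c = n → Wf FreeMonoid.of 0 c ∈ okS n :=
    fun c hc hs => Wf_mem _ hc fun i hi => okS_of.2 (by omega)
  have hperm : ∀ {c c' : List (ℕ × ℕ)}, c.Perm c' → sz c = sz c' := fun h => (h.map _).sum_eq
  have fin : ∀ g ∈ GG R t n, ψ g = 0 := by
    intro g hg
    refine hrel.sorted hG.hr htr n ?_ ?_ hg
    · intro d c a b hP hs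
      have v1 : ∀ a b, (∀ x ∈ d ++ (a + 1, 0) :: (b + 1, 0) :: c, 1 ≤ x.1) := by
        intro a b x hx
        simp only [List.mem_append, List.mem_cons] at hx hP
        rcases hx with h | rfl | rfl | h
        · exact hP x (.inl h)
        · simp
        · simp
        · exact hP x (.inr h)
      rw [hWG _ (v1 a b), hWG _ (v1 b a), hψ, hψ]
      have s1 : ∀ a b, sz d + sz c + a + b + 2 = n →
          sz (d ++ (a + 1, 0) :: (b + 1, 0) :: c) = n := by
        intro a b h
        simp only [sz_append, sz_cons]; omega
      by_cases hl : dd (Wf FreeMonoid.of 0 (d ++ (a + 1, 0) :: (b + 1, 0) :: c)) = l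
      · rw [Phi_pos (hWo _ (v1 a b) (s1 a b hs)) hl,
          Phi_pos (hWo _ (v1 b a) (s1 b a (by omega))) (by rw [← hl, dd_Wf_swap d c b a hP]),
          hWH _ (v1 a b), hWH _ (v1 b a)]
        exact hH.br.swap hφ (fun i h1 hi => tn_isUnit hG.hξ h1 hi) d c a b hP hs
      · rw [Phi_neg (fun h => hl h.2), Phi_neg (fun h => hl (by rw [← h.2, dd_Wf_swap d c b a hP]))]
    · intro c hc hs
      have v1 : ∀ x ∈ c.insertionSort le, 1 ≤ x.1 := fun x hx =>
        (hc x ((List.mem_insertionSort le).1 hx)).1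
      rw [hWG _ v1, hψ]
      by_cases hl : dd (Wf FreeMonoid.of 0 (c.insertionSort le)) = l
      · rw [Phi_pos (hWo _ v1 (by rw [hperm (List.perm_insertionSort le c), hs])) hl, hWH _ v1]
        exact h0 c hc hs
      · exact Phi_neg fun h => hl h.2
  rw [← Phi_pos hw hl, ← hψ]
  refine fin _ ?_
  have : ∀ w : FreeMonoid ℕ, w ∈ okS n → π (o w) ∈ GG R t n := by
    intro w
    induction w using FreeMonoid.inductionOn' with
    | one => intro _; rw [map_one, map_one]; exact one_mem _
    | of_mul i w ih =>
      intro h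
      rw [okS_mul, okS_of] at h
      rw [map_mul, map_mul]
      exact mul_mem (GG_gen h.1) (ih h.2)
  exact this w hw

/-- A trace function vanishing on the words of the sorted coloured compositions vanishes, that is,
these words span the cocenter. -/
theorem trace_zero [hG : Good ξ Q] (hn : 1 ≤ n) (hφ : ∀ x y, φ (x * y) = φ (y * x))
    (h0 : ∀ c, (∀ x ∈ c, 1 ≤ x.1 ∧ x.2 < r) → sz c = n →
      φ (Wf (tn R r n ξ Q) 0 (c.insertionSort le)) = 0) (x : HA R r n ξ Q) : φ x = 0 := by
  have words : ∀ l, ∀ w ∈ okS n, dd w = l → φ (vl R r n ξ Q w) = 0 := by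
    intro l
    induction l using Nat.strong_induction_on with
    | _ l ih => exact fun w hw hl =>
        trace_step hn hφ h0 l (fun w hw h => ih _ h w hw rfl) w hw hl
  have : x ∈ Submodule.span R {x | ∃ w ∈ okS n, x = vl R r n ξ Q w} := by
    refine mem_of_right (Submodule.span R {x | ∃ w ∈ okS n, x = vl R r n ξ Q w})
      (Submodule.subset_span ⟨1, one_mem _, (map_one _).symm⟩)
      (fun i hi x hx => ?_) x
    refine Submodule.span_induction (p := fun x _ => x * tn R r n ξ Q i ∈
      Submodule.span R {x | ∃ w ∈ okS n, x = vl R r n ξ Q w}) ?_ ?_ ?_ ?_ hx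
    · rintro _ ⟨w, hw, rfl⟩
      exact Submodule.subset_span ⟨w * FreeMonoid.of i, mul_mem hw (okS_of.2 hi), by
        rw [map_mul, vl_of]⟩
    · simp
    · intro x y _ _ h h'; rw [add_mul]; exact add_mem h h'
    · intro a x _ h; rw [smul_mul_assoc]; exact Submodule.smul_mem _ _ h
  refine Submodule.span_induction (p := fun x _ => φ x = 0) ?_ ?_ ?_ ?_ this
  · rintro _ ⟨w, hw, rfl⟩
    exact words _ w hw rfl
  · simp
  · intro x y _ _ h h'; rw [map_add, h, h', add_zero]
  · intro a x _ h; rw [map_smul, h, smul_zero]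

end Cocenter
end HC

/-! ### Specialization of parameters and dual families -/

namespace HC
open Polynomial

section BaseChange

variable {A R : Type} [CommRing A] [CommRing R] {r : ℕ}

/-- The ring homomorphism `σ` sends the parameters `ξ, Q` to the parameters `ξ', Q'`. -/
structure Spec (σ : A →+* R) (ξ : A) (Q : Fin r → A) (ξ' : R) (Q' : Fin r → R) : Prop where
  hξ : σ ξ = ξ'
  hQ : ∀ i, σ (Q i) = Q' i

variable {σ : A →+* R} {ξ : A} {Q : Fin r → A} {ξ' : R} {Q' : Fin r → R}

/-- The ring homomorphism between Hecke algebras induced by a specialization of parameters. -/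
def bc (h : Spec σ ξ Q ξ' Q') (n : ℕ) : HA A r n ξ Q →+* HA R r n ξ' Q' :=
  letI : Algebra A (HA R r n ξ' Q') := Algebra.compHom _ σ
  (liftH (t := tn R r n ξ' Q')
    { cyc := fun h0 => by
        have := (HRel_tn (R := R) (n := n) (Q := Q') (ξ := ξ')).cyc h0
        rw [fp_aeval] at this ⊢
        rw [← this]
        congr 2
        funext i
        rw [← h.hQ i]
        rfl
      quart := HRel_tn.quart
      quad := fun i h1 hi => by
        rw [(HRel_tn (R := R) (n := n) (Q := Q') (ξ := ξ')).quad i h1 hi]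
        change _ = (σ (ξ - 1)) • tn R r n ξ' Q' i + σ ξ • (1 : HA R r n ξ' Q')
        rw [map_sub, map_one, h.hξ]
      comm := HRel_tn.comm
      braid := HRel_tn.braid } : HA A r n ξ Q →ₐ[A] HA R r n ξ' Q').toRingHom

variable {n : ℕ}

lemma bc_algebraMap (h : Spec σ ξ Q ξ' Q') (a : A) :
    bc h n (algebraMap A _ a) = algebraMap R _ (σ a) := by
  letI : Algebra A (HA R r n ξ' Q') := Algebra.compHom _ σ
  exact AlgHom.commutes (R := A) _ a

lemma bc_tn (h : Spec σ ξ Q ξ' Q') {i : ℕ} (hi : i < n) :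
    bc h n (tn A r n ξ Q i) = tn R r n ξ' Q' i := by
  letI : Algebra A (HA R r n ξ' Q') := Algebra.compHom _ σ
  exact liftH_tn _ hi

lemma bc_smul (h : Spec σ ξ Q ξ' Q') (a : A) (x : HA A r n ξ Q) :
    bc h n (a • x) = σ a • bc h n x := by
  rw [Algebra.smul_def, map_mul, bc_algebraMap, ← Algebra.smul_def]

lemma ringHom_ext' {B : Type*} [Ring B] {f g : HA A r n ξ Q →+* B}
    (h0 : ∀ a, f (algebraMap A _ a) = g (algebraMap A _ a))
    (h1 : ∀ i < n, f (tn A r n ξ Q i) = g (tn A r n ξ Q i)) (x : HA A r n ξ Q) : f x = g x := by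
  let P : Subalgebra A (HA A r n ξ Q) :=
    { carrier := {x | f x = g x}
      mul_mem' := by intro a b ha hb; simp only [Set.mem_ofPred_eq] at *; rw [map_mul, map_mul, ha, hb]
      add_mem' := by intro a b ha hb; simp only [Set.mem_ofPred_eq] at *; rw [map_add, map_add, ha, hb]
      algebraMap_mem' := h0 }
  exact (mem_of_adjoin (P := P) h1 x : _ ∈ P)

lemma bc_iot (h : Spec σ ξ Q ξ' Q') (x : HA A r n ξ Q) :
    bc h (n + 1) (iot n x) = iot n (bc h n x) := by
  refine ringHom_ext' (f := (bc h (n + 1)).comp (iot n).toRingHom)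
    (g := (iot n).toRingHom.comp (bc h n)) ?_ ?_ x
  · intro a
    change bc h (n + 1) (iot n (algebraMap A _ a)) = iot n (bc h n (algebraMap A _ a))
    rw [AlgHom.commutes, bc_algebraMap, bc_algebraMap, AlgHom.commutes]
  · intro i hi
    change bc h (n + 1) (iot n (tn A r n ξ Q i)) = iot n (bc h n (tn A r n ξ Q i))
    rw [iot_tn hi, bc_tn h hi, bc_tn h (by omega), iot_tn hi]

lemma bc_hat (h : Spec σ ξ Q ξ' Q') (x : Xv r n) :
    bc h (n + 1) (hat A r n ξ Q x.1) = hat R r n ξ' Q' x.1 := by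
  have u : ∀ a l, a + l ≤ n + 1 → bc h (n + 1) (up (tn A r (n + 1) ξ Q) a l) =
      up (tn R r (n + 1) ξ' Q') a l := fun a l hl =>
    map_up (bc h (n + 1) : HA A r (n + 1) ξ Q →* HA R r (n + 1) ξ' Q')
      (tn A r (n + 1) ξ Q) (tn R r (n + 1) ξ' Q') a l fun i _ hi => bc_tn h (by omega)
  have d : ∀ a l, a + l ≤ n + 1 → bc h (n + 1) (dn (tn A r (n + 1) ξ Q) a l) =
      dn (tn R r (n + 1) ξ' Q') a l := fun a l hl =>
    map_dn (bc h (n + 1) : HA A r (n + 1) ξ Q →* HA R r (n + 1) ξ' Q')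
      (tn A r (n + 1) ξ Q) (tn R r (n + 1) ξ' Q') a l fun i _ hi => bc_tn h (by omega)
  rcases x with ⟨j | ⟨j, k⟩, hx⟩
  · have : j ≤ n := hx
    exact d _ _ (by omega)
  · have : j ≤ n := hx.1
    simp only [hat]
    rw [map_mul, map_mul, map_pow, d _ _ (by omega), u _ _ (by omega), bc_tn h (by omega)]

variable [hG : Good ξ Q] [hG' : Good ξ' Q']

lemma bc_ev (h : Spec σ ξ Q ξ' Q') (x : HA A r (n + 1) ξ Q) (y : Xv r n) :
    ev n (bc h (n + 1) x) y = bc h n (ev n x y) := by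
  conv_lhs => rw [expand x]
  rw [map_sum, map_sum, Finsupp.finsetSum_apply, Finset.sum_eq_single y]
  · rw [map_mul, bc_iot, bc_hat, ev_iot_mul, ev_hat, Finsupp.smul_apply, Finsupp.single_eq_same,
      smul_eq_mul, mul_one]
  · intro z _ hz
    rw [map_mul, bc_iot, bc_hat, ev_iot_mul, ev_hat, Finsupp.smul_apply, Finsupp.single_eq_of_ne
      (Ne.symm hz), smul_zero]
  · intro h; exact absurd (Finset.mem_univ _) h

/-- The symmetrizing form is compatible with specialization of the parameters. -/
lemma bc_tau (h : Spec σ ξ Q ξ' Q') (x : HA A r n ξ Q) : tau n (bc h n x) = σ (tau n x) := by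
  induction n with
  | zero =>
    conv_lhs => rw [tau_zero_smul x]
    rw [bc_smul, map_one, map_smul, tau_one, smul_eq_mul, mul_one]
  | succ n ih => rw [tau_succ, eps_apply, bc_ev, ih, tau_succ, eps_apply]

lemma bc_span (h : Spec σ ξ Q ξ' Q') (x : HA R r n ξ' Q') :
    x ∈ Submodule.span R (Set.range (bc h n)) := by
  refine mem_of_right (Submodule.span R (Set.range (bc h n)))
    (Submodule.subset_span ⟨1, map_one _⟩) (fun i hi x hx => ?_) x
  refine Submodule.span_induction (p := fun x _ => x * tn R r n ξ' Q' i ∈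
    Submodule.span R (Set.range (bc h n))) ?_ ?_ ?_ ?_ hx
  · rintro _ ⟨w, rfl⟩
    exact Submodule.subset_span ⟨w * tn A r n ξ Q i, by rw [map_mul, bc_tn h hi]⟩
  · simp
  · intro x y _ _ h h'; rw [add_mul]; exact add_mem h h'
  · intro a x _ h; rw [smul_mul_assoc]; exact Submodule.smul_mem _ _ h

end BaseChange

section Dual

variable {R : Type} [CommRing R] {r n : ℕ} {ξ : R} {Q : Fin r → R} [hG : Good ξ Q]
variable {I J : Type} [Fintype I] [Fintype J]

/-- The families `b`, `y` are dual to each other for the symmetrizing form. -/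
def IsDual (b y : I → HA R r n ξ Q) : Prop := ∀ h, h = ∑ i, tau n (h * y i) • b i

lemma tau_nondeg {x : HA R r n ξ Q} (h : ∀ y, tau n (x * y) = 0) : x = 0 := by
  obtain ⟨I, _, b, y, hb⟩ := exists_dual_system (R := R) (ξ := ξ) (Q := Q) n
  rw [hb x]
  simp [h]

/-- Every linear functional on `H` is of the form `τ(z ·)`. -/
lemma IsDual.rep {b y : I → HA R r n ξ Q} (hb : IsDual b y) (χ : HA R r n ξ Q →ₗ[R] R)
    (h : HA R r n ξ Q) : tau n ((∑ i, χ (b i) • y i) * h) = χ h := by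
  conv_rhs => rw [hb h]
  rw [Finset.sum_mul, map_sum, map_sum]
  refine Finset.sum_congr rfl fun i _ => ?_
  rw [smul_mul_assoc, map_smul, map_smul, smul_eq_mul, smul_eq_mul, mul_comm, tau_comm]

/-- The trace of the operator `x ↦ h x s`, computed with a pair of dual families. -/
def TT (b y : I → HA R r n ξ Q) (s : HA R r n ξ Q) : HA R r n ξ Q →ₗ[R] R :=
  ∑ i, tau n ∘ₗ LinearMap.mulRight R (b i * s * y i)

lemma TT_apply (b y : I → HA R r n ξ Q) (s h : HA R r n ξ Q) :
    TT b y s h = ∑ i, tau n (h * (b i * s * y i)) := by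
  simp [TT, LinearMap.sum_apply, mul_assoc]

/-- For dual families, `TT b y s` is a trace function. -/
lemma TT_comm {b y : I → HA R r n ξ Q} (hb : IsDual b y) (s h k : HA R r n ξ Q) :
    TT b y s (h * k) = TT b y s (k * h) := by
  have e1 : ∀ i, tau n (h * k * (b i * s * y i)) =
      ∑ j, tau n (k * b i * y j) * tau n (h * b j * s * y i) := by
    intro i
    have : h * k * (b i * s * y i) = h * (k * b i) * (s * y i) := by simp only [mul_assoc]
    conv_lhs => rw [this, hb (k * b i)]
    rw [Finset.mul_sum, Finset.sum_mul, map_sum]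
    refine Finset.sum_congr rfl fun j _ => ?_
    rw [mul_smul_comm, smul_mul_assoc, map_smul, smul_eq_mul, ← mul_assoc]
  have e2 : ∀ i, tau n (k * h * (b i * s * y i)) =
      ∑ j, tau n (h * b i * s * y j) * tau n (k * b j * y i) := by
    intro i
    have : k * h * (b i * s * y i) = k * (h * b i * s) * y i := by simp only [mul_assoc]
    conv_lhs => rw [this, hb (h * b i * s)]
    rw [Finset.mul_sum, Finset.sum_mul, map_sum]
    refine Finset.sum_congr rfl fun j _ => ?_
    rw [mul_smul_comm, smul_mul_assoc, map_smul, smul_eq_mul]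
  rw [TT_apply, TT_apply]
  simp only [e1, e2]
  rw [Finset.sum_comm]
  refine Finset.sum_congr rfl fun i _ => Finset.sum_congr rfl fun j _ => ?_
  rw [mul_comm]

/-- The trace `TT` does not depend on the pair of dual families. -/
lemma TT_indep {b y : I → HA R r n ξ Q} (hb : IsDual b y) {b' y' : J → HA R r n ξ Q}
    (hb' : IsDual b' y') (s h : HA R r n ξ Q) : TT b y s h = TT b' y' s h := by
  have e1 : ∀ i, tau n (h * (b i * s * y i)) =
      ∑ j, tau n (b i * y' j) * tau n (h * b' j * s * y i) := by
    intro i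
    conv_lhs => rw [hb' (b i)]
    rw [Finset.sum_mul, Finset.sum_mul, Finset.mul_sum, map_sum]
    refine Finset.sum_congr rfl fun j _ => ?_
    rw [smul_mul_assoc, smul_mul_assoc, mul_smul_comm, map_smul, smul_eq_mul]
    simp only [mul_assoc]
  have e2 : ∀ j, tau n (h * (b' j * s * y' j)) =
      ∑ i, tau n (h * b' j * s * y i) * tau n (b i * y' j) := by
    intro j
    have : h * (b' j * s * y' j) = (h * b' j * s) * y' j := by simp only [mul_assoc]
    conv_lhs => rw [this, hb (h * b' j * s)]
    rw [Finset.sum_mul, map_sum]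
    refine Finset.sum_congr rfl fun i _ => ?_
    rw [smul_mul_assoc, map_smul, smul_eq_mul]
  rw [TT_apply, TT_apply]
  simp only [e1, e2]
  rw [Finset.sum_comm]
  refine Finset.sum_congr rfl fun i _ => Finset.sum_congr rfl fun j _ => ?_
  rw [mul_comm]

variable {A : Type} [CommRing A] {σ : A →+* R} {ξ₀ : A} {Q₀ : Fin r → A} [hG₀ : Good ξ₀ Q₀]

lemma IsDual.bc (hs : Spec σ ξ₀ Q₀ ξ Q) {b y : I → HA A r n ξ₀ Q₀} (hb : IsDual b y) :
    IsDual (fun i => bc hs n (b i)) (fun i => HC.bc hs n (y i)) := by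
  intro h
  refine Submodule.span_induction (p := fun h _ => h = ∑ i, tau n (h * HC.bc hs n (y i)) •
    HC.bc hs n (b i)) ?_ ?_ ?_ ?_ (bc_span hs h)
  · rintro _ ⟨x, rfl⟩
    conv_lhs => rw [hb x]
    rw [map_sum]
    refine Finset.sum_congr rfl fun i _ => ?_
    rw [bc_smul, ← map_mul, bc_tau]
  · simp
  · intro x y _ _ h h'
    conv_lhs => rw [h, h']
    rw [← Finset.sum_add_distrib]
    refine Finset.sum_congr rfl fun i _ => ?_
    rw [add_mul, map_add, add_smul]
  · intro a x _ h
    conv_lhs => rw [h]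
    rw [Finset.smul_sum]
    refine Finset.sum_congr rfl fun i _ => ?_
    rw [smul_mul_assoc, map_smul, smul_smul, smul_eq_mul]

lemma TT_bc (hs : Spec σ ξ₀ Q₀ ξ Q) (b y : I → HA A r n ξ₀ Q₀) (s h : HA A r n ξ₀ Q₀) :
    TT (fun i => HC.bc hs n (b i)) (fun i => HC.bc hs n (y i)) (HC.bc hs n s) (HC.bc hs n h) =
      σ (TT b y s h) := by
  rw [TT_apply, TT_apply, map_sum]
  refine Finset.sum_congr rfl fun i _ => ?_
  rw [← bc_tau hs]
  simp only [map_mul]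

end Dual
end HC

/-! ### Indexing by `r`-partitions -/

namespace HC
open Polynomial

section Index

variable {r n : ℕ}

/-- The multiset of coloured parts `(a, i)` of an `r`-partition, `a` being a part of the `i`-th
component. -/
def ms (p : Fin r → Multiset ℕ) : Multiset (ℕ × ℕ) :=
  ∑ i, (p i).map fun a => (a, (i : ℕ))

lemma mem_ms {p : Fin r → Multiset ℕ} {x : ℕ × ℕ} :
    x ∈ ms p ↔ ∃ i : Fin r, x.1 ∈ p i ∧ x.2 = i := by
  rw [ms, Multiset.mem_sum]
  constructor
  · rintro ⟨i, _, h⟩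
    obtain ⟨a, ha, rfl⟩ := Multiset.mem_map.1 h
    exact ⟨i, ha, rfl⟩
  · rintro ⟨i, h, h'⟩
    exact ⟨i, Finset.mem_univ _, Multiset.mem_map.2 ⟨x.1, h, by rw [← h']⟩⟩

lemma count_ms (p : Fin r → Multiset ℕ) (a : ℕ) (i : Fin r) :
    (ms p).count (a, (i : ℕ)) = (p i).count a := by
  rw [ms, Multiset.count_sum', Finset.sum_eq_single i]
  · exact Multiset.count_map_eq_count' _ _ (fun a b h => (Prod.ext_iff.1 h).1) a
  · intro j _ hj
    refine Multiset.count_eq_zero_of_notMem fun h => ?_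
    obtain ⟨b, _, hb⟩ := Multiset.mem_map.1 h
    exact hj (Fin.ext (Prod.ext_iff.1 hb).2)
  · intro h; exact absurd (Finset.mem_univ _) h

lemma ms_inj {p q : Fin r → Multiset ℕ} (h : ms p = ms q) : p = q := by
  funext i
  ext a
  rw [← count_ms, ← count_ms, h]

lemma ms_sum (p : Fin r → Multiset ℕ) : ((ms p).map Prod.fst).sum = ∑ i, (p i).sum := by
  rw [ms, ← Multiset.coe_mapAddMonoidHom, map_sum, ← Multiset.coe_sumAddMonoidHom, map_sum]
  refine Finset.sum_congr rfl fun i _ => ?_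
  simp [Multiset.map_map]

lemma ms_surj (c : List (ℕ × ℕ)) (hc : ∀ x ∈ c, 1 ≤ x.1 ∧ x.2 < r) :
    ∃ p : Fin r → Multiset ℕ, ms p = c := by
  induction c with
  | nil => exact ⟨0, by simp [ms]⟩
  | cons x c ih =>
    obtain ⟨p, hp⟩ := ih fun y hy => hc y (List.mem_cons_of_mem _ hy)
    have hx := (hc x List.mem_cons_self).2
    refine ⟨p + Pi.single ⟨x.2, hx⟩ {x.1}, ?_⟩
    rw [ms]
    simp only [Pi.add_apply, Multiset.map_add]
    rw [Finset.sum_add_distrib, Finset.sum_eq_single (a := (⟨x.2, hx⟩ : Fin r))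
      (f := fun i : Fin r => Multiset.map (fun a => (a, (i : ℕ)))
        ((Pi.single ⟨x.2, hx⟩ {x.1} : Fin r → Multiset ℕ) i))]
    · rw [Pi.single_eq_same, Multiset.map_singleton, ← Multiset.cons_coe, ← hp,
        ← Multiset.singleton_add, add_comm]
      rfl
    · intro j _ hj
      rw [Pi.single_eq_of_ne hj]; rfl
    · intro h; exact absurd (Finset.mem_univ _) h

instance : Finite (RPartition r n) := by
  let M : Multiset ℕ := n • Multiset.range (n + 1)
  have key : ∀ p : RPartition r n, ∀ i, p.1 i ≤ M := by
    rintro ⟨p, h0, h1⟩ i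
    change p i ≤ M
    have hi : (p i).sum ≤ n := h1 ▸ Finset.single_le_sum (f := fun i => (p i).sum)
      (fun _ _ => Nat.zero_le _) (Finset.mem_univ i)
    have hcard : (p i).card ≤ n := by
      refine le_trans ?_ hi
      have := Multiset.card_nsmul_le_sum (s := p i) (a := 1) (fun x hx => h0 i x hx)
      simpa using this
    rw [Multiset.le_iff_count]
    intro a
    by_cases ha : a ∈ p i
    · have : a ≤ n := le_trans (Multiset.single_le_sum (fun _ _ => Nat.zero_le _) a ha) hi
      rw [Multiset.count_nsmul, Multiset.count_eq_one_of_mem (Multiset.nodup_range _)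
        (Multiset.mem_range.2 (by omega)), mul_one]
      exact le_trans (Multiset.count_le_card _ _) hcard
    · rw [Multiset.count_eq_zero_of_notMem ha]; exact Nat.zero_le _
  have : Finite (Set.Iic M) := (Set.finite_Iic M).to_subtype
  refine Finite.of_injective (fun (p : RPartition r n) (i : Fin r) => (⟨p.1 i, key p i⟩ : Set.Iic M)) ?_
  intro p q h
  refine Subtype.ext (funext fun i => ?_)
  exact congrArg Subtype.val (congrFun h i)

instance : Fintype (RPartition r n) := Fintype.ofFinite _

instance : DecidableEq (RPartition r n) := Classical.decEq _

/-- The coloured parts of an `r`-partition as a sorted list. -/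
def cl (p : RPartition r n) : List (ℕ × ℕ) := (ms p.1).toList.insertionSort le

lemma coe_cl (p : RPartition r n) : (cl p : Multiset (ℕ × ℕ)) = ms p.1 := by
  rw [cl, Multiset.coe_eq_coe.2 (List.perm_insertionSort le _), Multiset.coe_toList]

lemma cl_valid (p : RPartition r n) : ∀ x ∈ cl p, 1 ≤ x.1 ∧ x.2 < r := by
  intro x hx
  rw [← Multiset.mem_coe, coe_cl, mem_ms] at hx
  obtain ⟨i, h, h'⟩ := hx
  exact ⟨p.2.1 i _ h, h' ▸ i.2⟩

lemma cl_sz (p : RPartition r n) : sz (cl p) = n := by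
  refine Eq.trans ?_ p.2.2
  rw [← ms_sum, ← coe_cl, Multiset.map_coe, Multiset.sum_coe]
  rfl

lemma cl_perm {p q : RPartition r n} (h : (cl p : Multiset (ℕ × ℕ)) = cl q) : p = q := by
  rw [coe_cl, coe_cl] at h
  exact Subtype.ext (ms_inj h)

lemma cl_surj (c : List (ℕ × ℕ)) (hc : ∀ x ∈ c, 1 ≤ x.1 ∧ x.2 < r) (hn : sz c = n) :
    ∃ p : RPartition r n, c.insertionSort le = cl p := by
  obtain ⟨p, hp⟩ := ms_surj c hc
  have h1 : ∀ i, ∀ x ∈ p i, 0 < x := by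
    intro i x hx
    have : (x, (i : ℕ)) ∈ c := by
      rw [← Multiset.mem_coe, ← hp, mem_ms]
      exact ⟨i, hx, rfl⟩
    exact (hc _ this).1
  have h2 : ∑ i, (p i).sum = n := by
    rw [← ms_sum, hp, Multiset.map_coe, Multiset.sum_coe]
    exact hn
  refine ⟨⟨p, h1, h2⟩, ?_⟩
  · refine List.Perm.eq_of_pairwise (le := le) ?_ (List.pairwise_insertionSort le _)
      (List.pairwise_insertionSort le _) ?_
    · intro a b _ _ h h'
      exact Std.Antisymm.antisymm _ _ h h'
    · rw [← Multiset.coe_eq_coe]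
      exact ((Quotient.sound (List.perm_insertionSort le _)).trans hp.symm).trans (coe_cl (⟨p, h1, h2⟩ : RPartition r n)).symm

end Index

section Center

variable {R : Type} [CommRing R] {r n : ℕ} {ξ : R} {Q : Fin r → R}

variable (R ξ Q) in
/-- The element of `H` attached to an `r`-partition: the word of its sorted list
of parts, each part coloured by its component. -/
def sl (p : RPartition r n) : HA R r n ξ Q := Wf (tn R r n ξ Q) 0 (cl p)

variable [hG : Good ξ Q] {V : Type} [AddCommGroup V] [Module R V]

/-- A trace function is determined by its values on the elements `sl p`. -/
lemma trace_zero' (hn : 1 ≤ n) {φ : HA R r n ξ Q →ₗ[R] V} (hφ : ∀ x y, φ (x * y) = φ (y * x))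
    (h0 : ∀ p : RPartition r n, φ (sl R ξ Q p) = 0) (x : HA R r n ξ Q) : φ x = 0 := by
  refine trace_zero hn hφ (fun c hc hs => ?_) x
  obtain ⟨p, hp⟩ := cl_surj c hc hs
  rw [hp]
  exact h0 p

/-- The family `z` consists of central elements and is dual to the elements `sl p`. -/
structure CDual (z : RPartition r n → HA R r n ξ Q) : Prop where
  cen : ∀ p x, x * z p = z p * x
  dual : ∀ p q, tau n (z p * sl R ξ Q q) = if p = q then 1 else 0

/-- A central element is determined by its pairings with the `sl p`: by `trace_zero'` and
nondegeneracy of `tau`, a dual family of central elements spans the center. -/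
lemma CDual.eq_sum (hn : 1 ≤ n) {z : RPartition r n → HA R r n ξ Q} (hz : CDual z)
    {d : HA R r n ξ Q} (hd : ∀ x, x * d = d * x) :
    d = ∑ p, tau n (d * sl R ξ Q p) • z p := by
  rw [← sub_eq_zero]
  set w := d - ∑ p, tau n (d * sl R ξ Q p) • z p with hw
  have hwc : ∀ x, x * w = w * x := by
    intro x
    rw [hw, mul_sub, sub_mul, hd, Finset.mul_sum, Finset.sum_mul]
    congr 1
    refine Finset.sum_congr rfl fun p _ => ?_
    rw [mul_smul_comm, smul_mul_assoc, hz.cen]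
  refine tau_nondeg fun y => ?_
  refine trace_zero' hn (φ := tau n ∘ₗ LinearMap.mulLeft R w) ?_ ?_ y
  · intro x y
    simp only [LinearMap.comp_apply, LinearMap.mulLeft_apply]
    rw [← mul_assoc, tau_comm, ← mul_assoc, ← hwc, mul_assoc, mul_assoc, ← hwc]
  · intro q
    simp only [LinearMap.comp_apply, LinearMap.mulLeft_apply]
    rw [hw, sub_mul, map_sub, Finset.sum_mul, map_sum, Finset.sum_eq_single q]
    · rw [smul_mul_assoc, map_smul, hz.dual, if_pos rfl, smul_eq_mul, mul_one, sub_self]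
    · intro p _ hp
      rw [smul_mul_assoc, map_smul, hz.dual, if_neg hp, smul_zero]
    · intro h; exact absurd (Finset.mem_univ _) h

/-- A dual family of central elements is a basis of the center. -/
def CDual.basis (hn : 1 ≤ n) {z : RPartition r n → HA R r n ξ Q} (hz : CDual z) :
    Module.Basis (RPartition r n) R (Subalgebra.center R (HA R r n ξ Q)) :=
  Module.Basis.mk (v := fun p => ⟨z p, Subalgebra.mem_center_iff.2 (hz.cen p)⟩)
    (by
      rw [Fintype.linearIndependent_iff]
      intro g hg q
      have := congrArg Subtype.val hg
      have h2 := congrArg (fun w => tau n (w * sl R ξ Q q)) this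
      simp only [AddSubmonoidClass.coe_finsetSum, SetLike.val_smul, ZeroMemClass.coe_zero,
        zero_mul, map_zero] at h2
      rw [Finset.sum_mul, map_sum, Finset.sum_eq_single q] at h2
      · rwa [smul_mul_assoc, map_smul, hz.dual, if_pos rfl, smul_eq_mul, mul_one] at h2
      · intro p _ hp
        rw [smul_mul_assoc, map_smul, hz.dual, if_neg hp, smul_zero]
      · intro h; exact absurd (Finset.mem_univ _) h)
    (by
      rintro ⟨d, hd⟩ -
      have e : (⟨d, hd⟩ : Subalgebra.center R (HA R r n ξ Q)) =
          ∑ p, tau n (d * sl R ξ Q p) • ⟨z p, Subalgebra.mem_center_iff.2 (hz.cen p)⟩ := by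
        refine Subtype.ext ?_
        simp only [AddSubmonoidClass.coe_finsetSum, SetLike.val_smul]
        exact hz.eq_sum hn (Subalgebra.mem_center_iff.1 hd)
      rw [e]
      exact Submodule.sum_mem _ fun p _ => Submodule.smul_mem _ _
        (Submodule.subset_span ⟨p, rfl⟩))

lemma CDual.basis_apply (hn : 1 ≤ n) {z : RPartition r n → HA R r n ξ Q} (hz : CDual z)
    (p : RPartition r n) : (hz.basis hn p : HA R r n ξ Q) = z p := by
  simp [CDual.basis]

variable {A : Type} [CommRing A] {σ : A →+* R} {ξ₀ : A} {Q₀ : Fin r → A}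

lemma bc_sl (hs : Spec σ ξ₀ Q₀ ξ Q) (p : RPartition r n) :
    bc hs n (sl A ξ₀ Q₀ p) = sl R ξ Q p := by
  refine map_Wf (bc hs n : HA A r n ξ₀ Q₀ →* HA R r n ξ Q) _ _ _
    (fun x hx => (cl_valid p x hx).1) fun i hi => bc_tn hs ?_
  rwa [zero_add, cl_sz] at hi

variable [hG₀ : Good ξ₀ Q₀]

/-- Dual families of central elements are preserved by specialization of the parameters. -/
lemma CDual.bc (hs : Spec σ ξ₀ Q₀ ξ Q) {z : RPartition r n → HA A r n ξ₀ Q₀} (hz : CDual z) :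
    CDual fun p => bc hs n (z p) where
  cen p x := by
    let P : Subalgebra R (HA R r n ξ Q) := Subalgebra.centralizer R {HC.bc hs n (z p)}
    have : x ∈ P := by
      refine mem_of_adjoin (P := P) (fun i hi => ?_) x
      rw [Subalgebra.mem_centralizer_iff]
      rintro _ rfl
      rw [← bc_tn hs hi, ← map_mul, ← hz.cen, map_mul]
    exact ((Subalgebra.mem_centralizer_iff R).1 this _ rfl).symm
  dual p q := by
    rw [← bc_sl hs, ← map_mul, bc_tau, hz.dual]
    split <;> simp

end Center
end HC

/-! ### Existence of dual families -/

namespace HC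
open Polynomial

section Generic

variable {R : Type} [CommRing R] {r n : ℕ} {ξ : R} {Q : Fin r → R} [hG : Good ξ Q]

lemma tn_zero_isUnit (hn : 0 < n) : IsUnit (tn R r n ξ Q 0) := by
  have h := (HRel_tn (R := R) (n := n) (Q := Q) (ξ := ξ)).cyc hn
  obtain ⟨u, hu⟩ := fp_coeff_zero Q hG.hQ
  rw [← Polynomial.divX_mul_X_add (fp Q), map_add, map_mul, aeval_X, aeval_C, ← hu] at h
  set a := aeval (tn R r n ξ Q 0) (fp Q).divX with ha
  have hc : tn R r n ξ Q 0 * a = a * tn R r n ξ Q 0 := by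
    have := congrArg (aeval (tn R r n ξ Q 0)) (mul_comm X (fp Q).divX)
    rwa [map_mul, map_mul, aeval_X] at this
  have h' : a * tn R r n ξ Q 0 = -algebraMap R _ (u : R) := eq_neg_of_add_eq_zero_left h
  have e : ((u⁻¹ : Rˣ) : R) • -algebraMap R (HA R r n ξ Q) (u : R) = -1 := by
    rw [smul_neg, Algebra.smul_def, ← map_mul, Units.inv_mul, map_one]
  refine ⟨⟨tn R r n ξ Q 0, -(((u⁻¹ : Rˣ) : R) • a), ?_, ?_⟩, rfl⟩
  · rw [mul_neg, mul_smul_comm, hc, h', e, neg_neg]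
  · rw [neg_mul, smul_mul_assoc, h', e, neg_neg]

lemma tn_unit {i : ℕ} (hi : i < n) : IsUnit (tn R r n ξ Q i) := by
  rcases Nat.eq_zero_or_pos i with rfl | h
  · exact tn_zero_isUnit hi
  · exact tn_isUnit hG.hξ h hi

lemma sl_isUnit (p : RPartition r n) : IsUnit (sl R ξ Q p) := by
  refine Wf_mem (S := IsUnit.submonoid (HA R r n ξ Q)) 
    (fun x hx => (cl_valid p x hx).1) fun i hi => ?_
  rw [zero_add, cl_sz] at hi
  exact tn_unit hi

/-- The cocenter is spanned by the images of the elements `sl p`. -/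
lemma span_cocenter (hn : 1 ≤ n) : (⊤ : Submodule R (HA R r n ξ Q ⧸ commutatorSubmodule R (HA R r n ξ Q))) ≤
    Submodule.span R (Set.range fun p => (commutatorSubmodule R _).mkQ (sl R ξ Q p)) := by
  set C := commutatorSubmodule R (HA R r n ξ Q)
  set S := Submodule.span R (Set.range fun p => C.mkQ (sl R ξ Q p)) with hS
  rintro x -
  obtain ⟨x, rfl⟩ := C.mkQ_surjective x
  have := trace_zero' hn (φ := S.mkQ ∘ₗ C.mkQ) (r := r) ?_ ?_ x
  · simpa using this
  · intro x y
    simp only [LinearMap.comp_apply]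
    congr 1
    rw [← sub_eq_zero, ← map_sub, Submodule.mkQ_apply, Submodule.Quotient.mk_eq_zero]
    exact Submodule.subset_span ⟨x, y, rfl⟩
  · intro p
    simp only [LinearMap.comp_apply]
    rw [Submodule.mkQ_apply, Submodule.Quotient.mk_eq_zero]
    exact Submodule.subset_span ⟨p, rfl⟩

lemma trace_comm {χ : HA R r n ξ Q →ₗ[R] R} (h : ∀ x y, χ (x * y) = χ (y * x)) :
    commutatorSubmodule R (HA R r n ξ Q) ≤ LinearMap.ker χ := by
  refine Submodule.span_le.2 ?_
  rintro _ ⟨a, b, rfl⟩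
  rw [SetLike.mem_coe, LinearMap.mem_ker, map_sub, h, sub_self]

/-- Trace functions separating the elements `sl p` yield a dual family of central elements. -/
lemma exists_CDual_of_traces [IsDomain R] (hn : 1 ≤ n) (χ : RPartition r n → HA R r n ξ Q →ₗ[R] R)
    (hχ : ∀ p x y, χ p (x * y) = χ p (y * x))
    (hdet : (Matrix.of fun p q => χ p (sl R ξ Q q)).det ≠ 0) :
    ∃ z : RPartition r n → HA R r n ξ Q, CDual z := by
  set C := commutatorSubmodule R (HA R r n ξ Q) with hC
  have li : LinearIndependent R fun p => C.mkQ (sl R ξ Q p) := by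
    rw [Fintype.linearIndependent_iff]
    intro g hg
    have h0 : (Matrix.of fun p q => χ p (sl R ξ Q q)).mulVec g = 0 := by
      funext p
      have := congrArg (C.liftQ (χ p) (trace_comm (hχ p))) hg
      simp only [map_sum, map_smul, Submodule.mkQ_apply, Submodule.liftQ_apply, map_zero,
        smul_eq_mul] at this
      rw [Matrix.mulVec, dotProduct, Pi.zero_apply, ← this]
      exact Finset.sum_congr rfl fun q _ => mul_comm _ _
    exact fun p => congrFun (Matrix.eq_zero_of_mulVec_eq_zero hdet h0) p
  let B := Module.Basis.mk li (span_cocenter hn)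
  obtain ⟨I, _, b, y, hb⟩ := exists_dual_system (R := R) (ξ := ξ) (Q := Q) n
  have hb : IsDual b y := hb
  refine ⟨fun p => ∑ i, (B.coord p ∘ₗ C.mkQ) (b i) • y i, ?_, ?_⟩
  · intro p x
    rw [← sub_eq_zero]
    refine tau_nondeg fun h => ?_
    set z := ∑ i, (B.coord p ∘ₗ C.mkQ) (b i) • y i
    have e : tau n (x * z * h) = tau n (z * (h * x)) := by
      rw [mul_assoc, tau_comm, mul_assoc]
    rw [sub_mul, map_sub, e, mul_assoc z, hb.rep, hb.rep, ← map_sub, LinearMap.comp_apply]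
    have : C.mkQ (h * x - x * h) = 0 := by
      rw [Submodule.mkQ_apply, Submodule.Quotient.mk_eq_zero]
      exact Submodule.subset_span ⟨h, x, rfl⟩
    rw [this, map_zero]
  · intro p q
    rw [hb.rep, LinearMap.comp_apply]
    have : C.mkQ (sl R ξ Q q) = B q := by simp [B]
    rw [this, Module.Basis.coord_apply, Module.Basis.repr_self, Finsupp.single_apply]
    simp only [eq_comm]

variable {A : Type} [CommRing A] [IsDomain A] {σ : A →+* R} {ξ₀ : A} {Q₀ : Fin r → A}
  [hG₀ : Good ξ₀ Q₀]

/-- If the parameters of a domain `A` specialize to those of `R`, and over `R` the elements `sl p`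
are separated by the traces `TT`, then a dual family of central elements exists over `A`. -/
lemma exists_CDual_of_spec [IsDomain R] (hn : 1 ≤ n) (hs : Spec σ ξ₀ Q₀ ξ Q) {I : Type} [Fintype I]
    {b y : I → HA R r n ξ Q} (hb : IsDual b y) (s' : RPartition r n → HA R r n ξ Q)
    (hs1 : ∀ p, sl R ξ Q p * s' p = 1)
    (hT : ∀ p q, TT b y (s' p) (sl R ξ Q q) = 0 ↔ p ≠ q) :
    ∃ z : RPartition r n → HA A r n ξ₀ Q₀, CDual z := by
  obtain ⟨J, _, b₀, y₀, hb₀⟩ := exists_dual_system (R := A) (ξ := ξ₀) (Q := Q₀) n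
  have hb₀ : IsDual b₀ y₀ := hb₀
  choose u hu using fun p : RPartition r n => sl_isUnit (R := A) (ξ := ξ₀) (Q := Q₀) p
  have hu' : ∀ p, bc hs n ((u p)⁻¹ : (HA A r n ξ₀ Q₀)ˣ) = s' p := by
    intro p
    have h1 : bc hs n ((u p)⁻¹ : (HA A r n ξ₀ Q₀)ˣ) * sl R ξ Q p = 1 := by
      rw [← bc_sl hs, ← hu, ← map_mul, Units.inv_mul, map_one]
    rw [← mul_one (bc hs n _), ← hs1 p, ← mul_assoc, h1, one_mul]
  refine exists_CDual_of_traces hn (fun p => TT b₀ y₀ ((u p)⁻¹ : (HA A r n ξ₀ Q₀)ˣ))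
    (fun p => TT_comm hb₀ _) fun h0 => ?_
  have h1 := congrArg σ h0
  rw [map_zero, RingHom.map_det, RingHom.mapMatrix_apply] at h1
  have h2 : (Matrix.of fun p q => TT b₀ y₀ ((u p)⁻¹ : (HA A r n ξ₀ Q₀)ˣ)
      (sl A ξ₀ Q₀ q)).map σ = Matrix.diagonal fun p => TT b y (s' p) (sl R ξ Q p) := by
    ext p q
    rw [Matrix.map_apply, Matrix.of_apply, ← TT_bc hs, TT_indep (IsDual.bc hs hb₀) hb, hu',
      bc_sl, Matrix.diagonal_apply]
    split
    · subst p; rfl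
    · rename_i h; exact (hT p q).2 h
  rw [h2, Matrix.det_diagonal, Finset.prod_eq_zero_iff] at h1
  obtain ⟨p, _, hp⟩ := h1
  exact (hT p p).1 hp rfl

end Generic
end HC

/-! ### The group algebra case -/

namespace HC
open Polynomial

section Monomial

variable {R : Type} [CommRing R] {B : Type*} [Ring B] [Algebra R B]
variable {f : R[X]} {r n : ℕ} {g : ℕ → B}

/-- The vector `v` is a basis vector multiplied by an element of `S`. -/
def Mono (S : Submonoid B) (v : Xv r n →₀ B) : Prop := ∃ x, ∃ b ∈ S, v = Finsupp.single x b

lemma Mono.smul {S : Submonoid B} {v : Xv r n →₀ B} (h : Mono S v) {b : B} (hb : b ∈ S) :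
    Mono S (b • v) := by
  obtain ⟨x, c, hc, rfl⟩ := h
  exact ⟨x, b * c, mul_mem hb hc, by rw [Finsupp.smul_single, smul_eq_mul]⟩

lemma mono_E (S : Submonoid B) {j : ℕ} (h : j ≤ n) : Mono S (Ev B r n j) :=
  ⟨_, 1, one_mem _, Ev_eq h⟩

lemma mono_D (S : Submonoid B) {j k : ℕ} (h : j ≤ n) (h1 : 1 ≤ k) (h2 : k < r) :
    Mono S (Dv B r n j k) :=
  ⟨_, 1, one_mem _, Dv_eq h h1 h2⟩

lemma mono_Z (S : Submonoid B) (hf : f = X ^ r - 1) (hr : 1 ≤ r) {k : ℕ} (hk : k ≤ r) :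
    Mono S (Zv B f r n k) := by
  have main : ∀ k < r, Mono S (Zv B f r n k) := by
    intro k hk
    rcases Nat.eq_zero_or_pos k with rfl | h
    · rw [Z_zero]; exact mono_E S (Nat.zero_le _)
    · rw [Z_pos h hk]; exact mono_D S (Nat.zero_le _) h hk
  rcases lt_or_eq_of_le hk with h | h
  · exact main k h
  · have e : Zv B f r n k = Zv B f r n 0 := by
      rw [h, Z_r hr, Finset.sum_eq_single 0]
      · rw [hf, coeff_sub, coeff_X_pow, if_neg (by omega), coeff_one_zero, zero_sub, neg_smul,
          one_smul, neg_neg]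
      · intro q hq h0
        rw [Finset.mem_range] at hq
        rw [hf, coeff_sub, coeff_X_pow, if_neg (by omega), coeff_one, if_neg h0, sub_zero,
          zero_smul]
      · intro h; exact absurd (Finset.mem_range.2 hr) h
    rw [e]
    exact main 0 hr

/-- For `ξ = 1` and `f = X ^ r - 1` the generators act by monomial matrices. -/
lemma mono_tab {S : Submonoid B} (hf : f = X ^ r - 1) (hr : 1 ≤ r) (hg : ∀ j < n, g j ∈ S) {i : ℕ}
    (hi : i < n + 1) (x : Xv r n) : Mono S (tab (1 : R) f r n g i x.1) := by
  rcases x with ⟨j | ⟨j, k⟩, hx⟩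
  · have hj : j ≤ n := hx
    change Mono S (tab (1 : R) f r n g i (.e j))
    rcases i with - | i
    · rcases j with - | j
      · exact mono_Z S hf hr hr
      · exact (mono_E S hj).smul (hg 0 (by omega))
    · simp only [tab]
      rw [if_neg (by omega)]
      split_ifs with h1 h2 h3
      · exact (mono_E S hj).smul (hg _ (by omega))
      · exact mono_E S (by omega)
      · rw [one_smul, sub_self, zero_smul, add_zero]
        exact mono_E S (by omega)
      · exact (mono_E S hj).smul (hg _ (by omega))
  · obtain ⟨hj, h1, h2⟩ : j ≤ n ∧ 1 ≤ k ∧ k < r := hx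
    change Mono S (tab (1 : R) f r n g i (.d j k))
    rcases i with - | i
    · rcases j with - | j
      · exact mono_Z S hf hr h2
      · have : tab (1 : R) f r n g 0 (.d (j + 1) k) = g 0 • Dv B r n (j + 1) k := by
          simp [tab]
        rw [this]
        exact (mono_D S hj h1 h2).smul (hg 0 (by omega))
    · simp only [tab]
      rw [if_neg (by omega)]
      split_ifs with h3 h4 h5
      · exact (mono_D S hj h1 h2).smul (hg _ (by omega))
      · rw [one_smul, sub_self, zero_smul, add_zero]
        exact mono_D S (by omega) h1 h2
      · exact mono_D S (by omega) h1 h2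
      · exact (mono_D S hj h1 h2).smul (hg _ (by omega))

end Monomial

section Gamma

variable {R : Type} [CommRing R] {r n : ℕ} {Q : Fin r → R}

variable (R r n Q) in
/-- The monoid generated by `t_0, …, t_{n-1}`; it is used only when `ξ = 1` and the `Q_i` are the
`r`-th roots of unity, when it is a copy of the group `G(r,1,n)`. -/
def Gam : Submonoid (HA R r n 1 Q) := Submonoid.closure {x | ∃ i < n, x = tn R r n 1 Q i}

lemma tn_mem_Gam {i : ℕ} (hi : i < n) : tn R r n 1 Q i ∈ Gam R r n Q :=
  Submonoid.subset_closure ⟨i, hi, rfl⟩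

lemma sl_mem_Gam (p : RPartition r n) : sl R 1 Q p ∈ Gam R r n Q := by
  refine Wf_mem _ (fun x hx => (cl_valid p x hx).1) fun i hi => ?_
  rw [zero_add, cl_sz] at hi
  exact tn_mem_Gam hi

lemma Gam_inv (hf : fp Q = X ^ r - 1) (hr : 1 ≤ r) {γ : HA R r n 1 Q} (h : γ ∈ Gam R r n Q) :
    ∃ δ ∈ Gam R r n Q, γ * δ = 1 ∧ δ * γ = 1 := by
  induction h using Submonoid.closure_induction with
  | mem x hx =>
    obtain ⟨i, hi, rfl⟩ := hx
    rcases Nat.eq_zero_or_pos i with rfl | h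
    · have c := (HRel_tn (R := R) (n := n) (Q := Q) (ξ := 1)).cyc hi
      rw [hf, map_sub, map_pow, aeval_X, map_one, sub_eq_zero] at c
      refine ⟨tn R r n 1 Q 0 ^ (r - 1), pow_mem (tn_mem_Gam hi) _, ?_, ?_⟩
      · rw [← pow_succ', Nat.sub_add_cancel hr, c]
      · rw [← pow_succ, Nat.sub_add_cancel hr, c]
    · have q := (HRel_tn (R := R) (n := n) (Q := Q) (ξ := 1)).quad i h hi
      rw [sub_self, zero_smul, one_smul, zero_add] at q
      exact ⟨_, tn_mem_Gam hi, q, q⟩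
  | one => exact ⟨1, one_mem _, mul_one _, mul_one _⟩
  | mul x y _ _ hx hy =>
    obtain ⟨a, ha, h1, h2⟩ := hx
    obtain ⟨b, hb, h3, h4⟩ := hy
    refine ⟨b * a, mul_mem hb ha, ?_, ?_⟩
    · rw [mul_assoc, ← mul_assoc y, h3, one_mul, h1]
    · rw [mul_assoc, ← mul_assoc a, h2, one_mul, h4]

lemma Gam_span (x : HA R r n 1 Q) : x ∈ Submodule.span R (Gam R r n Q : Set (HA R r n 1 Q)) := by
  refine mem_of_right (Submodule.span R (Gam R r n Q : Set (HA R r n 1 Q)))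
    (Submodule.subset_span (one_mem _)) (fun i hi x hx => ?_) x
  refine Submodule.span_induction (p := fun x _ => x * tn R r n 1 Q i ∈
    Submodule.span R (Gam R r n Q : Set (HA R r n 1 Q))) ?_ ?_ ?_ ?_ hx
  · intro w hw
    exact Submodule.subset_span (mul_mem hw (tn_mem_Gam hi))
  · simp
  · intro x y _ _ h h'; rw [add_mul]; exact add_mem h h'
  · intro a x _ h; rw [smul_mul_assoc]; exact Submodule.smul_mem _ _ h

variable [hG : Good (1 : R) Q]

/-- In the group case every group element has a single nonzero coordinate over `H_n`, which is
again a group element. -/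
lemma Gam_ev (hf : fp Q = X ^ r - 1) {γ : HA R r (n + 1) 1 Q} (h : γ ∈ Gam R r (n + 1) Q) :
    Mono (Gam R r n Q) (ev n γ) := by
  induction h using Submonoid.closure_induction_right with
  | one => rw [ev_one]; exact mono_E _ le_rfl
  | mul_right x hx y hy ih =>
    obtain ⟨i, hi, rfl⟩ := hy
    obtain ⟨z, b, hb, e⟩ := ih
    rw [ev_mul_tn _ hi, e, opn, Finsupp.linearCombination_single]
    exact (mono_tab hf hG.hr (fun j hj => tn_mem_Gam hj) hi z).smul hb

lemma Gam_eq (hf : fp Q = X ^ r - 1) {γ : HA R r (n + 1) 1 Q} (h : γ ∈ Gam R r (n + 1) Q) :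
    ∃ (x : Xv r n), ∃ b ∈ Gam R r n Q, ev n γ = Finsupp.single x b ∧
      γ = iot n b * hat R r n 1 Q x.1 := by
  obtain ⟨x, b, hb, e⟩ := Gam_ev hf h
  refine ⟨x, b, hb, e, ?_⟩
  conv_lhs => rw [expand γ, e]
  rw [Finset.sum_eq_single x]
  · rw [Finsupp.single_eq_same]
  · intro y _ hy
    rw [Finsupp.single_eq_of_ne hy, map_zero, zero_mul]
  · intro h; exact absurd (Finset.mem_univ _) h

lemma Gam_zero {γ : HA R r 0 1 Q} (h : γ ∈ Gam R r 0 Q) : γ = 1 := by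
  have : {x | ∃ i < 0, x = tn R r 0 1 Q i} = ∅ := by ext; simp
  rw [Gam, this, Submonoid.closure_empty, Submonoid.mem_bot] at h
  exact h

lemma Gam_finite (hf : fp Q = X ^ r - 1) (n : ℕ) : (Gam R r n Q : Set (HA R r n 1 Q)).Finite := by
  induction n with
  | zero => exact (Set.finite_singleton 1).subset fun x hx => Gam_zero hx
  | succ n ih =>
    refine (((Set.finite_univ (α := Xv r n)).prod ih).image
      fun p => iot n p.2 * hat R r n 1 Q p.1.1).subset ?_
    intro γ hγ
    obtain ⟨x, b, hb, -, e⟩ := Gam_eq hf hγ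
    exact ⟨(x, b), ⟨Set.mem_univ _, hb⟩, e.symm⟩

/-- On the group generated by the generators, the symmetrizing form is the indicator of `1`. -/
lemma Gam_tau (hf : fp Q = X ^ r - 1) (n : ℕ) {γ : HA R r n 1 Q} (h : γ ∈ Gam R r n Q) :
    γ = 1 ∨ tau n γ = 0 := by
  induction n with
  | zero => exact Or.inl (Gam_zero h)
  | succ n ih =>
    obtain ⟨x, b, hb, e, e'⟩ := Gam_eq hf h
    rw [tau_succ, eps_apply, e]
    by_cases hx : x = xe (le_refl n)
    · subst hx
      rw [Finsupp.single_eq_same]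
      refine (ih hb).imp (fun h1 => ?_) id
      rw [e', h1, map_one, one_mul]
      simp [hat, dn]
    · rw [Finsupp.single_eq_of_ne (Ne.symm hx), map_zero]
      exact Or.inr rfl

end Gamma

section GroupTraces

variable {R : Type} [CommRing R] [CharZero R] {r n : ℕ} {Q : Fin r → R} [hG : Good (1 : R) Q]

/-- If the elements `sl p` are pairwise non-conjugate in the group `Gam`, they are separated by
the traces `TT`. -/
lemma Gam_sep (hf : fp Q = X ^ r - 1) (hnc : ∀ (p q : RPartition r n), ∀ γ ∈ Gam R r n Q,
    sl R 1 Q q * γ = γ * sl R 1 Q p → p = q) :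
    ∃ (I : Type) (_ : Fintype I) (b y : I → HA R r n 1 Q) (_ : IsDual b y)
      (s' : RPartition r n → HA R r n 1 Q), (∀ p, sl R 1 Q p * s' p = 1) ∧
      ∀ p q, TT b y (s' p) (sl R 1 Q q) = 0 ↔ p ≠ q := by
  have nt : Nontrivial R := hG.nt
  choose iv hiv h1 h2 using fun γ : Gam R r n Q => Gam_inv hf hG.hr γ.2
  have : Finite (Gam R r n Q) := (Gam_finite hf n).to_subtype
  let F : Fintype (Gam R r n Q) := Fintype.ofFinite _
  refine ⟨Gam R r n Q, F, fun γ => γ, iv, ?_, fun p => iv ⟨_, sl_mem_Gam p⟩,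
    fun p => h1 ⟨_, sl_mem_Gam p⟩, ?_⟩
  · intro h
    refine Submodule.span_induction (p := fun h _ => h = ∑ γ : Gam R r n Q,
      tau n (h * iv γ) • (γ : HA R r n 1 Q)) ?_ ?_ ?_ ?_ (Gam_span h)
    · intro x hx
      rw [Finset.sum_eq_single (⟨x, hx⟩ : Gam R r n Q)]
      · rw [h1 ⟨x, hx⟩, tau_one, one_smul]
      · intro γ _ hγ
        rcases Gam_tau hf n (mul_mem hx (hiv γ)) with h | h
        · refine absurd (Subtype.ext ?_) hγ
          change (γ : HA R r n 1 Q) = x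
          rw [← one_mul (γ : HA R r n 1 Q), ← h, mul_assoc, h2, mul_one]
        · rw [h, zero_smul]
      · intro h; exact absurd (Finset.mem_univ _) h
    · simp
    · intro x y _ _ h h'
      conv_lhs => rw [h, h']
      rw [← Finset.sum_add_distrib]
      refine Finset.sum_congr rfl fun i _ => ?_
      rw [add_mul, map_add, add_smul]
    · intro a x _ h
      conv_lhs => rw [h]
      rw [Finset.smul_sum]
      refine Finset.sum_congr rfl fun i _ => ?_
      rw [smul_mul_assoc, map_smul, smul_smul, smul_eq_mul]
  · intro p q
    rw [TT_apply]
    have mem : ∀ γ : Gam R r n Q, sl R 1 Q q * (γ * iv ⟨_, sl_mem_Gam p⟩ * iv γ) ∈ Gam R r n Q :=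
      fun γ => mul_mem (sl_mem_Gam q) (mul_mem (mul_mem γ.2 (hiv _)) (hiv _))
    constructor
    · rintro h0 rfl
      classical
      let P : Gam R r n Q → Prop := fun γ => sl R 1 Q p * (γ * iv ⟨_, sl_mem_Gam p⟩ * iv γ) = 1
      have e : ∀ γ : Gam R r n Q, tau n (sl R 1 Q p * ((γ : HA R r n 1 Q) * iv ⟨_, sl_mem_Gam p⟩ * iv γ)) =
          if P γ then (1 : R) else 0 := by
        intro γ
        by_cases h : P γ
        · rw [if_pos h, h, tau_one]
        · rw [if_neg h]; exact (Gam_tau hf n (mem γ)).resolve_left h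
      simp only [e] at h0
      rw [Finset.sum_boole, Nat.cast_eq_zero, Finset.card_eq_zero] at h0
      have h3 : (1 : Gam R r n Q) ∉ Finset.filter P Finset.univ := by rw [h0]; simp
      refine h3 (Finset.mem_filter.2 ⟨Finset.mem_univ _, ?_⟩)
      change sl R 1 Q p * (1 * iv ⟨_, sl_mem_Gam p⟩ * iv 1) = 1
      have h4 : iv 1 = 1 := by
        have := h1 1
        rwa [OneMemClass.coe_one, one_mul] at this
      rw [h4, one_mul, mul_one, h1 ⟨_, sl_mem_Gam p⟩]
    · intro hpq
      refine Finset.sum_eq_zero fun γ _ => ?_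
      rcases Gam_tau hf n (mem γ) with h | h
      · refine absurd (hnc p q γ γ.2 ?_) hpq
        have h5 := congrArg (fun w => w * (γ * sl R 1 Q p)) h
        simp only [one_mul] at h5
        rw [← h5]
        simp only [mul_assoc]
        rw [← mul_assoc (iv γ), h2, one_mul, h2 ⟨_, sl_mem_Gam p⟩, mul_one]
      · exact h

end GroupTraces
end HC

/-! ### Non-conjugacy in `G(r,1,n)` -/

namespace HC
open Polynomial

section Perm

variable {r : ℕ}

variable (r) in
/-- The generators of `G(r,1,n)` as permutations of `ℕ × ZMod r`: the generator of index `0`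
shifts the colour of `0`, the generator of index `i + 1` exchanges `i` and `i + 1`. -/
def gp : ℕ → Equiv.Perm (ℕ × ZMod r)
  | 0 =>
    { toFun := fun p => if p.1 = 0 then (0, p.2 + 1) else p
      invFun := fun p => if p.1 = 0 then (0, p.2 - 1) else p
      left_inv := by
        rintro ⟨j, z⟩
        by_cases h : j = 0 <;> simp [h]
      right_inv := by
        rintro ⟨j, z⟩
        by_cases h : j = 0 <;> simp [h] }
  | i + 1 => (Equiv.swap i (i + 1)).prodCongr (Equiv.refl _)

lemma gp_zero_apply (j : ℕ) (z : ZMod r) :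
    gp r 0 (j, z) = if j = 0 then (0, z + 1) else (j, z) := rfl

lemma gp_succ_apply (i j : ℕ) (z : ZMod r) :
    gp r (i + 1) (j, z) = (if j = i then i + 1 else if j = i + 1 then i else j, z) := by
  change (Equiv.swap i (i + 1) j, z) = _
  rw [Equiv.swap_apply_def]

lemma gp_succ_sq (i : ℕ) : gp r (i + 1) * gp r (i + 1) = 1 := by
  ext1 ⟨j, z⟩
  rw [Equiv.Perm.mul_apply, gp_succ_apply, gp_succ_apply, Equiv.Perm.one_apply]
  congr 1
  split_ifs <;> omega

lemma gp_zero_pow (k j : ℕ) (z : ZMod r) :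
    (gp r 0 ^ k) (j, z) = if j = 0 then (0, z + k) else (j, z) := by
  induction k with
  | zero =>
    by_cases h : j = 0 <;> simp [h]
  | succ k ih =>
    rw [pow_succ', Equiv.Perm.mul_apply, ih]
    split_ifs with h
    · rw [gp_zero_apply, if_pos rfl, Nat.cast_succ, add_assoc]
    · rw [gp_zero_apply, if_neg h]

lemma gp_zero_pow_r : gp r 0 ^ r = 1 := by
  ext1 ⟨j, z⟩
  rw [gp_zero_pow, ZMod.natCast_self, add_zero, Equiv.Perm.one_apply]
  split_ifs with h
  · rw [h]
  · rfl

lemma gp_quart : gp r 0 * gp r 1 * gp r 0 * gp r 1 = gp r 1 * gp r 0 * gp r 1 * gp r 0 := by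
  ext1 ⟨j, z⟩
  simp only [Equiv.Perm.mul_apply]
  rcases j with - | - | j
  · simp [gp_zero_apply, gp_succ_apply (i := 0)]
  · simp [gp_zero_apply, gp_succ_apply (i := 0)]
  · simp [gp_zero_apply, gp_succ_apply (i := 0)]

lemma gp_comm {i j : ℕ} (h : i + 1 < j) : gp r i * gp r j = gp r j * gp r i := by
  obtain ⟨j, rfl⟩ : ∃ j', j = j' + 1 := ⟨j - 1, by omega⟩
  ext1 ⟨u, z⟩
  rcases i with - | i
  · rw [Equiv.Perm.mul_apply, Equiv.Perm.mul_apply]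
    by_cases h0 : u = 0
    · subst h0
      rw [gp_succ_apply, if_neg (by omega), if_neg (by omega), gp_zero_apply, if_pos rfl,
        gp_succ_apply, if_neg (by omega), if_neg (by omega)]
    · have hv : (if u = j then j + 1 else if u = j + 1 then j else u) ≠ 0 := by
        split_ifs <;> omega
      rw [gp_succ_apply, gp_zero_apply, gp_zero_apply, if_neg hv, if_neg h0, gp_succ_apply]
  · simp only [Equiv.Perm.mul_apply, gp_succ_apply]
    congr 1
    split_ifs <;> omega

lemma gp_braid (i : ℕ) : gp r (i + 1) * gp r (i + 2) * gp r (i + 1) =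
    gp r (i + 2) * gp r (i + 1) * gp r (i + 2) := by
  ext1 ⟨u, z⟩
  simp only [Equiv.Perm.mul_apply, gp_succ_apply]
  congr 1
  split_ifs <;> omega

lemma gp_up (b l j : ℕ) (z : ZMod r) : up (gp r) (b + 1) l (j, z) =
    (if j = b + l then b else if b ≤ j ∧ j < b + l then j + 1 else j, z) := by
  induction l generalizing j with
  | zero =>
    simp only [up, Equiv.Perm.one_apply]
    congr 1
    split_ifs <;> omega
  | succ l ih =>
    rw [up, Equiv.Perm.mul_apply, show b + 1 + l = (b + l) + 1 by omega, gp_succ_apply, ih]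
    congr 1
    split_ifs <;> omega

lemma gp_up_dn (l : ℕ) : up (gp r) 1 l * dn (gp r) 1 l = 1 := by
  induction l with
  | zero => exact mul_one _
  | succ l ih =>
    rw [up, dn, mul_assoc, ← mul_assoc (gp r (1 + l)), add_comm 1 l, gp_succ_sq, one_mul, ih]

lemma gp_bb (m k j : ℕ) (z : ZMod r) :
    bb (gp r) m k (j, z) = if j = m then (m, z + k) else (j, z) := by
  have hd : dn (gp r) 1 m = (up (gp r) 1 m)⁻¹ := eq_inv_of_mul_eq_one_right (gp_up_dn m)
  rw [bb, hd, Equiv.Perm.mul_apply, Equiv.Perm.mul_apply, Equiv.Perm.inv_eq_iff_eq]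
  by_cases h : j = m
  · rw [gp_up 0 m j z, if_pos (by omega), gp_zero_pow, if_pos rfl, if_pos h, gp_up 0,
      if_pos (by omega)]
  · have hu : (if j = 0 + m then 0 else if 0 ≤ j ∧ j < 0 + m then j + 1 else j) ≠ 0 := by
      split_ifs <;> omega
    rw [if_neg h, gp_up 0 m j z, gp_zero_pow, if_neg hu]

lemma gp_blk (m a k j : ℕ) (z : ZMod r) (ha : 1 ≤ a) : blk (gp r) m (a, k) (j, z) =
    if j + 1 = m + a then (m, z + k) else (if m ≤ j ∧ j < m + a then j + 1 else j, z) := by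
  have e : ∀ p : ℕ × ZMod r, (if k = 0 then (1 : Equiv.Perm (ℕ × ZMod r)) else bb (gp r) m k) p =
      if p.1 = m then (m, p.2 + k) else p := by
    rintro ⟨u, z⟩
    by_cases hk : k = 0
    · subst hk
      rw [if_pos rfl, Equiv.Perm.one_apply]
      split_ifs with h
      · rw [Nat.cast_zero, add_zero, ← h]
      · rfl
    · rw [if_neg hk, gp_bb]
  change ((if k = 0 then (1 : Equiv.Perm (ℕ × ZMod r)) else bb (gp r) m k) *
    up (gp r) (m + 1) (a - 1)) (j, z) = _
  rw [Equiv.Perm.mul_apply, gp_up, e]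
  by_cases h : j + 1 = m + a
  · rw [if_pos h, if_pos]
    rw [if_pos (by omega)]
  · rw [if_neg h, if_neg]
    · congr 1
      split_ifs <;> omega
    · simp only
      split_ifs <;> omega

lemma gp_blk_pow (m a k u i : ℕ) (z : ZMod r) (hu : u < a) :
    (blk (gp r) m (a, k) ^ i) (m + u, z) = (m + (u + i) % a, z + ((u + i) / a : ℕ) * k) := by
  have ha : 1 ≤ a := by omega
  induction i with
  | zero => simp [Nat.mod_eq_of_lt hu, Nat.div_eq_of_lt hu]
  | succ i ih =>
    rw [pow_succ', Equiv.Perm.mul_apply, ih, gp_blk _ _ _ _ _ ha, ← add_assoc u]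
    have hm := Nat.mod_lt (u + i) ha
    have hq := Nat.div_add_mod (u + i) a
    generalize (u + i) / a = q at *
    generalize (u + i) % a = t at *
    by_cases h : t + 1 = a
    · have e : u + i + 1 = a * (q + 1) := by rw [← hq, mul_add, mul_one]; omega
      rw [if_pos (by omega), e, Nat.mul_mod_right, Nat.mul_div_cancel_left _ ha, Nat.cast_succ,
        add_mul, one_mul, add_zero, add_assoc]
    · have e : u + i + 1 = a * q + (t + 1) := by omega
      rw [if_neg (by omega), if_pos (by omega), e, Nat.mul_add_mod, Nat.mul_add_div ha,
        Nat.mod_eq_of_lt (by omega), Nat.div_eq_of_lt (by omega), add_zero, add_assoc]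

lemma gp_Wf_ge (c : List (ℕ × ℕ)) (hc : ∀ x ∈ c, 1 ≤ x.1) {j : ℕ} (z : ZMod r) (hj : sz c ≤ j) :
    Wf (gp r) 0 c (j, z) = (j, z) := by
  induction c with
  | nil => rfl
  | cons x c ih =>
    rw [sz_cons] at hj
    rw [Wf, Equiv.Perm.mul_apply, gp_blk _ _ _ _ _ (hc x List.mem_cons_self), if_neg (by omega),
      if_neg (by omega)]
    exact ih (fun y hy => hc y (List.mem_cons_of_mem _ hy)) (by omega)

lemma gp_Wf_lt (c : List (ℕ × ℕ)) (hc : ∀ x ∈ c, 1 ≤ x.1) {p : ℕ × ZMod r} (hj : p.1 < sz c) :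
    (Wf (gp r) 0 c p).1 < sz c := by
  have h2 := hj
  by_contra h
  have h3 := gp_Wf_ge (r := r) c hc (Wf (gp r) 0 c p).2 (not_lt.1 h)
  rw [Prod.mk.eta] at h3
  rw [(Wf (gp r) 0 c).injective h3] at h
  exact h h2

/-- The number of points below `n` whose orbit under `g` closes after `i` steps with the colour
shifted by `s`. -/
def cnt (n : ℕ) (g : Equiv.Perm (ℕ × ZMod r)) (i : ℕ) (s : ZMod r) : ℕ :=
  ((Finset.range n).filter fun j => (g ^ i) (j, 0) = (j, s)).card

/-- The contribution of a block to `cnt`. -/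
def contr (i : ℕ) (s : ZMod r) (x : ℕ × ℕ) : ℕ :=
  if x.1 ∣ i ∧ ((i / x.1 : ℕ) * x.2 : ZMod r) = s then x.1 else 0

lemma cnt_Wf (c : List (ℕ × ℕ)) (hc : ∀ x ∈ c, 1 ≤ x.1) (i : ℕ) (s : ZMod r) :
    cnt (sz c) (Wf (gp r) 0 c) i s = (c.map (contr i s)).sum := by
  induction c with
  | nil => rfl
  | cons x c ih =>
    have hx := hc x List.mem_cons_self
    have hc' : ∀ y ∈ c, 1 ≤ y.1 := fun y hy => hc y (List.mem_cons_of_mem _ hy)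
    have e1 : ∀ i, ∀ p : ℕ × ZMod r, p.1 < sz c →
        ((Wf (gp r) 0 (x :: c)) ^ i) p = ((Wf (gp r) 0 c) ^ i) p ∧
        (((Wf (gp r) 0 c) ^ i) p).1 < sz c := by
      intro i p hp
      induction i with
      | zero => exact ⟨rfl, hp⟩
      | succ i ih =>
        obtain ⟨h1, h2⟩ := ih
        rw [pow_succ', Equiv.Perm.mul_apply, h1, pow_succ', Equiv.Perm.mul_apply]
        refine ⟨?_, gp_Wf_lt c hc' h2⟩
        generalize ((Wf (gp r) 0 c) ^ i) p = q at *
        rw [Wf, Equiv.Perm.mul_apply, ← Prod.mk.eta (p := q), gp_blk _ _ _ _ _ hx, if_neg (by omega),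
          if_neg (by omega)]
    have e2 : ∀ i u, u < x.1 → ((Wf (gp r) 0 (x :: c)) ^ i) (sz c + u, 0) =
        (blk (gp r) (sz c) (x.1, x.2) ^ i) (sz c + u, 0) := by
      intro i u hu
      induction i with
      | zero => rfl
      | succ i ih =>
        rw [pow_succ', Equiv.Perm.mul_apply, ih, pow_succ', Equiv.Perm.mul_apply, Wf,
          Equiv.Perm.mul_apply, zero_add]
        change Wf (gp r) 0 c (blk (gp r) (sz c) (x.1, x.2) _) = _
        rw [← Equiv.Perm.mul_apply (blk _ _ _) (blk _ _ _ ^ i), ← pow_succ', gp_blk_pow _ _ _ _ _ _ hu]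
        exact gp_Wf_ge c hc' _ (by omega)
    rw [List.map_cons, List.sum_cons, ← ih hc', sz_cons, cnt, cnt, add_comm (contr i s x),
      add_comm x.1, Finset.card_filter, Finset.card_filter, Finset.sum_range_add]
    congr 1
    · refine Finset.sum_congr rfl fun j hj => ?_
      rw [(e1 i (j, 0) (Finset.mem_range.1 hj)).1]
    · have e3 : ∀ u ∈ Finset.range x.1, (if ((Wf (gp r) 0 (x :: c)) ^ i) (sz c + u, 0) =
          (sz c + u, s) then 1 else 0) =
          if x.1 ∣ i ∧ ((i / x.1 : ℕ) * x.2 : ZMod r) = s then 1 else 0 := by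
        intro u hu
        rw [Finset.mem_range] at hu
        refine if_congr ?_ rfl rfl
        rw [e2 i u hu, gp_blk_pow _ _ _ _ _ _ hu, Prod.mk.injEq, zero_add]
        have h1 : sz c + (u + i) % x.1 = sz c + u ↔ x.1 ∣ i := by
          rw [add_right_inj]
          constructor
          · intro h
            have := (Nat.modEq_iff_dvd' (Nat.le_add_right u i)).1
              (show u ≡ u + i [MOD x.1] by rw [Nat.ModEq, h, Nat.mod_eq_of_lt hu])
            simpa using this
          · rintro ⟨q, rfl⟩
            rw [Nat.add_mul_mod_self_left, Nat.mod_eq_of_lt hu]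
        rw [h1]
        refine and_congr_right fun h => ?_
        obtain ⟨q, rfl⟩ := h
        rw [Nat.add_mul_div_left _ _ hx, Nat.div_eq_of_lt hu, zero_add,
          Nat.mul_div_cancel_left _ hx]
      rw [Finset.sum_congr rfl e3, Finset.sum_const, Finset.card_range, contr]
      split_ifs <;> simp

/-- The counting invariants determine the multiset of blocks. -/
lemma contr_inj {c c' : Multiset (ℕ × ℕ)} (hc : ∀ x ∈ c, 1 ≤ x.1 ∧ x.2 < r)
    (hc' : ∀ x ∈ c', 1 ≤ x.1 ∧ x.2 < r)
    (h : ∀ (i : ℕ) (s : ZMod r), (c.map (contr i s)).sum = (c'.map (contr i s)).sum) : c = c' := by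
  have key : ∀ (c : Multiset (ℕ × ℕ)), (∀ x ∈ c, 1 ≤ x.1 ∧ x.2 < r) → ∀ a k, 1 ≤ a → k < r →
      (c.map (contr a (k : ZMod r))).sum =
        ((c.filter fun x => x.1 < a).map (contr a (k : ZMod r))).sum + c.count (a, k) * a := by
    intro c hc a k ha hk
    induction c using Multiset.induction with
    | empty => simp
    | cons x c ih =>
      have ih := ih fun y hy => hc y (Multiset.mem_cons_of_mem hy)
      obtain ⟨h1, h2⟩ := hc x (Multiset.mem_cons_self _ _)
      rw [Multiset.map_cons, Multiset.sum_cons, ih]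
      by_cases hx : x.1 < a
      · have hne : (a, k) ≠ x := by rintro rfl; exact lt_irrefl _ hx
        rw [Multiset.filter_cons_of_pos (p := fun x : ℕ × ℕ => x.1 < a) _ hx, Multiset.map_cons, Multiset.sum_cons,
          Multiset.count_cons_of_ne hne, add_assoc]
      · rw [Multiset.filter_cons_of_neg (p := fun x : ℕ × ℕ => x.1 < a) _ hx, Multiset.count_cons, add_mul]
        have : contr a (k : ZMod r) x = (if (a, k) = x then 1 else 0) * a := by
          rw [contr]
          by_cases he : (a, k) = x
          · subst he
            rw [if_pos, if_pos rfl, one_mul]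
            refine ⟨dvd_rfl, ?_⟩
            rw [Nat.div_self ha, Nat.cast_one, one_mul]
          · rw [if_neg he, zero_mul, if_neg]
            rintro ⟨hd, hz⟩
            have hxa : x.1 = a := le_antisymm (Nat.le_of_dvd ha hd) (not_lt.1 hx)
            rw [hxa, Nat.div_self ha, Nat.cast_one, one_mul] at hz
            rw [ZMod.natCast_eq_natCast_iff', Nat.mod_eq_of_lt h2, Nat.mod_eq_of_lt hk] at hz
            exact he (Prod.ext hxa.symm hz.symm)
        rw [this]
        ring
  have main : ∀ a k, c.count (a, k) = c'.count (a, k) := by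
    intro a
    induction a using Nat.strong_induction_on with
    | _ a ih =>
      intro k
      by_cases hak : 1 ≤ a ∧ k < r
      · have e := h a k
        rw [key c hc a k hak.1 hak.2, key c' hc' a k hak.1 hak.2] at e
        have hf : (c.filter fun x => x.1 < a) = c'.filter fun x => x.1 < a := by
          ext ⟨b, l⟩
          rw [Multiset.count_filter, Multiset.count_filter]
          split_ifs with hb
          · exact ih b hb l
          · rfl
        rw [hf] at e
        exact Nat.eq_of_mul_eq_mul_right hak.1 (Nat.add_left_cancel e)
      · rw [Multiset.count_eq_zero_of_notMem fun h => hak (hc _ h),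
          Multiset.count_eq_zero_of_notMem fun h => hak (hc' _ h)]
  ext ⟨a, k⟩
  exact main a k

variable (r) in
/-- The monoid of permutations generated by the first `n` generators. -/
def GP (n : ℕ) : Submonoid (Equiv.Perm (ℕ × ZMod r)) :=
  Submonoid.closure {x | ∃ i < n, x = gp r i}

lemma GP_shift {n : ℕ} {w : Equiv.Perm (ℕ × ZMod r)} (hw : w ∈ GP r n) :
    ∀ (j : ℕ) (z s : ZMod r), w (j, z + s) = ((w (j, z)).1, (w (j, z)).2 + s) := by
  induction hw using Submonoid.closure_induction with
  | mem x hx =>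
    obtain ⟨i, hi, rfl⟩ := hx
    intro j z s
    rcases i with - | i
    · rw [gp_zero_apply, gp_zero_apply]
      split_ifs
      · simp only; rw [add_right_comm]
      · rfl
    · rw [gp_succ_apply, gp_succ_apply]
  | one => intro j z s; rfl
  | mul x y _ _ hx hy =>
    intro j z s
    rw [Equiv.Perm.mul_apply, hy, hx, Prod.mk.eta, Equiv.Perm.mul_apply]

lemma GP_lt {n : ℕ} {w : Equiv.Perm (ℕ × ZMod r)} (hw : w ∈ GP r n) :
    ∀ p : ℕ × ZMod r, p.1 < n → (w p).1 < n := by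
  induction hw using Submonoid.closure_induction with
  | mem x hx =>
    obtain ⟨i, hi, rfl⟩ := hx
    rintro ⟨j, z⟩ hj
    simp only at hj
    rcases i with - | i
    · rw [gp_zero_apply]
      split_ifs <;> assumption
    · rw [gp_succ_apply]
      simp only
      split_ifs <;> omega
  | one => intro p hp; exact hp
  | mul x y _ _ hx hy => intro p hp; exact hx _ (hy p hp)

/-- Conjugate elements have equal counts; by symmetry one inequality is enough. -/
lemma cnt_le {n : ℕ} {g g' w : Equiv.Perm (ℕ × ZMod r)} (hw : w ∈ GP r n) (hg' : g' ∈ GP r n)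
    (h : g' * w = w * g) (i : ℕ) (s : ZMod r) : cnt n g i s ≤ cnt n g' i s := by
  have hi : ∀ i, g' ^ i * w = w * g ^ i := by
    intro i
    induction i with
    | zero => simp
    | succ i ih => rw [pow_succ, mul_assoc, h, ← mul_assoc, ih, mul_assoc, ← pow_succ]
  refine Finset.card_le_card_of_injOn (fun j => (w (j, 0)).1) ?_ ?_
  · intro j hj
    rw [Finset.mem_coe, Finset.mem_filter, Finset.mem_range] at hj ⊢
    obtain ⟨hj, e⟩ := hj
    refine ⟨GP_lt hw _ hj, ?_⟩
    have e1 : (g' ^ i) (w (j, 0)) = w (j, 0 + s) := by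
      rw [zero_add, ← e]
      exact Equiv.Perm.congr_fun (hi i) (j, 0)
    rw [GP_shift hw] at e1
    have e2 := GP_shift (pow_mem hg' i) (w (j, 0)).1 0 (w (j, 0)).2
    rw [zero_add, Prod.mk.eta, e1] at e2
    generalize (g' ^ i) ((w (j, 0)).1, 0) = v at *
    obtain ⟨v1, v2⟩ := v
    rw [Prod.mk.injEq] at e2 ⊢
    refine ⟨e2.1.symm, ?_⟩
    have := e2.2
    rw [add_comm] at this
    exact (add_right_cancel this).symm
  · intro j _ j' _ e
    simp only at e
    have e1 := GP_shift hw j 0 ((w (j', 0)).2 - (w (j, 0)).2)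
    rw [add_sub_cancel, e, Prod.mk.eta] at e1
    exact (Prod.ext_iff.1 (w.injective e1)).1

end Perm

section NonConj

variable {R : Type} [CommRing R] [Nontrivial R] {r n : ℕ} {Q : Fin r → R}

/-- The permutations `gp` satisfy the Hecke relations at `ξ = 1` and `∏ (X - Q_i) = X ^ r - 1`, so
that `H_n` maps to the group algebra of the permutation group. -/
lemma HRel_gp (hf : fp Q = X ^ r - 1) : HRel (1 : R) (fp Q) n
    (fun i => MonoidAlgebra.of R (Equiv.Perm (ℕ × ZMod r)) (gp r i)) where
  cyc _ := by
    rw [hf, map_sub, map_pow, aeval_X, map_one, ← map_pow, gp_zero_pow_r, map_one, sub_self]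
  quart _ := by
    simp only [← map_mul, gp_quart]
  quad i h1 hi := by
    obtain ⟨i, rfl⟩ : ∃ j, i = j + 1 := ⟨i - 1, by omega⟩
    rw [← map_mul, gp_succ_sq, map_one, sub_self, zero_smul, one_smul, zero_add]
  comm i j h _ := by simp only [← map_mul, gp_comm h]
  braid i h1 hi := by
    obtain ⟨i, rfl⟩ : ∃ j, i = j + 1 := ⟨i - 1, by omega⟩
    simp only [← map_mul, gp_braid]

lemma Gam_perm (hf : fp Q = X ^ r - 1) {γ : HA R r n 1 Q} (h : γ ∈ Gam R r n Q) :
    ∃ w ∈ GP r n, liftH (HRel_gp hf) γ = MonoidAlgebra.of R (Equiv.Perm (ℕ × ZMod r)) w := by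
  induction h using Submonoid.closure_induction with
  | mem x hx =>
    obtain ⟨i, hi, rfl⟩ := hx
    exact ⟨gp r i, Submonoid.subset_closure ⟨i, hi, rfl⟩, liftH_tn _ hi⟩
  | one => exact ⟨1, one_mem _, by rw [map_one, map_one]⟩
  | mul x y _ _ hx hy =>
    obtain ⟨a, ha, h1⟩ := hx
    obtain ⟨b, hb, h2⟩ := hy
    exact ⟨a * b, mul_mem ha hb, by rw [map_mul, map_mul, h1, h2]⟩

lemma sl_perm (hf : fp Q = X ^ r - 1) (p : RPartition r n) : liftH (HRel_gp hf) (sl R 1 Q p) =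
    MonoidAlgebra.of R (Equiv.Perm (ℕ × ZMod r)) (Wf (gp r) 0 (cl p)) := by
  have hv : ∀ x ∈ cl p, 1 ≤ x.1 := fun x hx => (cl_valid p x hx).1
  rw [map_Wf (t := gp r) (MonoidAlgebra.of R (Equiv.Perm (ℕ × ZMod r)))
    (fun i => MonoidAlgebra.of R (Equiv.Perm (ℕ × ZMod r)) (gp r i)) 0 (cl p) hv
    fun i _ => rfl]
  refine map_Wf (t := tn R r n 1 Q) (MonoidHomClass.toMonoidHom (liftH (HRel_gp hf) : HA R r n 1 Q →ₐ[R]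
    MonoidAlgebra R (Equiv.Perm (ℕ × ZMod r)))) _ 0 (cl p) hv fun i hi => ?_
  rw [zero_add, cl_sz] at hi
  exact liftH_tn _ hi

lemma cnt_sl_le (hf : fp Q = X ^ r - 1) (p q : RPartition r n) {γ : HA R r n 1 Q}
    (hγ : γ ∈ Gam R r n Q) (h : sl R 1 Q q * γ = γ * sl R 1 Q p) (i : ℕ) (s : ZMod r) :
    ((cl p).map (contr i s)).sum ≤ ((cl q).map (contr i s)).sum := by
  obtain ⟨w, hw, e⟩ := Gam_perm hf hγ
  have h1 := congrArg (liftH (HRel_gp hf)) h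
  rw [map_mul, map_mul, e, sl_perm hf, sl_perm hf, ← map_mul, ← map_mul] at h1
  have h2 := MonoidAlgebra.of_injective h1
  rw [← cnt_Wf _ (fun x hx => (cl_valid p x hx).1), ← cnt_Wf _ (fun x hx => (cl_valid q x hx).1),
    cl_sz, cl_sz]
  refine cnt_le hw ?_ h2 i s
  refine Wf_mem _ (fun x hx => (cl_valid q x hx).1) fun i hi => ?_
  rw [zero_add, cl_sz] at hi
  exact Submonoid.subset_closure ⟨i, hi, rfl⟩

/-- The elements `sl p` are pairwise non-conjugate in the group `G(r,1,n)`. -/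
lemma sl_nonconj (hf : fp Q = X ^ r - 1) (hr : 1 ≤ r) (p q : RPartition r n)
    (γ : HA R r n 1 Q) (hγ : γ ∈ Gam R r n Q) (h : sl R 1 Q q * γ = γ * sl R 1 Q p) : p = q := by
  obtain ⟨δ, hδ, h1, h2⟩ := Gam_inv hf hr hγ
  have h' : sl R 1 Q p * δ = δ * sl R 1 Q q := by
    rw [← one_mul (sl R 1 Q p), ← h2, mul_assoc δ, ← h, mul_assoc, mul_assoc, h1, mul_one]
  refine cl_perm (contr_inj (r := r) (cl_valid p) (cl_valid q) fun i s => ?_)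
  rw [Multiset.map_coe, Multiset.map_coe, Multiset.sum_coe, Multiset.sum_coe]
  exact le_antisymm (cnt_sl_le hf p q hγ h i s) (cnt_sl_le hf q p hδ h' i s)

end NonConj
end HC

/-! ### The generic ring and base change -/

namespace HC
open Polynomial

section Generic

/-- The complex `r`-th roots of unity, listed by `Fin r`, so that the Hecke algebra with `ξ = 1`
and these parameters is the group algebra of `G(r,1,n)`. -/
lemma exists_roots (r : ℕ) (hr : 1 ≤ r) :
    ∃ Q : Fin r → ℂ, fp Q = X ^ r - 1 ∧ Good (1 : ℂ) Q := by
  have hp := Complex.isPrimitiveRoot_exp r (by omega)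
  let e := (Polynomial.nthRootsFinset r (1 : ℂ)).equivFinOfCardEq hp.card_nthRootsFinset
  refine ⟨fun i => (e.symm i : ℂ), ?_, ⟨inferInstance, hr, isUnit_one, fun i => ?_⟩⟩
  · rw [X_pow_sub_one_eq_prod hr hp, fp, ← Finset.prod_coe_sort (nthRootsFinset r (1 : ℂ))]
    exact e.symm.prod_comp fun x => (X - C (x : ℂ) : ℂ[X])
  · have h := (Polynomial.mem_nthRootsFinset hr (1 : ℂ)).1 (e.symm i).2
    exact IsUnit.of_pow_eq_one h (by omega)

/-- The product of all variables `ξ, Q_1, …, Q_r` of the generic polynomial ring. -/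
def gprod (r : ℕ) : MvPolynomial (Option (Fin r)) ℤ := ∏ o, MvPolynomial.X o

/-- The generic ring `ℤ[ξ^{±1}, Q_1^{±1}, …, Q_r^{±1}]`; the variable `none` stands for `ξ`. -/
abbrev GR (r : ℕ) : Type := Localization.Away (gprod r)

/-- The generic parameters. -/
def gv (r : ℕ) (o : Option (Fin r)) : GR r :=
  algebraMap (MvPolynomial (Option (Fin r)) ℤ) (GR r) (MvPolynomial.X o)

lemma gv_isUnit (r : ℕ) (o : Option (Fin r)) : IsUnit (gv r o) := by
  have h : IsUnit (algebraMap (MvPolynomial (Option (Fin r)) ℤ) (GR r) (gprod r)) :=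
    IsLocalization.Away.algebraMap_isUnit _
  refine isUnit_of_dvd_unit (map_dvd (algebraMap (MvPolynomial (Option (Fin r)) ℤ) (GR r)) ?_) h
  exact Finset.dvd_prod_of_mem _ (Finset.mem_univ o)

instance (r : ℕ) : IsDomain (GR r) := by
  refine IsLocalization.isDomain_localization (powers_le_nonZeroDivisors_of_noZeroDivisors ?_)
  exact Finset.prod_ne_zero_iff.2 fun o _ => MvPolynomial.X_ne_zero o

lemma gv_good (r : ℕ) (hr : 1 ≤ r) : Good (gv r none) fun i => gv r (some i) :=
  ⟨inferInstance, hr, gv_isUnit r _, fun _ => gv_isUnit r _⟩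

/-- Every choice of invertible parameters is a specialization of the generic ones. -/
lemma exists_spec {R : Type} [CommRing R] {r : ℕ} {ξ : R} {Q : Fin r → R} (hξ : IsUnit ξ)
    (hQ : ∀ i, IsUnit (Q i)) :
    ∃ σ : GR r →+* R, Spec σ (gv r none) (fun i => gv r (some i)) ξ Q := by
  let f : MvPolynomial (Option (Fin r)) ℤ →+* R :=
    MvPolynomial.eval₂Hom (Int.castRingHom R) fun o => o.elim ξ Q
  have hu : IsUnit (f (gprod r)) := by
    rw [gprod, map_prod]
    refine (IsUnit.prod_iff).2 ?_
    rintro (_ | i) -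
    · simpa [f] using hξ
    · simpa [f] using hQ i
  refine ⟨IsLocalization.Away.lift (gprod r) hu, ?_, fun i => ?_⟩
  · rw [gv, IsLocalization.Away.lift_eq]
    simp [f]
  · rw [gv, IsLocalization.Away.lift_eq]
    simp [f]

/-- Over the generic ring the center has a family dual to the trace form on the `sl p`. -/
lemma exists_CDual_generic (r n : ℕ) (hr : 1 ≤ r) (hn : 1 ≤ n)
    [Good (gv r none) fun i => gv r (some i)] :
    ∃ z : RPartition r n → HA (GR r) r n (gv r none) (fun i => gv r (some i)), CDual z := by
  obtain ⟨Q, hf, hG⟩ := exists_roots r hr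
  obtain ⟨σ, hs⟩ := exists_spec (R := ℂ) hG.hξ hG.hQ
  obtain ⟨I, _, b, y, hb, s', h1, h2⟩ := Gam_sep (n := n) hf (sl_nonconj hf hr)
  exact exists_CDual_of_spec hn hs hb s' h1 h2

/-- Dual families of central elements exist for all invertible parameters, by specialization from
the generic ring. -/
lemma exists_CDual {R : Type} [CommRing R] {r : ℕ} (n : ℕ) (hn : 1 ≤ n) (ξ : R) (Q : Fin r → R)
    [hG : Good ξ Q] : ∃ z : RPartition r n → HA R r n ξ Q, CDual z := by
  have := gv_good r hG.hr
  obtain ⟨σ, hs⟩ := exists_spec hG.hξ hG.hQ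
  obtain ⟨z, hz⟩ := exists_CDual_generic r n hG.hr hn
  exact ⟨_, hz.bc hs⟩

/-- The base change isomorphism for centers: a dual family over `R` specializes to a dual family
over `R'`, so bases correspond. -/
lemma base_change_equiv {R : Type} [CommRing R] {r n : ℕ} (hn : 1 ≤ n) {ξ : R} {Q : Fin r → R}
    [Good ξ Q] {R' : Type} [CommRing R'] [Algebra R R'] {ξ' : R'} {Q' : Fin r → R'}
    [Good ξ' Q'] (hs : Spec (algebraMap R R') ξ Q ξ' Q') :
    ∃ e : (R' ⊗[R] (Subalgebra.center R (HA R r n ξ Q))) ≃ₗ[R']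
        (Subalgebra.center R' (HA R' r n ξ' Q')),
      ∀ z : Subalgebra.center R (HA R r n ξ Q),
        (e ((1 : R') ⊗ₜ[R] z) : HA R' r n ξ' Q') = bc hs n (z : HA R r n ξ Q) := by
  obtain ⟨z, hz⟩ := exists_CDual n hn ξ Q
  let B := hz.basis hn
  let B' := (hz.bc hs).basis hn
  refine ⟨(B.baseChange R').equiv B' (Equiv.refl _), fun x => ?_⟩
  have hx := B.sum_repr x
  rw [← hx]
  simp only [TensorProduct.tmul_sum, map_sum, AddSubmonoidClass.coe_finsetSum]
  refine Finset.sum_congr rfl fun p _ => ?_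
  have e1 : (1 : R') ⊗ₜ[R] (B.repr x p • B p) =
      algebraMap R R' (B.repr x p) • B.baseChange R' p := by
    rw [Module.Basis.baseChange_apply, TensorProduct.tmul_smul, algebraMap_smul]
  rw [e1, map_smul, Module.Basis.equiv_apply, Equiv.refl_apply]
  change algebraMap R R' (B.repr x p) • (B' p : HA R' r n ξ' Q') =
    bc hs n (B.repr x p • (B p : HA R r n ξ Q))
  rw [bc_smul, CDual.basis_apply, CDual.basis_apply]

end Generic

end HC

/-- Over a commutative domain `R` with `ξ, Q_1, …, Q_r ∈ R^×`, the center
`Z(H_{n,R})` is a free `R`-module of rank `|𝒫_{r,n}|`, and for every commutative domain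
`R'` which is an `R`-algebra, the canonical map `R' ⊗_R Z(H_{n,R}) → Z(H_{n,R'})` is an
`R'`-module isomorphism. -/
theorem center_free_and_base_change
    (r n : ℕ) (hr : 1 ≤ r) (hn : 1 ≤ n)
    (R : Type) [CommRing R] [IsDomain R]
    (ξ : R) (Q : Fin r → R) (hξ : IsUnit ξ) (hQ : ∀ i, IsUnit (Q i)) :
    Module.Free R (Subalgebra.center R (Alg R r n ξ Q)) ∧
    Module.rank R (Subalgebra.center R (Alg R r n ξ Q)) = Nat.card (RPartition r n) ∧
    (∀ (R' : Type) [CommRing R'] [IsDomain R'] [Algebra R R'],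
      ∃ φ : Alg R r n ξ Q →+*
          Alg R' r n (algebraMap R R' ξ) (fun i => algebraMap R R' (Q i)),
        (∀ c : R, φ (algebraMap R (Alg R r n ξ Q) c) =
          algebraMap R' (Alg R' r n (algebraMap R R' ξ) (fun i => algebraMap R R' (Q i)))
            (algebraMap R R' c)) ∧
        (∀ i : Fin n, φ (T R r n ξ Q i) =
          T R' r n (algebraMap R R' ξ) (fun i => algebraMap R R' (Q i)) i) ∧
        ∃ e : (R' ⊗[R] (Subalgebra.center R (Alg R r n ξ Q))) ≃ₗ[R']
            (Subalgebra.center R'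
              (Alg R' r n (algebraMap R R' ξ) (fun i => algebraMap R R' (Q i)))),
          ∀ z : Subalgebra.center R (Alg R r n ξ Q),
            (e ((1 : R') ⊗ₜ[R] z) :
                Alg R' r n (algebraMap R R' ξ) (fun i => algebraMap R R' (Q i))) =
              φ (z : Alg R r n ξ Q)) := by
  have hG : HC.Good ξ Q := ⟨inferInstance, hr, hξ, hQ⟩
  obtain ⟨z, hz⟩ := HC.exists_CDual n hn ξ Q
  let B : Module.Basis (RPartition r n) R (Subalgebra.center R (Alg R r n ξ Q)) := hz.basis hn
  refine ⟨Module.Free.of_basis B, ?_, ?_⟩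
  · rw [rank_eq_card_basis B, Nat.card_eq_fintype_card]
  · intro R' _ _ _
    have hG' : HC.Good (algebraMap R R' ξ) (fun i => algebraMap R R' (Q i)) :=
      ⟨inferInstance, hr, hξ.map _, fun i => (hQ i).map _⟩
    have hs : HC.Spec (algebraMap R R') ξ Q (algebraMap R R' ξ) (fun i => algebraMap R R' (Q i)) :=
      ⟨rfl, fun _ => rfl⟩
    refine ⟨HC.bc hs n, fun c => HC.bc_algebraMap hs c, fun i => ?_, HC.base_change_equiv hn hs⟩
    have h := HC.bc_tn hs i.2
    rw [HC.tn_of_lt i.2, HC.tn_of_lt i.2] at h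
    exact h
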